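/- Every Borel subset of ℝ can be partitioned into countably many pairwise disjoint subspaces, each of which is a Gδ set in X and h-homogeneous in the subspace topology; in particular this uses that ℝ is the disjoint union of the rationals and the irrationals, and that the space of irrational numbers is homeomorphic to a Gδ subset of the Cantor space. -/

import Mathlib

/-- A topological space is *h-homogeneous* if every nonempty clopen subset,
with the subspace topology, is homeomorphic to the whole space. -/
def HHomogeneous (Y : Type*) [TopologicalSpace Y] : Prop :=
  ∀ U : Set Y, IsClopen U → U.Nonempty → Nonempty (U ≃ₜ Y)


namespace BD

/-- Infinite plays: at stage `n` a move of type `A n` is made, all moves being legal. -/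
abbrev Play (A : ℕ → Type) := ∀ n, A n

section basics
variable {A : ℕ → Type}

def Agree (n : ℕ) (x y : Play A) : Prop := ∀ m < n, x m = y m

theorem Agree.refl (n : ℕ) (x : Play A) : Agree n x x := fun _ _ => rfl
theorem Agree.symm {n : ℕ} {x y : Play A} (h : Agree n x y) : Agree n y x :=
  fun m hm => (h m hm).symm
theorem Agree.trans {n : ℕ} {x y z : Play A} (h : Agree n x y) (h' : Agree n y z) : Agree n x z :=
  fun m hm => (h m hm).trans (h' m hm)
theorem Agree.mono {n m : ℕ} {x y : Play A} (h : Agree n x y) (hm : m ≤ n) : Agree m x y :=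
  fun i hi => h i (lt_of_lt_of_le hi hm)
theorem Agree.succ {n : ℕ} {x y : Play A} (h : Agree n x y) (h' : x n = y n) :
    Agree (n + 1) x y := by
  intro m hm
  rcases Nat.lt_succ_iff_lt_or_eq.1 hm with h1 | rfl
  · exact h m h1
  · exact h'
theorem agree_update (n : ℕ) (x : Play A) (a : A n) : Agree n x (Function.update x n a) := by
  intro m hm
  rw [Function.update_of_ne (ne_of_lt hm)]
theorem agree_update_of {n : ℕ} {x y : Play A} (h : Agree n x y) {a : A n} (ha : y n = a) :
    Agree (n + 1) (Function.update x n a) y := by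
  apply Agree.succ
  · exact (agree_update n x a).symm.trans h
  · simp [ha]

/-- Strategies: local functions. The same notion is used for both players. -/
structure Strat (A : ℕ → Type) where
  f : ∀ n, Play A → A n
  loc : ∀ n x y, Agree n x y → f n x = f n y

theorem Strat.ext' {σ τ : Strat A} (h : ∀ n x, σ.f n x = τ.f n x) : σ = τ := by
  cases σ; cases τ
  congr
  funext n x
  exact h n x

def Follows (p : ℕ) (σ : Strat A) (x : Play A) : Prop := ∀ n, n % 2 = p → x n = σ.f n x

/-- Fixed point of a local functional. -/
noncomputable def iterF (F : ∀ n, Play A → A n) (z : Play A) : ℕ → Play A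
  | 0 => z
  | n + 1 => Function.update (iterF F z n) n (F n (iterF F z n))

noncomputable def fixp (F : ∀ n, Play A → A n) (z : Play A) : Play A :=
  fun n => iterF F z (n + 1) n

theorem iterF_agree (F : ∀ n, Play A → A n) (z : Play A) (n : ℕ) :
    Agree n (fixp F z) (iterF F z n) := by
  induction n with
  | zero => intro m hm; omega
  | succ n ih =>
    apply Agree.succ
    · exact ih.trans (agree_update n _ _)
    · rfl

theorem fixp_eq (F : ∀ n, Play A → A n) (hF : ∀ n x y, Agree n x y → F n x = F n y) (z : Play A)
    (n : ℕ) : fixp F z n = F n (fixp F z) := by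
  have : fixp F z n = F n (iterF F z n) := by simp [fixp, iterF]
  rw [this]
  exact hF _ _ _ (iterF_agree F z n).symm

theorem fixp_unique {F G : ∀ n, Play A → A n} (hF : ∀ n x y, Agree n x y → F n x = F n y)
    {x y : Play A} {N : ℕ} (hx : ∀ n < N, x n = F n x) (hy : ∀ n < N, y n = G n y)
    (hFG : ∀ n < N, ∀ z, F n z = G n z) : Agree N x y := by
  induction N with
  | zero => intro m hm; omega
  | succ n ih =>
    have h := ih (fun m hm => hx m (by omega)) (fun m hm => hy m (by omega))
      (fun m hm => hFG m (by omega))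
    apply h.succ
    rw [hx n (by omega), hy n (by omega), ← hFG n (by omega)]
    exact hF _ _ _ h

/-- The play where player `p` uses `σ` and the other moves are taken from `z`. -/
noncomputable def run (p : ℕ) (σ : Strat A) (z : Play A) : Play A :=
  fixp (fun n x => if n % 2 = p then σ.f n x else z n) z

theorem run_loc (p : ℕ) (σ : Strat A) (z : Play A) (n : ℕ) (x y : Play A) (h : Agree n x y) :
    (if n % 2 = p then σ.f n x else z n) = (if n % 2 = p then σ.f n y else z n) := by
  split_ifs
  · exact σ.loc _ _ _ h
  · rfl

theorem run_eq (p : ℕ) (σ : Strat A) (z : Play A) (n : ℕ) :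
    run p σ z n = if n % 2 = p then σ.f n (run p σ z) else z n := by
  exact fixp_eq _ (run_loc p σ z) z n

theorem run_follows (p : ℕ) (σ : Strat A) (z : Play A) : Follows p σ (run p σ z) := by
  intro n hn
  have := run_eq p σ z n
  rwa [if_pos hn] at this

theorem run_own (p : ℕ) (σ : Strat A) (z : Play A) {n : ℕ} (hn : n % 2 = p) :
    run p σ z n = σ.f n (run p σ z) := run_follows p σ z n hn

theorem run_opp (p : ℕ) (σ : Strat A) (z : Play A) {n : ℕ} (hn : n % 2 ≠ p) :
    run p σ z n = z n := by
  have := run_eq p σ z n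
  rwa [if_neg hn] at this

theorem run_agree (p : ℕ) {σ τ : Strat A} {z w : Play A} {N : ℕ}
    (hσ : ∀ n < N, ∀ x, σ.f n x = τ.f n x) (hz : ∀ n < N, n % 2 ≠ p → z n = w n) :
    Agree N (run p σ z) (run p τ w) := by
  refine fixp_unique (G := fun n x => if n % 2 = p then τ.f n x else w n)
    (run_loc p σ z) (fun n _ => run_eq p σ z n) (fun n _ => run_eq p τ w n) ?_
  intro n hn x
  split_ifs with h
  · exact hσ n hn x
  · exact hz n hn h

/-- if `x` follows `σ` below `N`, then the run against `x` agrees with `x`. -/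
theorem run_self (p : ℕ) {σ : Strat A} {x : Play A} {N : ℕ}
    (hx : ∀ n < N, n % 2 = p → x n = σ.f n x) : Agree N (run p σ x) x := by
  refine fixp_unique (G := fun n y => if n % 2 = p then σ.f n y else x n)
    (run_loc p σ x) (fun n _ => run_eq p σ x n) (fun n hn => ?_) (fun n hn y => rfl)
  split_ifs with h
  · exact hx n hn h
  · rfl

def LocP (L : ℕ → Play A → Prop) : Prop := ∀ n x y, Agree n x y → L n x → L n y

open Classical in
noncomputable def pick {M : Type} (Q : M → Prop) (a : M) : M :=
  if Q a then a else if h : ∃ a, Q a then h.choose else a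

theorem pick_self {M : Type} {Q : M → Prop} {a : M} (h : Q a) : pick Q a = a := by
  unfold pick; rw [if_pos h]

theorem pick_spec {M : Type} {Q : M → Prop} (a : M) (h : ∃ a, Q a) : Q (pick Q a) := by
  unfold pick
  split_ifs with h1
  · exact h1
  · exact h.choose_spec

noncomputable def corr (L : ℕ → Play A → Prop) (z : Play A) (n : ℕ) (y : Play A) : A n :=
  pick (fun a => L (n + 1) (Function.update y n a)) (z n)

theorem corr_loc {L : ℕ → Play A → Prop} (hL : LocP L) (z : Play A) (n : ℕ) (x y : Play A)
    (h : Agree n x y) : corr L z n x = corr L z n y := by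
  have key : ∀ a, L (n + 1) (Function.update x n a) = L (n + 1) (Function.update y n a) := by
    intro a
    have : Agree (n + 1) (Function.update x n a) (Function.update y n a) :=
      agree_update_of (h.trans (agree_update n y a)) (by simp)
    exact propext ⟨hL _ _ _ this, hL _ _ _ this.symm⟩
  have key' : (fun a => L (n + 1) (Function.update x n a)) =
    (fun a => L (n + 1) (Function.update y n a)) := funext key
  unfold corr
  rw [key']

noncomputable def fixL (L : ℕ → Play A → Prop) (z : Play A) : Play A := fixp (corr L z) z

theorem fixL_eq {L : ℕ → Play A → Prop} (hL : LocP L) (z : Play A) (n : ℕ) :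
    fixL L z n = corr L z n (fixL L z) := fixp_eq _ (corr_loc hL z) z n

theorem fixL_agree {L L' : ℕ → Play A → Prop} (hL : LocP L) (hL' : LocP L') {z w : Play A} {N : ℕ}
    (hz : Agree N z w) (h : ∀ n ≤ N, ∀ x, L n x ↔ L' n x) : Agree N (fixL L z) (fixL L' w) := by
  apply fixp_unique (corr_loc hL z) (fun n _ => fixL_eq hL z n) (fun n _ => fixL_eq hL' w n)
  intro n hn x
  have : (fun a => L (n+1) (Function.update x n a)) =
      (fun a => L' (n+1) (Function.update x n a)) :=
    funext fun a => propext (h _ (by omega) _)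
  unfold corr
  rw [this, hz n hn]

/-- legal moves are not changed -/
theorem fixL_self {L : ℕ → Play A → Prop} (hL : LocP L) {z x : Play A} {n : ℕ}
    (hx : Agree n (fixL L z) x) (hz : z n = x n) (hLx : L (n + 1) x) : fixL L z n = x n := by
  rw [fixL_eq hL]
  unfold corr
  rw [pick_self, hz]
  exact hL _ _ _ (agree_update_of hx hz.symm).symm hLx

theorem fixL_legal {L : ℕ → Play A → Prop} (hL : LocP L) (z : Play A) (n : ℕ)
    (h : ∃ a, L (n + 1) (Function.update (fixL L z) n a)) : L (n + 1) (fixL L z) := by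
  have h1 := fixL_eq hL z n
  have h2 : Function.update (fixL L z) n (fixL L z n) = fixL L z := Function.update_eq_self _ _
  have h3 := pick_spec (z n) h
  change L (n + 1) (Function.update (fixL L z) n (corr L z n (fixL L z))) at h3
  rwa [← h1, h2] at h3

/-- Truncation of a play to its first `n` moves. -/
def trunc (d : Play A) (n : ℕ) (x : Play A) : Play A := fun m => if m < n then x m else d m

theorem trunc_agree (d : Play A) (n : ℕ) (x : Play A) : Agree n (trunc d n x) x := by
  intro m hm; simp [trunc, hm]

theorem trunc_eq {d : Play A} {n : ℕ} {x y : Play A} (h : Agree n x y) :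
    trunc d n x = trunc d n y := by
  funext m
  by_cases hm : m < n
  · simp [trunc, hm, h m hm]
  · simp [trunc, hm]

/-- Player `p` can force the play to meet `R` from the position `x|n`. -/
def Win (p : ℕ) (R : ℕ → Play A → Prop) (n : ℕ) (x : Play A) : Prop :=
  ∃ σ : Strat A, ∀ y, Agree n x y → (∀ m ≥ n, m % 2 = p → y m = σ.f m y) → ∃ m ≥ n, R m y

theorem win_loc (p : ℕ) (R : ℕ → Play A → Prop) : LocP (Win p R) := by
  rintro n x y h ⟨σ, hσ⟩
  exact ⟨σ, fun z hz => hσ z (h.trans hz)⟩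

theorem win_of {p : ℕ} {R : ℕ → Play A → Prop} (hR : LocP R) {n : ℕ} {x : Play A} (h : R n x) :
    Win p R n x :=
  ⟨⟨fun n _ => x n, fun _ _ _ _ => rfl⟩, fun y hy _ => ⟨n, le_rfl, hR _ _ _ hy h⟩⟩

theorem win_own {p : ℕ} {R : ℕ → Play A → Prop} {n : ℕ} {x : Play A} (hn : n % 2 = p) {a : A n}
    (h : Win p R (n + 1) (Function.update x n a)) : Win p R n x := by
  obtain ⟨σ, hσ⟩ := h
  refine ⟨⟨fun m y => Function.update (fun m => σ.f m y) n a m, ?_⟩, ?_⟩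
  · intro m y z hyz
    by_cases hm : m = n
    · subst hm; simp
    · simp [Function.update_of_ne hm, σ.loc _ _ _ hyz]
  · intro y hy hf
    have h1 := hf n le_rfl hn
    simp only [Function.update_self] at h1
    obtain ⟨m, hm, hm'⟩ := hσ y (agree_update_of hy h1) (by
      intro m hm hmp
      have := hf m (by omega) hmp
      change y m = Function.update (fun m => σ.f m y) n a m at this
      rwa [Function.update_of_ne (by omega)] at this)
    exact ⟨m, by omega, hm'⟩

theorem win_opp {p : ℕ} {R : ℕ → Play A → Prop} {n : ℕ} {x : Play A} (hn : n % 2 ≠ p)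
    (h : ∀ a, Win p R (n + 1) (Function.update x n a)) : Win p R n x := by
  choose σ hσ using h
  refine ⟨⟨fun m y => if n < m then (σ (y n)).f m y else (σ (x n)).f m y, ?_⟩, ?_⟩
  · intro m y z hyz
    split_ifs with hm
    · rw [hyz n hm]; exact (σ _).loc _ _ _ hyz
    · exact (σ _).loc _ _ _ hyz
  · intro y hy hf
    obtain ⟨m, hm, hm'⟩ := hσ (y n) y (agree_update_of hy rfl) (by
      intro m hm hmp
      have := hf m (by omega) hmp
      change y m = if n < m then _ else _ at this
      rwa [if_pos (by omega)] at this)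
    exact ⟨m, by omega, hm'⟩

open Classical in
/-- A choice of a winning strategy depending only on the position. -/
noncomputable def wst (d : Play A) (p : ℕ) (R : ℕ → Play A → Prop) (n : ℕ) (x : Play A) : Strat A :=
  if h : Win p R n (trunc d n x) then h.choose else ⟨fun n _ => d n, fun _ _ _ _ => rfl⟩

theorem wst_loc {d : Play A} {p : ℕ} {R : ℕ → Play A → Prop} {n : ℕ} {x y : Play A}
    (h : Agree n x y) : wst d p R n x = wst d p R n y := by
  unfold wst; rw [trunc_eq h]

theorem wst_spec {d : Play A} {p : ℕ} {R : ℕ → Play A → Prop} {n : ℕ} {x : Play A}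
    (h : Win p R n x) (hf : ∀ m ≥ n, m % 2 = p → x m = (wst d p R n x).f m x) :
    ∃ m ≥ n, R m x := by
  have h' : Win p R n (trunc d n x) := win_loc _ _ _ _ _ (trunc_agree d n x).symm h
  unfold wst at hf
  rw [dif_pos h'] at hf
  exact h'.choose_spec x (trunc_agree d n x) hf

/-- Open sets in the sense of plays. -/
def OpenP (W : Set (Play A)) : Prop := ∀ x ∈ W, ∃ n, ∀ y, Agree n x y → y ∈ W

/-- Covers of a game. -/
structure Cover (k : ℕ) (B A : ℕ → Type) where
  e : ∀ n, n < k → (B n ≃ A n)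
  π : Play B → Play A
  lip : ∀ n x y, Agree n x y → Agree n (π x) (π y)
  πe : ∀ n (h : n < k) x, π x n = e n h (x n)
  φ : ℕ → Strat B → Strat A
  φloc : ∀ p n σ τ, (∀ m ≤ n, ∀ x, σ.f m x = τ.f m x) → ∀ x, (φ p σ).f n x = (φ p τ).f n x
  φe : ∀ p n (h : n < k) σ x y, (∀ m (hm : m < n), x m = e m (hm.trans h) (y m)) →
    (φ p σ).f n x = e n h (σ.f n y)
  lift : ∀ p, p < 2 → ∀ σ x, Follows p (φ p σ) x → ∃ y, Follows p σ y ∧ π y = x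
  ne : Nonempty (Play B)

def Cover.comp {k : ℕ} {D B A : ℕ → Type} (c : Cover k D B) (c' : Cover k B A) : Cover k D A where
  e n h := (c.e n h).trans (c'.e n h)
  π x := c'.π (c.π x)
  lip n x y h := c'.lip n _ _ (c.lip n _ _ h)
  πe n h x := by simp [c'.πe n h, c.πe n h]
  φ p σ := c'.φ p (c.φ p σ)
  φloc p n σ τ h x := c'.φloc p n _ _
    (fun m hm y => c.φloc p m _ _ (fun i hi => h i (hi.trans hm)) y) x
  φe p n h σ x y hxy := by
    rw [c'.φe p n h (c.φ p σ) x (fun m => if hm : m < k then c.e m hm (y m) else c.π y m),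
      c.φe p n h σ _ y]
    · rfl
    · intro m hm; simp [hm.trans h]
    · intro m hm; simp [hm.trans h, hxy m hm]
  lift p hp σ x hx := by
    obtain ⟨y, hy, rfl⟩ := c'.lift p hp _ _ hx
    obtain ⟨z, hz, rfl⟩ := c.lift p hp _ _ hy
    exact ⟨z, hz, rfl⟩
  ne := c.ne

end basics

section limit

variable {k : ℕ} {A : ℕ → ℕ → Type} (C : ∀ i, Cover (k + i) (A (i + 1)) (A i))

/-- Moves of the limit game: coherent threads. -/
def LimA (n : ℕ) : Type :=
  {t : ∀ i, n < k + i → A i n // ∀ i (h : n < k + i), t i h = (C i).e n h (t (i + 1) (by omega))}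

theorem limA_eq_iff (n : ℕ) (t t' : LimA C n) (i j : ℕ) (hi : n < k + i) (hij : i ≤ j) :
    t.1 i hi = t'.1 i hi ↔ t.1 j (by omega) = t'.1 j (by omega) := by
  induction j, hij using Nat.le_induction with
  | base => rfl
  | succ j hj ih =>
    rw [ih, t.2 j (by omega), t'.2 j (by omega)]
    exact (Equiv.injective _).eq_iff

theorem limA_inj (n i : ℕ) (hi : n < k + i) : Function.Injective (fun t : LimA C n => t.1 i hi) := by
  intro t t' h
  apply Subtype.ext
  funext j hj
  rcases le_total i j with hij | hij
  · exact (limA_eq_iff C n t t' i j hi hij).1 h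
  · exact (limA_eq_iff C n t t' j i hj hij).2 h

open Classical in
noncomputable def upF (n : ℕ) (v : ∀ i, A i n) : ∀ i, A i n
  | 0 => v 0
  | i + 1 => if h : n < k + i then ((C i).e n h).symm (upF n v i) else v (i + 1)

theorem limA_surj (d : ∀ i, A i 0) (n : ℕ) (d : ∀ i, A i n) (i : ℕ) (hi : n < k + i) :
    Function.Surjective (fun t : LimA C n => t.1 i hi) := by
  induction i with
  | zero =>
    intro a
    refine ⟨⟨fun j _ => upF C n (Function.update d 0 a) j, ?_⟩, ?_⟩
    · intro j hj; simp [upF, hj]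
    · simp [upF]
  | succ i ih =>
    intro a
    by_cases h : n < k + i
    · obtain ⟨t, ht⟩ := ih h ((C i).e n h a)
      refine ⟨t, ?_⟩
      dsimp only at ht ⊢
      rw [t.2 i h] at ht
      exact (Equiv.injective _) ht
    · refine ⟨⟨fun j _ => upF C n (Function.update d (i + 1) a) j, ?_⟩, ?_⟩
      · intro j hj; simp [upF, hj]
      · simp [upF, h]

variable (d : ∀ i, Play (A i))

noncomputable def limE (i n : ℕ) (h : n < k + i) : LimA C n ≃ A i n :=
  Equiv.ofBijective (fun t => t.1 i h) ⟨limA_inj C n i h,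
    limA_surj C (fun i => d i 0) n (fun i => d i n) i h⟩

theorem limE_apply (i n : ℕ) (h : n < k + i) (t : LimA C n) : limE C d i n h t = t.1 i h := rfl

theorem limE_succ (i n : ℕ) (h : n < k + i) (t : LimA C n) :
    (C i).e n h (limE C d (i + 1) n (by omega) t) = limE C d i n h t := (t.2 i h).symm

noncomputable def limD : Play (LimA C) := fun n => (limE C d (n + 1) n (by omega)).symm (d _ n)

open Classical in
noncomputable def rhoF : ℕ → ∀ i, Play (LimA C) → Play (A i)
  | 0, i, x => fun n => if h : n < k + i then limE C d i n h (x n) else d i n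
  | f + 1, i, x => (C i).π (rhoF f (i + 1) x)

theorem rhoF_stab (f i n : ℕ) (x : Play (LimA C)) (h : n < k + i + f) :
    rhoF C d (f + 1) i x n = rhoF C d f i x n := by
  induction f generalizing i n with
  | zero =>
    have h' : n < k + i := by omega
    have h2 : n < k + (i + 1) := by omega
    simp only [rhoF, (C i).πe n h']
    simp only [h', h2, dif_pos]
    exact limE_succ C d i n h' (x n)
  | succ f ih =>
    change (C i).π (rhoF C d (f + 1) (i + 1) x) n = (C i).π (rhoF C d f (i + 1) x) n
    refine (C i).lip (n + 1) _ _ (fun m hm => ?_) n (by omega)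
    exact ih (i + 1) m (by omega)

theorem rhoF_stab' (f f' i n : ℕ) (x : Play (LimA C)) (h : n < k + i + f) (hf : f ≤ f') :
    rhoF C d f' i x n = rhoF C d f i x n := by
  induction f', hf using Nat.le_induction with
  | base => rfl
  | succ j hj ih => rw [rhoF_stab C d j i n x (by omega), ih]

noncomputable def rho (i : ℕ) (x : Play (LimA C)) : Play (A i) := fun n => rhoF C d (n + 1) i x n

theorem rho_pi (i : ℕ) (x : Play (LimA C)) : (C i).π (rho C d (i + 1) x) = rho C d i x := by
  funext n
  have h1 : (C i).π (rho C d (i + 1) x) n = (C i).π (rhoF C d (n + 1) (i + 1) x) n := by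
    refine (C i).lip (n + 1) _ _ (fun m hm => ?_) n (by omega)
    exact (rhoF_stab' C d (m + 1) (n + 1) (i + 1) m x (by omega) (by omega)).symm
  rw [h1]
  exact rhoF_stab C d (n + 1) i n x (by omega)

theorem rhoF_lip (f i n : ℕ) (x y : Play (LimA C)) (h : Agree n x y) :
    Agree n (rhoF C d f i x) (rhoF C d f i y) := by
  induction f generalizing i with
  | zero =>
    intro m hm
    simp only [rhoF]
    rw [h m hm]
  | succ f ih => exact (C i).lip _ _ _ (ih (i + 1))

theorem rho_lip (i n : ℕ) (x y : Play (LimA C)) (h : Agree n x y) :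
    Agree n (rho C d i x) (rho C d i y) :=
  fun m hm => rhoF_lip C d _ i n x y h m hm

theorem rho_stab (i n : ℕ) (x : Play (LimA C)) (h : n < k + i) :
    rho C d i x n = limE C d i n h (x n) := by
  unfold rho
  rw [rhoF_stab' C d 0 (n + 1) i n x (by omega) (by omega)]
  simp [rhoF, h]

open Classical in
noncomputable def baseS (σ : Strat (LimA C)) (i : ℕ) : Strat (A i) where
  f n x := if h : n < k + i then
      limE C d i n h (σ.f n (fun m => if hm : m < n then (limE C d i m (by omega)).symm (x m)
        else limD C d m))
    else d i n
  loc n x y h := by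
    by_cases hn : n < k + i
    · simp only [hn, dif_pos]
      congr 2
      funext m
      by_cases hm : m < n
      · simp [hm, h m hm]
      · simp [hm]
    · simp [hn]

noncomputable def stF (p : ℕ) (σ : Strat (LimA C)) : ℕ → ∀ i, Strat (A i)
  | 0, i => baseS C d σ i
  | f + 1, i => (C i).φ p (stF p σ f (i + 1))

theorem baseS_eq (σ : Strat (LimA C)) (i n : ℕ) (h : n < k + i) (x : Play (A i))
    (y : Play (LimA C)) (hxy : ∀ m (hm : m < n), x m = limE C d i m (by omega) (y m)) :
    (baseS C d σ i).f n x = limE C d i n h (σ.f n y) := by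
  simp only [baseS, h, dif_pos]
  congr 1
  apply σ.loc
  intro m hm
  simp [hm, hxy m hm]

theorem stF_stab (p : ℕ) (σ : Strat (LimA C)) (f i n : ℕ) (x : Play (A i)) (h : n < k + i + f) :
    (stF C d p σ (f + 1) i).f n x = (stF C d p σ f i).f n x := by
  induction f generalizing i n with
  | zero =>
    have h' : n < k + i := by omega
    have h2 : n < k + (i + 1) := by omega
    let y : Play (LimA C) := fun m => if hm : m < n then (limE C d i m (by omega)).symm (x m)
        else limD C d m
    have hy : ∀ m (hm : m < n), x m = limE C d i m (by omega) (y m) := by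
      intro m hm; simp [y, hm]
    change ((C i).φ p (baseS C d σ (i + 1))).f n x = (baseS C d σ i).f n x
    rw [(C i).φe p n h' _ x (fun m => if hm : m < n then limE C d (i + 1) m (by omega) (y m)
      else d _ m), baseS_eq C d σ i n h' x y hy, baseS_eq C d σ (i + 1) n h2 _ y]
    · exact limE_succ C d i n h' _
    · intro m hm; simp [hm]
    · intro m hm; simp only [hm, dif_pos]; rw [limE_succ C d i m (by omega)]; exact hy m hm
  | succ f ih =>
    change ((C i).φ p (stF C d p σ (f + 1) (i + 1))).f n x =
      ((C i).φ p (stF C d p σ f (i + 1))).f n x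
    apply (C i).φloc
    intro m hm z
    exact ih (i + 1) m z (by omega)

theorem stF_stab' (p : ℕ) (σ : Strat (LimA C)) (f f' i n : ℕ) (x : Play (A i))
    (h : n < k + i + f) (hf : f ≤ f') :
    (stF C d p σ f' i).f n x = (stF C d p σ f i).f n x := by
  induction f', hf using Nat.le_induction with
  | base => rfl
  | succ j hj ih => rw [stF_stab C d p σ j i n x (by omega), ih]

noncomputable def stL (p : ℕ) (σ : Strat (LimA C)) (i : ℕ) : Strat (A i) where
  f n x := (stF C d p σ (n + 1) i).f n x
  loc n x y h := (stF C d p σ (n + 1) i).loc n x y h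

theorem stL_phi (p : ℕ) (σ : Strat (LimA C)) (i : ℕ) :
    (C i).φ p (stL C d p σ (i + 1)) = stL C d p σ i := by
  apply Strat.ext'
  intro n x
  have h1 : ((C i).φ p (stL C d p σ (i + 1))).f n x =
      ((C i).φ p (stF C d p σ (n + 1) (i + 1))).f n x := by
    apply (C i).φloc
    intro m hm z
    exact (stF_stab' C d p σ (m + 1) (n + 1) (i + 1) m z (by omega) (by omega)).symm
  rw [h1]
  exact stF_stab C d p σ (n + 1) i n x (by omega)

theorem stL_stab (p : ℕ) (σ : Strat (LimA C)) (i n : ℕ) (h : n < k + i) (x : Play (A i))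
    (y : Play (LimA C)) (hxy : ∀ m (hm : m < n), x m = limE C d i m (by omega) (y m)) :
    (stL C d p σ i).f n x = limE C d i n h (σ.f n y) := by
  rw [← baseS_eq C d σ i n h x y hxy]
  exact stF_stab' C d p σ 0 (n + 1) i n x (by omega) (by omega)

theorem stF_loc (p : ℕ) (n : ℕ) (σ τ : Strat (LimA C)) (h : ∀ m ≤ n, ∀ x, σ.f m x = τ.f m x)
    (f i : ℕ) (x : Play (A i)) : (stF C d p σ f i).f n x = (stF C d p τ f i).f n x := by
  induction f generalizing i n with
  | zero =>
    simp only [stF, baseS]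
    split_ifs with hn
    · rw [h n le_rfl]
    · rfl
  | succ f ih =>
    apply (C i).φloc
    intro m hm z
    exact ih m (fun j hj => h j (hj.trans hm)) _ z

theorem lim_lift (p : ℕ) (hp : p < 2) (σ : Strat (LimA C)) (x : Play (A 0))
    (hx : Follows p (stL C d p σ 0) x) : ∃ y, Follows p σ y ∧ rho C d 0 y = x := by
  have step : ∀ i (x : {x : Play (A i) // Follows p (stL C d p σ i) x}),
      ∃ y : {x : Play (A (i + 1)) // Follows p (stL C d p σ (i + 1)) x}, (C i).π y.1 = x.1 := by
    rintro i ⟨x, hx⟩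
    rw [← stL_phi] at hx
    obtain ⟨y, hy, hyx⟩ := (C i).lift p hp _ _ hx
    exact ⟨⟨y, hy⟩, hyx⟩
  choose g hg using step
  let X : ∀ i, {x : Play (A i) // Follows p (stL C d p σ i) x} :=
    fun i => Nat.rec ⟨x, hx⟩ (fun i z => g i z) i
  have hX : ∀ i, (C i).π (X (i + 1)).1 = (X i).1 := fun i => hg i (X i)
  let y : Play (LimA C) := fun n => ⟨fun i _ => (X i).1 n, by
    intro i h
    rw [← (C i).πe n h, hX]⟩
  have hyE : ∀ i n (h : n < k + i), limE C d i n h (y n) = (X i).1 n := fun i n h => rfl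
  refine ⟨y, ?_, ?_⟩
  · intro n hn
    have h : n < k + (n + 1) := by omega
    apply (limE C d (n + 1) n h).injective
    rw [hyE, (X (n + 1)).2 n hn]
    apply stL_stab C d p σ (n + 1) n h
    intro m hm
    rw [hyE]
  · have key : ∀ f i n, n < k + i + f → rhoF C d f i y n = (X i).1 n := by
      intro f
      induction f with
      | zero =>
        intro i n h
        have h' : n < k + i := by omega
        simp only [rhoF, h', dif_pos]
        exact hyE i n h'
      | succ f ih =>
        intro i n h
        rw [← hX i]
        refine (C i).lip (n + 1) _ _ (fun m hm => ?_) n (by omega)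
        exact ih (i + 1) m (by omega)
    funext n
    exact key (n + 1) 0 n (by omega)

noncomputable def limCover : Cover k (LimA C) (A 0) where
  e n h := limE C d 0 n h
  π := rho C d 0
  lip n x y h := rho_lip C d 0 n x y h
  πe n h x := rho_stab C d 0 n x h
  φ p σ := stL C d p σ 0
  φloc p n σ τ h x := stF_loc C d p n σ τ h (n + 1) 0 x
  φe p n h σ x y hxy := stL_stab C d p σ 0 n h x y hxy
  lift p hp σ x hx := lim_lift C d p hp σ x hx
  ne := ⟨limD C d⟩

end limit
end BD

namespace BD

def Cover.mono {k k' : ℕ} {B A : ℕ → Type} (c : Cover k' B A) (h : k ≤ k') : Cover k B A where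
  e n hn := c.e n (hn.trans_le h)
  π := c.π
  lip := c.lip
  πe n hn x := c.πe n (hn.trans_le h) x
  φ := c.φ
  φloc := c.φloc
  φe p n hn σ x y hxy := c.φe p n (hn.trans_le h) σ x y hxy
  lift := c.lift
  ne := c.ne

section modes
variable {A : ℕ → Type} {Ω : Type}

open Classical in
/-- the strategy with three modes -/
noncomputable def modeF (d : Play A) (p k0 : ℕ) (R : ℕ → Play A → Prop) (om : ℕ → Play A → Ω)
    (ω0 : Ω) (G : Ω → ∀ n, Play A → A n) (n : ℕ) (x : Play A) : A n :=
  if ∃ j ≤ n, R j x then G (om (sInf {j | R j x}) (trunc d (sInf {j | R j x}) x)) n x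
  else if ∃ j ≤ n, k0 ≤ j ∧ Win p R j x then
    (wst d p R (sInf {j | k0 ≤ j ∧ Win p R j x}) x).f n x
  else G ω0 n x

theorem sInf_loc {P : ℕ → Play A → Prop} (hP : LocP P) {j n : ℕ} {x y : Play A} (hj : j ≤ n)
    (h : Agree n x y) (hx : P j x) : sInf {j | P j x} = sInf {j | P j y} := by
  have hy : P j y := hP _ _ _ (h.mono hj) hx
  have h1 : P (sInf {j | P j x}) x := Nat.sInf_mem (s := {j | P j x}) ⟨j, hx⟩
  have h2 : P (sInf {j | P j y}) y := Nat.sInf_mem (s := {j | P j y}) ⟨j, hy⟩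
  have h3 : sInf {j | P j x} ≤ j := Nat.sInf_le hx
  have h4 : sInf {j | P j y} ≤ j := Nat.sInf_le hy
  apply le_antisymm
  · exact Nat.sInf_le (hP _ _ _ (h.symm.mono (h4.trans hj)) h2)
  · exact Nat.sInf_le (hP _ _ _ (h.mono (h3.trans hj)) h1)

theorem modeF_spec {d : Play A} {p k0 : ℕ} {R : ℕ → Play A → Prop} (hR : LocP R)
    {om : ℕ → Play A → Ω} {ω0 : Ω} {G : Ω → ∀ n, Play A → A n} {x : Play A}
    (hx : ∀ n ≥ k0, n % 2 = p → x n = modeF d p k0 R om ω0 G n (trunc d n x)) :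
    (∃ j, R j x ∧ ∀ n ≥ j, k0 ≤ n → n % 2 = p →
      x n = G (om j (trunc d j x)) n (trunc d n x)) ∨
    ((∀ j, ¬ R j x) ∧ (∀ j ≥ k0, ¬ Win p R j x) ∧
      ∀ n ≥ k0, n % 2 = p → x n = G ω0 n (trunc d n x)) := by
  have tr : ∀ n, Agree n (trunc d n x) x := fun n => trunc_agree d n x
  by_cases h1 : ∃ j, R j x
  · left
    obtain ⟨j, hj⟩ := h1
    have h0 : R (sInf {j | R j x}) x := Nat.sInf_mem (s := {j | R j x}) ⟨j, hj⟩
    refine ⟨sInf {j | R j x}, h0, ?_⟩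
    intro n hn hk hp
    have hr : R (sInf {j | R j x}) (trunc d n x) := hR _ _ _ ((tr n).symm.mono hn) h0
    have := hx n hk hp
    unfold modeF at this
    rw [if_pos ⟨_, hn, hr⟩, sInf_loc hR hn (tr n) hr, trunc_eq ((tr n).mono hn)] at this
    exact this
  · have h1' : ∀ j, ¬ R j x := not_exists.1 h1
    have hr : ∀ n, ¬ ∃ j ≤ n, R j (trunc d n x) := by
      rintro n ⟨j, hj, h⟩
      exact h1' j (hR _ _ _ ((tr n).mono hj) h)
    have hPl : LocP (fun j x => k0 ≤ j ∧ Win p R j x) :=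
      fun n x y h hh => ⟨hh.1, win_loc _ _ _ _ _ h hh.2⟩
    by_cases h2 : ∃ j, k0 ≤ j ∧ Win p R j x
    · exfalso
      obtain ⟨j, hj⟩ := h2
      set i := sInf {j | k0 ≤ j ∧ Win p R j x} with hi
      have h0 : k0 ≤ i ∧ Win p R i x := Nat.sInf_mem (s := {j | k0 ≤ j ∧ Win p R j x}) ⟨j, hj⟩
      obtain ⟨m, _, hm⟩ := wst_spec (d := d) h0.2 (by
        intro m hm hmp
        have h3 := hx m (h0.1.trans hm) hmp
        have h4 : k0 ≤ i ∧ Win p R i (trunc d m x) := hPl _ _ _ ((tr m).symm.mono hm) h0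
        unfold modeF at h3
        rw [if_neg (hr m), if_pos ⟨i, hm, h4⟩, sInf_loc hPl hm (tr m) h4, ← hi,
          wst_loc ((tr m).mono hm)] at h3
        rw [h3]
        exact (wst d p R i x).loc _ _ _ (tr m))
      exact h1' m hm
    · right
      refine ⟨h1', fun j hj hw => h2 ⟨j, hj, hw⟩, ?_⟩
      intro n hn hp
      have h3 := hx n hn hp
      unfold modeF at h3
      rw [if_neg (hr n), if_neg] at h3
      · exact h3
      · rintro ⟨j, hj, h⟩
        exact h2 ⟨j, hPl _ _ _ ((tr n).mono hj) h⟩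

end modes

theorem fixL_agree_of {A : ℕ → Type} {L : ℕ → Play A → Prop} (hL : LocP L) {z x : Play A} {N : ℕ}
    (hz : ∀ n < N, Agree n (fixL L z) x → L (n + 1) x ∧ z n = x n ∨ fixL L z n = x n) :
    Agree N (fixL L z) x := by
  induction N with
  | zero => intro m hm; omega
  | succ n ih =>
    have h := ih (fun m hm => hz m (by omega))
    apply h.succ
    rcases hz n (by omega) h with h1 | h1
    · exact fixL_self hL h h1.2 h1.1
    · exact h1

section unravel

abbrev Tree (A : ℕ → Type) := ℕ → Play A → Prop
abbrev Opt (A : ℕ → Type) := Sum (ℕ × Play A) (Tree A)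
abbrev UU (A : ℕ → Type) := Tree A × Opt A

def u0 (A : ℕ → Type) : UU A := (fun _ _ => True, Sum.inr (fun _ _ => True))

def BB (k : ℕ) (A : ℕ → Type) (n : ℕ) : Type := {q : A n × UU A // n < k → q.2 = u0 A}

variable {A : ℕ → Type} (k : ℕ) (C : Set (Play A))

def TC (n : ℕ) (x : Play A) : Prop := ∃ y ∈ C, Agree n x y

theorem TC_loc : LocP (TC C) := by
  rintro n x y h ⟨z, hz, hz'⟩
  exact ⟨z, hz, h.symm.trans hz'⟩

def emb (x : Play A) (ω : UU A) : Play (BB k A) :=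
  fun n => ⟨(x n, if n < k then u0 A else ω), by intro h; simp [h]⟩

theorem emb_agree {x y : Play A} {n : ℕ} (h : Agree n x y) (ω : UU A) :
    Agree n (emb k x ω) (emb k y ω) := by
  intro m hm
  apply Subtype.ext
  simp [emb, h m hm]

theorem emb_agree' {x y : Play A} {n : ℕ} (hn : n ≤ k) (h : Agree n x y) (ω ω' : UU A) :
    Agree n (emb k x ω) (emb k y ω') := by
  intro m hm
  apply Subtype.ext
  have : m < k := by omega
  simp [emb, h m hm, this]

def VT (S : Tree A) : Prop := LocP S ∧ ∀ n ≥ k + 1, ∀ y, S n y →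
  (n % 2 = 0 → ∃ a, S (n + 1) (Function.update y n a)) ∧
  (n % 2 = 1 → ∀ a, S (n + 1) (Function.update y n a))

theorem VT_full : VT k (fun (_ : ℕ) (_ : Play A) => True) :=
  ⟨fun _ _ _ _ _ => trivial, fun n _ y _ => ⟨fun _ => ⟨y n, trivial⟩, fun _ _ => trivial⟩⟩

open Classical in
noncomputable def effS (S : Tree A) (x : Play A) : Tree A :=
  if VT k S ∧ S (k + 1) x then S else fun _ _ => True

theorem effS_spec (S : Tree A) (x : Play A) : VT k (effS k S x) ∧ effS k S x (k + 1) x := by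
  unfold effS
  split_ifs with h
  · exact h
  · exact ⟨VT_full k, trivial⟩

theorem effS_loc (S : Tree A) {x y : Play A} (h : Agree (k + 1) x y) : effS k S x = effS k S y := by
  unfold effS
  have : (VT k S ∧ S (k + 1) x) = (VT k S ∧ S (k + 1) y) := propext
    ⟨fun hh => ⟨hh.1, hh.1.1 _ _ _ h hh.2⟩, fun hh => ⟨hh.1, hh.1.1 _ _ _ h.symm hh.2⟩⟩
  by_cases h1 : VT k S ∧ S (k + 1) x
  · rw [if_pos h1, if_pos (this ▸ h1)]
  · rw [if_neg h1, if_neg (this ▸ h1)]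

theorem effS_eq {S : Tree A} {x : Play A} (h : VT k S) (h' : S (k + 1) x) : effS k S x = S := by
  unfold effS
  rw [if_pos ⟨h, h'⟩]

def VO (S : Tree A) (x : Play A) : Opt A → Prop
  | Sum.inl u => k + 2 ≤ u.1 ∧ Agree (k + 2) u.2 x ∧ S u.1 u.2 ∧ ¬ TC C u.1 u.2
  | Sum.inr S' => LocP S' ∧ S' (k + 2) x ∧ (∀ n ≥ k + 2, ∀ y, S' n y → S n y ∧ TC C n y) ∧
      ∀ n ≥ k + 2, ∀ y, S' n y →
        (n % 2 = 0 → ∀ a, S (n + 1) (Function.update y n a) → S' (n + 1) (Function.update y n a)) ∧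
        (n % 2 = 1 → ∃ a, S' (n + 1) (Function.update y n a))

theorem VO_loc (S : Tree A) {x y : Play A} (h : Agree (k + 2) x y) : VO k C S x = VO k C S y := by
  have key : ∀ x y : Play A, Agree (k + 2) x y → ∀ o, VO k C S x o → VO k C S y o := by
    intro x y h o
    cases o with
    | inl u => exact fun ho => ⟨ho.1, ho.2.1.trans h, ho.2.2⟩
    | inr S' => exact fun ho => ⟨ho.1, ho.1 _ _ _ h ho.2.1, ho.2.2⟩
  funext o
  exact propext ⟨key _ _ h o, key _ _ h.symm o⟩

/-- target for player I -/
def R0 (S : Tree A) (j : ℕ) (x : Play A) : Prop := k + 2 ≤ j ∧ S j x ∧ ¬ TC C j x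

theorem R0_loc {S : Tree A} (hS : LocP S) : LocP (R0 k C S) := fun n x y h hx =>
  ⟨hx.1, hS _ _ _ h hx.2.1, fun hy => hx.2.2 (TC_loc C _ _ _ h.symm hy)⟩

def S2 (S : Tree A) (n : ℕ) (x : Play A) : Prop := S n x ∧ ¬ Win 0 (R0 k C S) n x

theorem S2_VO {S : Tree A} (hS : VT k S) {x : Play A} (hx : S (k + 2) x)
    (hw : ¬ Win 0 (R0 k C S) (k + 2) x) : VO k C S x (Sum.inr (S2 k C S)) := by
  refine ⟨?_, ⟨hx, hw⟩, ?_, ?_⟩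
  · intro n x y h hh
    exact ⟨hS.1 _ _ _ h hh.1, fun hy => hh.2 (win_loc _ _ _ _ _ h.symm hy)⟩
  · intro n hn y hy
    refine ⟨hy.1, ?_⟩
    by_contra hc
    exact hy.2 (win_of (R0_loc k C hS.1) ⟨hn, hy.1, hc⟩)
  · intro n hn y hy
    refine ⟨fun h0 a ha => ⟨ha, fun hw => hy.2 (win_own h0 hw)⟩, fun h1 => ?_⟩
    by_contra hc
    push Not at hc
    apply hy.2
    apply win_opp (by omega)
    intro a
    by_contra hw
    exact hc a ⟨(hS.2 n (by omega) y hy.1).2 h1 a, hw⟩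

theorem VO_exists (hk : k % 2 = 0) {S : Tree A} (hS : VT k S) {x : Play A} (hx : S (k + 1) x) :
    ∃ o, VO k C S x o := by
  have hx2 : S (k + 2) x := by
    have := (hS.2 (k + 1) le_rfl x hx).2 (by omega) (x (k + 1))
    rwa [Function.update_eq_self] at this
  by_cases hw : Win 0 (R0 k C S) (k + 2) x
  · obtain ⟨σ, hσ⟩ := hw
    obtain ⟨m, hm, hR⟩ := hσ (run 0 ⟨fun n z => if n < k + 2 then x n else σ.f n z, by
        intro n z w h
        split_ifs
        · rfl
        · exact σ.loc _ _ _ h⟩ x) (by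
        apply Agree.symm
        apply run_self
        intro n hn _
        simp [hn]) (by
        intro m hm h0
        rw [run_own _ _ _ h0]
        simp [show ¬ m < k + 2 by omega])
    refine ⟨Sum.inl (m, _), hm, ?_, hR.2.1, hR.2.2⟩
    apply run_self
    intro n hn _
    simp [hn]
  · exact ⟨_, S2_VO k C hS hx2 hw⟩

noncomputable def effO (S : Tree A) (x : Play A) (o : Opt A) : Opt A := pick (VO k C S x) o

theorem effO_loc (S : Tree A) {x y : Play A} (h : Agree (k + 2) x y) (o : Opt A) :
    effO k C S x o = effO k C S y o := by
  unfold effO; rw [VO_loc k C S h]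

theorem effO_eq {S : Tree A} {x : Play A} {o : Opt A} (h : VO k C S x o) : effO k C S x o = o :=
  pick_self h

theorem effO_spec (hk : k % 2 = 0) {S : Tree A} (hS : VT k S) {x : Play A} (hx : S (k + 1) x)
    (o : Opt A) : VO k C S x (effO k C S x o) := pick_spec o (VO_exists k C hk hS hx)

def Lg (o : Opt A) (m : ℕ) (y : Play A) : Prop := m ≤ k + 2 ∨
  match o with
  | Sum.inl u => Agree (min m u.1) u.2 y
  | Sum.inr S' => S' m y

theorem Lg_loc {S : Tree A} {x : Play A} {o : Opt A} (h : VO k C S x o) : LocP (Lg k o) := by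
  intro n z w hzw hl
  rcases hl with hl | hl
  · exact Or.inl hl
  · right
    cases o with
    | inl u => exact hl.trans (hzw.mono (min_le_left _ _))
    | inr S' => exact h.1 _ _ _ hzw hl

def fs (X : Play (BB k A)) : Play A := fun n => (X n).1.1

theorem fs_agree {X Y : Play (BB k A)} {n : ℕ} (h : Agree n X Y) : Agree n (fs k X) (fs k Y) := by
  intro m hm
  simp [fs, h m hm]

noncomputable def sOf (X : Play (BB k A)) : Tree A := effS k (X k).1.2.1 (fs k X)

noncomputable def oOf (X : Play (BB k A)) : Opt A := effO k C (sOf k X) (fs k X) (X (k + 1)).1.2.2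

theorem sOf_loc {X Y : Play (BB k A)} (h : Agree (k + 1) X Y) : sOf k X = sOf k Y := by
  unfold sOf
  rw [effS_loc k _ (fs_agree k h), h k (by omega)]

theorem oOf_loc {X Y : Play (BB k A)} (h : Agree (k + 2) X Y) : oOf k C X = oOf k C Y := by
  unfold oOf
  rw [sOf_loc k (h.mono (by omega)), effO_loc k C _ (fs_agree k h), h (k + 1) (by omega)]

theorem sOf_spec (X : Play (BB k A)) : VT k (sOf k X) ∧ sOf k X (k + 1) (fs k X) := effS_spec k _ _


theorem oOf_spec (hk : k % 2 = 0) (X : Play (BB k A)) : VO k C (sOf k X) (fs k X) (oOf k C X) :=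
  effO_spec k C hk (sOf_spec k X).1 (sOf_spec k X).2 _

noncomputable def pi0 (X : Play (BB k A)) : Play A := fixL (Lg k (oOf k C X)) (fs k X)

theorem pi0_loc (hk : k % 2 = 0) (X : Play (BB k A)) : LocP (Lg k (oOf k C X)) := Lg_loc k C (oOf_spec k C hk X)

theorem pi0_base (hk : k % 2 = 0) (X : Play (BB k A)) : Agree (k + 2) (pi0 k C X) (fs k X) :=
  fixL_agree_of (pi0_loc k C hk X) (fun n hn _ => Or.inl ⟨Or.inl (by omega), rfl⟩)

theorem pi0_lip (hk : k % 2 = 0) (n : ℕ) (X Y : Play (BB k A)) (h : Agree n X Y) :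
    Agree n (pi0 k C X) (pi0 k C Y) := by
  rcases le_total n (k + 2) with hn | hn
  · exact ((pi0_base k C hk X).mono hn).trans
      ((fs_agree k h).trans ((pi0_base k C hk Y).mono hn).symm)
  · apply fixL_agree (pi0_loc k C hk X) (pi0_loc k C hk Y) (fs_agree k h)
    intro m _ x
    rw [oOf_loc k C (h.mono hn)]

theorem pi0_inl (hk : k % 2 = 0) {X : Play (BB k A)} {u : ℕ × Play A} (h : oOf k C X = Sum.inl u) :
    k + 2 ≤ u.1 ∧ ¬ TC C u.1 u.2 ∧ sOf k X u.1 u.2 ∧ Agree (k + 2) u.2 (fs k X) ∧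
      Agree u.1 (pi0 k C X) u.2 := by
  have hv := oOf_spec k C hk X
  rw [h] at hv
  refine ⟨hv.1, hv.2.2.2, hv.2.2.1, hv.2.1, ?_⟩
  apply fixL_agree_of (pi0_loc k C hk X)
  intro n hn hag
  rcases Nat.lt_or_ge n (k + 2) with h1 | h1
  · left
    exact ⟨Or.inl (by omega), (hv.2.1 n h1).symm⟩
  · right
    have hL := pi0_loc k C hk X
    have := fixL_legal hL (fs k X) n ⟨u.2 n, by
      rw [h] at hag ⊢
      right
      exact (agree_update_of hag rfl).symm.mono (min_le_left _ _)⟩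
    rw [h] at this ⊢
    rcases this with h2 | h2
    · omega
    · exact (h2 n (by simp; omega)).symm

theorem pi0_inr_step (hk : k % 2 = 0) {X : Play (BB k A)} {S' : Tree A} (h : oOf k C X = Sum.inr S') {n : ℕ}
    (hn : k + 2 ≤ n) (hS : S' n (pi0 k C X)) : S' (n + 1) (pi0 k C X) := by
  have hv := oOf_spec k C hk X
  have hs := (sOf_spec k X).1
  rw [h] at hv
  obtain ⟨h1, h2, h3, h4⟩ := hv
  have := fixL_legal (pi0_loc k C hk X) (fs k X) n (by
    have : ∃ a, S' (n + 1) (Function.update (pi0 k C X) n a) := by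
      rcases Nat.mod_two_eq_zero_or_one n with h0 | h0
      · obtain ⟨a, ha⟩ := (hs.2 n (by omega) _ (h3 n hn _ hS).1).1 h0
        exact ⟨a, (h4 n hn _ hS).1 h0 a ha⟩
      · exact (h4 n hn _ hS).2 h0
    obtain ⟨a, ha⟩ := this
    refine ⟨a, ?_⟩
    unfold pi0 at ha
    rw [h] at ha ⊢
    exact Or.inr ha)
  unfold pi0
  rw [h] at this ⊢
  rcases this with h5 | h5
  · omega
  · exact h5

theorem pi0_inr (hk : k % 2 = 0) {X : Play (BB k A)} {S' : Tree A} (h : oOf k C X = Sum.inr S') :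
    ∀ n ≥ k + 2, S' n (pi0 k C X) := by
  have hv := oOf_spec k C hk X
  rw [h] at hv
  intro n hn
  induction n, hn using Nat.le_induction with
  | base => exact hv.1 _ _ _ (pi0_base k C hk X).symm hv.2.1
  | succ n hn ih => exact pi0_inr_step k C hk h hn ih

/-- the preimage of `C` is decided by the option chosen -/
theorem pi0_mem (hk : k % 2 = 0) (hC : OpenP Cᶜ) (X : Play (BB k A)) :
    pi0 k C X ∈ C ↔ ∃ S', oOf k C X = Sum.inr S' := by
  constructor
  · intro hX
    cases h : oOf k C X with
    | inl u =>
      exfalso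
      have := pi0_inl k C hk h
      exact this.2.1 ⟨_, hX, this.2.2.2.2.symm⟩
    | inr S' => exact ⟨S', rfl⟩
  · rintro ⟨S', h⟩
    by_contra hX
    obtain ⟨n, hn⟩ := hC _ hX
    have hv := oOf_spec k C hk X
    rw [h] at hv
    obtain ⟨y, hy, hy'⟩ := (hv.2.2.1 (max n (k + 2)) (le_max_right _ _) _
      (pi0_inr k C hk h _ (le_max_right _ _))).2
    exact hn y (hy'.mono (le_max_left _ _)) hy

end unravel
end BD

namespace BD
section unravel2
variable {A : ℕ → Type} (k : ℕ) (C : Set (Play A))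

noncomputable def GG (p : ℕ) (σ : Strat (BB k A)) (ω : UU A) (n : ℕ) (x : Play A) : A n :=
  pi0 k C (run p σ (emb k x ω)) n

theorem GG_trunc (hk : k % 2 = 0) (d : Play A) (p : ℕ) (σ : Strat (BB k A)) (ω : UU A) (n : ℕ)
    (hn : n % 2 = p) (x : Play A) :
    GG k C p σ ω n (trunc d n x) = pi0 k C (run p σ (emb k x ω)) n := by
  refine pi0_lip k C hk (n + 1) _ _ (run_agree p (fun _ _ _ => rfl) ?_) n (by omega)
  intro m hm hp
  have : m ≠ n := by rintro rfl; exact hp hn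
  exact emb_agree k (trunc_agree d n x) ω m (by omega)

theorem GG_loc (hk : k % 2 = 0) (p : ℕ) (σ τ : Strat (BB k A)) (n : ℕ)
    (h : ∀ m ≤ n, ∀ x, σ.f m x = τ.f m x) (ω : UU A) (x : Play A) :
    GG k C p σ ω n x = GG k C p τ ω n x := by
  refine pi0_lip k C hk (n + 1) _ _ (run_agree p ?_ (fun _ _ _ => rfl)) n (by omega)
  intro m hm x
  exact h m (by omega) x

def baseF (σ : Strat (BB k A)) (n : ℕ) (x : Play A) : A n := (σ.f n (emb k x (u0 A))).1.1

theorem baseF_loc (σ : Strat (BB k A)) (n : ℕ) {x y : Play A} (h : Agree n x y) :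
    baseF k σ n x = baseF k σ n y := by
  unfold baseF
  rw [σ.loc n _ _ (emb_agree k h _)]

theorem run_emb (p : ℕ) (σ : Strat (BB k A)) (x : Play A) (ω : UU A)
    (hx : ∀ n < k, n % 2 = p → x n = baseF k σ n x) : Agree k (run p σ (emb k x ω)) (emb k x ω) := by
  apply run_self
  intro n hn hp
  apply Subtype.ext
  apply Prod.ext
  · change x n = _
    rw [hx n hn hp, baseF, σ.loc n _ _ (emb_agree' k hn.le (Agree.refl n x) (u0 A) ω)]
  · rw [(σ.f n (emb k x ω)).2 hn, (emb k x ω n).2 hn]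

noncomputable def SI (σ : Strat (BB k A)) (x : Play A) : Tree A :=
  effS k (σ.f k (emb k x (u0 A))).1.2.1 x

theorem SI_loc (σ : Strat (BB k A)) {x y : Play A} (h : Agree (k + 1) x y) :
    SI k σ x = SI k σ y := by
  unfold SI
  rw [effS_loc k _ h, σ.loc k _ _ (emb_agree k (h.mono (by omega)) _)]

noncomputable def modeI (d : Play A) (σ : Strat (BB k A)) (S : Tree A) (n : ℕ) (x : Play A) : A n :=
  modeF d 0 (k + 2) (R0 k C S) (fun j u => ((u0 A).1, Sum.inl (j, u)))
    ((u0 A).1, Sum.inr (S2 k C S)) (GG k C 0 σ) n x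

open Classical in
noncomputable def phiI (d : Play A) (σ : Strat (BB k A)) : Strat A where
  f n x := if n < k + 1 then baseF k σ n x
    else modeI k C d σ (SI k σ (trunc d n x)) n (trunc d n x)
  loc n x y h := by
    split_ifs
    · exact baseF_loc k σ n h
    · rw [trunc_eq h]

theorem phiI_lift (hk : k % 2 = 0) (d : Play A) (σ : Strat (BB k A)) (x : Play A)
    (hx : Follows 0 (phiI k C d σ) x) : ∃ y, Follows 0 σ y ∧ pi0 k C y = x := by
  set S := SI k σ x with hSdef
  have hSx : VT k S ∧ S (k + 1) x := effS_spec k _ _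
  have hSx2 : S (k + 2) x := by
    have := (hSx.1.2 (k + 1) le_rfl x hSx.2).2 (by omega) (x (k + 1))
    rwa [Function.update_eq_self] at this
  have hb : ∀ n < k + 1, n % 2 = 0 → x n = baseF k σ n x := by
    intro n hn hp
    have := hx n hp
    simp only [phiI, if_pos hn] at this
    exact this
  have hrun : ∀ ω, Agree k (run 0 σ (emb k x ω)) (emb k x ω) := fun ω =>
    run_emb k 0 σ x ω (fun n hn => hb n (by omega))
  have hyk : ∀ ω, run 0 σ (emb k x ω) k = σ.f k (emb k x (u0 A)) := by
    intro ω
    rw [run_own 0 σ _ hk]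
    exact σ.loc k _ _ ((hrun ω).trans (emb_agree' k le_rfl (Agree.refl _ _) _ _))
  have hyk1 : ∀ ω, run 0 σ (emb k x ω) (k + 1) = emb k x ω (k + 1) := fun ω =>
    run_opp 0 σ _ (by omega)
  have hfs : ∀ ω, Agree (k + 2) (fs k (run 0 σ (emb k x ω))) x := by
    intro ω
    apply Agree.succ
    · apply Agree.succ
      · exact fs_agree k (hrun ω)
      · simp only [fs, hyk]
        exact (hb k (by omega) hk).symm
    · simp only [fs, hyk1]
      rfl
  have hs : ∀ ω, sOf k (run 0 σ (emb k x ω)) = S := by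
    intro ω
    rw [sOf, hyk, effS_loc k _ ((hfs ω).mono (by omega))]
    rfl
  have ho : ∀ ω : UU A, VO k C S x ω.2 → oOf k C (run 0 σ (emb k x ω)) = ω.2 := by
    intro ω hω
    rw [oOf, hyk1, hs, effO_loc k C _ (hfs ω)]
    simp only [emb, if_neg (show ¬ k + 1 < k by omega)]
    exact effO_eq k C hω
  have hfsodd : ∀ ω n, n % 2 ≠ 0 → fs k (run 0 σ (emb k x ω)) n = x n := by
    intro ω n hn
    rw [fs, run_opp 0 σ _ hn]
    rfl
  have hm := modeF_spec (d := d) (p := 0) (k0 := k + 2) (R := R0 k C S) (x := x)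
    (om := fun j u => ((u0 A).1, Sum.inl (j, u))) (ω0 := ((u0 A).1, Sum.inr (S2 k C S)))
    (G := GG k C 0 σ) (R0_loc k C hSx.1.1) (by
      intro n hn hp
      have := hx n hp
      simp only [phiI, if_neg (show ¬ n < k + 1 by omega)] at this
      rw [SI_loc k σ ((trunc_agree d n x).mono (by omega))] at this
      exact this)
  rcases hm with ⟨j, hj, hG⟩ | ⟨hR, hW, hG⟩
  · refine ⟨run 0 σ (emb k x ((u0 A).1, Sum.inl (j, trunc d j x))), run_follows _ _ _, ?_⟩
    set ω : UU A := ((u0 A).1, Sum.inl (j, trunc d j x)) with hω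
    have tr := trunc_agree d j x
    have hv : VO k C S x ω.2 := ⟨hj.1, tr.mono hj.1, hSx.1.1 _ _ _ tr.symm hj.2.1,
      fun h => hj.2.2 (TC_loc C _ _ _ tr h)⟩
    have ho' := ho ω hv
    have hpre := (pi0_inl k C hk ho').2.2.2.2
    suffices ∀ N, Agree N (pi0 k C (run 0 σ (emb k x ω))) x by
      funext n; exact this (n + 1) n (by omega)
    intro N
    apply fixL_agree_of (pi0_loc k C hk _)
    intro n hn hag
    rcases Nat.lt_or_ge n j with hnj | hnj
    · right
      exact (hpre.trans tr) n hnj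
    · by_cases hp : n % 2 = 0
      · right
        have := hG n hnj (hj.1.trans hnj) hp
        rw [GG_trunc k C hk d 0 σ _ n hp] at this
        exact this.symm
      · left
        refine ⟨?_, hfsodd _ n hp⟩
        rw [ho']
        right
        exact tr.mono (min_le_right _ _)
  · refine ⟨run 0 σ (emb k x ((u0 A).1, Sum.inr (S2 k C S))), run_follows _ _ _, ?_⟩
    set ω : UU A := ((u0 A).1, Sum.inr (S2 k C S)) with hω
    have hv : VO k C S x ω.2 := S2_VO k C hSx.1 hSx2 (hW _ le_rfl)
    have ho' := ho ω hv
    have hpre := pi0_inr k C hk ho'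
    suffices ∀ N, Agree N (pi0 k C (run 0 σ (emb k x ω))) x by
      funext n; exact this (n + 1) n (by omega)
    intro N
    apply fixL_agree_of (pi0_loc k C hk _)
    intro n hn hag
    rcases Nat.lt_or_ge n (k + 2) with hnj | hnj
    · right
      exact ((pi0_base k C hk _).trans (hfs ω)) n hnj
    · by_cases hp : n % 2 = 0
      · right
        have := hG n hnj hp
        rw [GG_trunc k C hk d 0 σ _ n hp] at this
        exact this.symm
      · left
        refine ⟨?_, hfsodd _ n hp⟩
        rw [ho']
        right
        have h1 : S n x := hSx.1.1 _ _ _ hag (hpre n hnj).1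
        have := (hSx.1.2 n (by omega) x h1).2 (by omega) (x n)
        rw [Function.update_eq_self] at this
        exact ⟨this, hW _ (by omega)⟩

/-- possible answers of a strategy for player II by option 1 -/
def QII (σ : Strat (BB k A)) (S : Tree A) (j : ℕ) (x : Play A) : Prop :=
  VT k S ∧ S (k + 1) x ∧ x (k + 1) = (σ.f (k + 1) (emb k x (S, (u0 A).2))).1.1 ∧
    ∃ u, effO k C S x (σ.f (k + 1) (emb k x (S, (u0 A).2))).1.2.2 = Sum.inl (j, u) ∧ Agree j u x

def RII (σ : Strat (BB k A)) (j : ℕ) (x : Play A) : Prop := k + 2 ≤ j ∧ ∃ S, QII k C σ S j x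

theorem QII_loc (σ : Strat (BB k A)) (S : Tree A) {j : ℕ} (hj : k + 2 ≤ j) {x y : Play A}
    (h : Agree j x y) (hx : QII k C σ S j x) : QII k C σ S j y := by
  obtain ⟨h1, h2, h3, u, h4, h5⟩ := hx
  have e : σ.f (k + 1) (emb k x (S, (u0 A).2)) = σ.f (k + 1) (emb k y (S, (u0 A).2)) :=
    σ.loc _ _ _ (emb_agree k (h.mono (by omega)) _)
  refine ⟨h1, h1.1 _ _ _ (h.mono (by omega)) h2, ?_, u, ?_, h5.trans h⟩
  · rw [← e, ← h3, h (k + 1) (by omega)]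
  · rw [← e, ← effO_loc k C S (h.mono hj), h4]

theorem RII_loc (σ : Strat (BB k A)) : LocP (RII k C σ) := by
  rintro n x y h ⟨hn, S, hS⟩
  exact ⟨hn, S, QII_loc k C σ S hn h hS⟩

noncomputable def omII (σ : Strat (BB k A)) (j : ℕ) (x : Play A) : UU A :=
  (pick (fun S => QII k C σ S j x) (u0 A).1, (u0 A).2)

def SII (σ : Strat (BB k A)) (n : ℕ) (x : Play A) : Prop := ¬ Win 1 (RII k C σ) n x

theorem SII_VT (σ : Strat (BB k A)) : VT k (SII k C σ) := by
  refine ⟨fun n x y h hx hy => hx (win_loc _ _ _ _ _ h.symm hy), ?_⟩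
  intro n _ y hy
  refine ⟨fun h0 => ?_, fun h1 a ha => hy (win_own h1 ha)⟩
  by_contra hc
  push Not at hc
  exact hy (win_opp (by omega) fun a => not_not.1 (hc a))

noncomputable def modeII (d : Play A) (σ : Strat (BB k A)) (p n : ℕ) (x : Play A) : A n :=
  modeF d 1 (k + 1) (RII k C σ) (omII k C σ) (SII k C σ, (u0 A).2) (GG k C p σ) n x

open Classical in
noncomputable def phiII (d : Play A) (p : ℕ) (σ : Strat (BB k A)) : Strat A where
  f n x := if n < k + 1 then baseF k σ n x else modeII k C d σ p n (trunc d n x)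
  loc n x y h := by
    split_ifs
    · exact baseF_loc k σ n h
    · rw [trunc_eq h]

theorem phiII_lift (hk : k % 2 = 0) (d : Play A) (σ : Strat (BB k A)) (x : Play A)
    (hx : Follows 1 (phiII k C d 1 σ) x) : ∃ y, Follows 1 σ y ∧ pi0 k C y = x := by
  have hb : ∀ n < k + 1, n % 2 = 1 → x n = baseF k σ n x := by
    intro n hn hp
    have := hx n hp
    simp only [phiII, if_pos hn] at this
    exact this
  have hrun : ∀ ω, Agree (k + 1) (run 1 σ (emb k x ω)) (emb k x ω) := fun ω =>
    (run_emb k 1 σ x ω (fun n hn => hb n (by omega))).succ (run_opp 1 σ _ (by omega))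
  have hyk1 : ∀ ω, run 1 σ (emb k x ω) (k + 1) = σ.f (k + 1) (emb k x ω) := by
    intro ω
    rw [run_own 1 σ _ (by omega)]
    exact σ.loc _ _ _ (hrun ω)
  have hfs1 : ∀ ω, Agree (k + 1) (fs k (run 1 σ (emb k x ω))) x := fun ω => fs_agree k (hrun ω)
  have hs : ∀ ω : UU A, VT k ω.1 → ω.1 (k + 1) x → sOf k (run 1 σ (emb k x ω)) = ω.1 := by
    intro ω h1 h2
    rw [sOf, effS_loc k _ (hfs1 ω), hrun ω k (by omega)]
    simp only [emb, if_neg (lt_irrefl k)]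
    exact effS_eq k h1 h2
  have hfseven : ∀ ω n, n % 2 ≠ 1 → fs k (run 1 σ (emb k x ω)) n = x n := by
    intro ω n hn
    rw [fs, run_opp 1 σ _ hn]
    rfl
  have hm := modeF_spec (d := d) (p := 1) (k0 := k + 1) (R := RII k C σ) (x := x)
    (om := omII k C σ) (ω0 := (SII k C σ, (u0 A).2)) (G := GG k C 1 σ) (RII_loc k C σ) (by
      intro n hn hp
      have := hx n hp
      simp only [phiII, if_neg (show ¬ n < k + 1 by omega)] at this
      exact this)
  rcases hm with ⟨j, hj, hG⟩ | ⟨hR, hW, hG⟩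
  · have tr := trunc_agree d j x
    have hj' : ∃ S, QII k C σ S j (trunc d j x) := (RII_loc k C σ _ _ _ tr.symm hj).2
    obtain ⟨S, hS, hQ⟩ : ∃ S, omII k C σ j (trunc d j x) = (S, (u0 A).2) ∧ QII k C σ S j x := by
      exact ⟨_, rfl, QII_loc k C σ _ hj.1 tr (pick_spec _ hj')⟩
    rw [hS] at hG
    obtain ⟨h1, h2, h3, u, h4, h5⟩ := hQ
    refine ⟨run 1 σ (emb k x (S, (u0 A).2)), run_follows _ _ _, ?_⟩
    set ω : UU A := (S, (u0 A).2) with hω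
    have hfs2 : Agree (k + 2) (fs k (run 1 σ (emb k x ω))) x := by
      apply (hfs1 ω).succ
      simp only [fs, hyk1]
      exact h3.symm
    have ho' : oOf k C (run 1 σ (emb k x ω)) = Sum.inl (j, u) := by
      rw [oOf, hyk1, hs ω h1 h2, effO_loc k C _ hfs2]
      exact h4
    have hpre := (pi0_inl k C hk ho').2.2.2.2
    suffices ∀ N, Agree N (pi0 k C (run 1 σ (emb k x ω))) x by
      funext n; exact this (n + 1) n (by omega)
    intro N
    apply fixL_agree_of (pi0_loc k C hk _)
    intro n hn hag
    rcases Nat.lt_or_ge n j with hnj | hnj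
    · right
      exact (hpre.trans h5) n hnj
    · by_cases hp : n % 2 = 1
      · right
        have := hG n hnj (by have := hj.1; omega) hp
        rw [GG_trunc k C hk d 1 σ _ n hp] at this
        exact this.symm
      · left
        refine ⟨?_, hfseven _ n hp⟩
        rw [ho']
        right
        exact h5.mono (min_le_right _ _)
  · refine ⟨run 1 σ (emb k x (SII k C σ, (u0 A).2)), run_follows _ _ _, ?_⟩
    set ω : UU A := (SII k C σ, (u0 A).2) with hω
    have hsx : sOf k (run 1 σ (emb k x ω)) = SII k C σ := hs ω (SII_VT k C σ) (hW _ le_rfl)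
    have hk1 := hG (k + 1) le_rfl (by omega)
    rw [GG_trunc k C hk d 1 σ _ _ (by omega)] at hk1
    have hfs2 : Agree (k + 2) (fs k (run 1 σ (emb k x ω))) x := by
      apply (hfs1 ω).succ
      rw [hk1]
      exact (pi0_base k C hk _ (k + 1) (by omega)).symm
    have hx1 : x (k + 1) = (σ.f (k + 1) (emb k x ω)).1.1 := by
      rw [← hfs2 (k + 1) (by omega), fs, hyk1]
    have hoe : oOf k C (run 1 σ (emb k x ω)) =
        effO k C (SII k C σ) x (σ.f (k + 1) (emb k x ω)).1.2.2 := by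
      rw [oOf, hyk1, hsx, effO_loc k C _ hfs2]
    cases ho' : oOf k C (run 1 σ (emb k x ω)) with
    | inl u =>
      exfalso
      obtain ⟨N, u⟩ := u
      obtain ⟨q1, q2, q3, q4, q5⟩ := pi0_inl k C hk ho'
      rw [hsx] at q3
      have hux : Agree (k + 2) u x := q4.trans hfs2
      apply q3
      apply win_of (RII_loc k C σ)
      have e : σ.f (k + 1) (emb k u ω) = σ.f (k + 1) (emb k x ω) :=
        σ.loc _ _ _ (emb_agree k (hux.mono (by omega)) _)
      refine ⟨q1, SII k C σ, SII_VT k C σ, ?_, ?_, u, ?_, Agree.refl _ _⟩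
      · exact (SII_VT k C σ).1 _ _ _ (hux.symm.mono (by omega)) (hW _ le_rfl)
      · change u (k + 1) = (σ.f (k + 1) (emb k u ω)).1.1
        rw [e, ← hx1, hux (k + 1) (by omega)]
      · change effO k C (SII k C σ) u (σ.f (k + 1) (emb k u ω)).1.2.2 = _
        rw [e, effO_loc k C _ hux, ← hoe, ho']
    | inr S' =>
      have hpre := pi0_inr k C hk ho'
      have hv := oOf_spec k C hk (run 1 σ (emb k x ω))
      rw [ho', hsx] at hv
      obtain ⟨v1, v2, v3, v4⟩ := hv
      suffices ∀ N, Agree N (pi0 k C (run 1 σ (emb k x ω))) x by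
        funext n; exact this (n + 1) n (by omega)
      intro N
      apply fixL_agree_of (pi0_loc k C hk _)
      intro n hn hag
      rcases Nat.lt_or_ge n (k + 2) with hnj | hnj
      · right
        exact ((pi0_base k C hk _).trans hfs2) n hnj
      · by_cases hp : n % 2 = 1
        · right
          have := hG n (by omega) hp
          rw [GG_trunc k C hk d 1 σ _ n hp] at this
          exact this.symm
        · left
          refine ⟨?_, hfseven _ n hp⟩
          rw [ho']
          right
          have h1 : S' n x := v1 _ _ _ hag (hpre n hnj)
          have := (v4 n hnj x h1).1 (by omega) (x n)
          rw [Function.update_eq_self] at this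
          exact this (hW _ (by omega))

theorem SI_σ (σ τ : Strat (BB k A)) (h : ∀ x, σ.f k x = τ.f k x) (x : Play A) :
    SI k σ x = SI k τ x := by
  unfold SI; rw [h]

noncomputable def phiA (d : Play A) (p : ℕ) (σ : Strat (BB k A)) : Strat A :=
  if p = 0 then phiI k C d σ else phiII k C d p σ

def baseE (n : ℕ) (h : n < k) : BB k A n ≃ A n where
  toFun q := q.1.1
  invFun a := ⟨(a, u0 A), fun _ => rfl⟩
  left_inv q := by
    apply Subtype.ext
    apply Prod.ext
    · rfl
    · exact (q.2 h).symm
  right_inv a := rfl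

/-- The cover unravelling a closed set. -/
noncomputable def clCover (hk : k % 2 = 0) (d : Play A) : Cover k (BB k A) A where
  e n h := baseE k n h
  π := pi0 k C
  lip := pi0_lip k C hk
  πe n h x := pi0_base k C hk x n (by omega)
  φ p σ := phiA k C d p σ
  φloc p n σ τ h x := by
    by_cases hn : n < k + 1
    · have : baseF k σ n x = baseF k τ n x := by
        unfold baseF; rw [h n le_rfl]
      unfold phiA
      split_ifs
      · simp only [phiI, if_pos hn]; exact this
      · simp only [phiII, if_pos hn]; exact this
    · unfold phiA
      split_ifs with hp
      · simp only [phiI, if_neg hn]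
        rw [SI_σ k σ τ (h k (by omega))]
        unfold modeI modeF
        simp only [fun ω y => GG_loc k C hk 0 σ τ n h ω y]
      · have h1 := h (k + 1) (by omega)
        have hQ : ∀ S j y, QII k C σ S j y = QII k C τ S j y := by
          intro S j y
          unfold QII
          rw [h1]
        have hR : RII k C σ = RII k C τ := by
          funext j y
          unfold RII
          simp only [hQ]
        have ho : omII k C σ = omII k C τ := by
          funext j y
          unfold omII
          have : (fun S => QII k C σ S j y) = (fun S => QII k C τ S j y) := funext fun S => hQ S j y
          rw [this]
        have hS : SII k C σ = SII k C τ := by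
          funext j y
          unfold SII
          rw [hR]
        simp only [phiII, if_neg hn]
        unfold modeII
        rw [hR, ho, hS]
        unfold modeF
        simp only [fun ω y => GG_loc k C hk p σ τ n h ω y]
  φe p n h σ x y hxy := by
    have hn : n < k + 1 := by omega
    have : baseF k σ n x = (σ.f n y).1.1 := by
      unfold baseF
      rw [σ.loc n _ y]
      intro m hm
      apply Subtype.ext
      apply Prod.ext
      · exact hxy m hm
      · rw [(y m).2 (by omega), (emb k x (u0 A) m).2 (by omega)]
    unfold phiA
    split_ifs
    · simp only [phiI, if_pos hn]; exact this
    · simp only [phiII, if_pos hn]; exact this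
  lift p hp σ x hx := by
    obtain rfl | rfl : p = 0 ∨ p = 1 := by omega
    · exact phiI_lift k C hk d σ x hx
    · exact phiII_lift k C hk d σ x hx
  ne := ⟨emb k d (u0 A)⟩

end unravel2

theorem exists_cover_closed {A : ℕ → Type} (k : ℕ) (C : Set (Play A)) (hC : OpenP Cᶜ)
    (d : Play A) : ∃ (B : ℕ → Type) (c : Cover k B A), OpenP (c.π ⁻¹' C) ∧ OpenP (c.π ⁻¹' C)ᶜ := by
  have hk : (2 * k) % 2 = 0 := by omega
  refine ⟨_, (clCover (2 * k) C hk d).mono (by omega), ?_, ?_⟩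
  · intro x hx
    refine ⟨2 * k + 2, fun y hy => ?_⟩
    change pi0 (2 * k) C y ∈ C
    change pi0 (2 * k) C x ∈ C at hx
    rw [pi0_mem _ _ hk hC] at hx ⊢
    rwa [← oOf_loc _ _ hy]
  · intro x hx
    refine ⟨2 * k + 2, fun y hy => ?_⟩
    change ¬ pi0 (2 * k) C y ∈ C
    change ¬ pi0 (2 * k) C x ∈ C at hx
    rw [pi0_mem _ _ hk hC] at hx ⊢
    rwa [← oOf_loc _ _ hy]

end BD

namespace BD

theorem Cover.openP {k : ℕ} {B A : ℕ → Type} (c : Cover k B A) {W : Set (Play A)} (h : OpenP W) :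
    OpenP (c.π ⁻¹' W) := by
  intro x hx
  obtain ⟨n, hn⟩ := h _ hx
  exact ⟨n, fun y hy => hn _ (c.lip n _ _ hy)⟩

/-- `W` can be unravelled -/
def Unr {A : ℕ → Type} (W : Set (Play A)) : Prop := ∀ k, ∃ (B : ℕ → Type) (c : Cover k B A),
  OpenP (c.π ⁻¹' W) ∧ OpenP (c.π ⁻¹' W)ᶜ

theorem Unr.compl {A : ℕ → Type} {W : Set (Play A)} (h : Unr W) : Unr Wᶜ := by
  intro k
  obtain ⟨B, c, h1, h2⟩ := h k
  refine ⟨B, c, h2, ?_⟩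
  rwa [Set.preimage_compl, compl_compl]

section borel
variable {Z : Type} [TopologicalSpace Z]

def PP (W : Set Z) : Prop := ∀ (A : ℕ → Type) (f : Play A → Z),
  (∀ O, IsOpen O → OpenP (f ⁻¹' O)) → Nonempty (Play A) → Unr (f ⁻¹' W)

structure Stage (Z : Type) [TopologicalSpace Z] where
  A : ℕ → Type
  f : Play A → Z
  hf : ∀ O, IsOpen O → OpenP (f ⁻¹' O)
  d : Play A

theorem stage_step {W : Set Z} (hW : PP W) (k : ℕ) (s : Stage Z) :
    ∃ (s' : Stage Z) (c : Cover k s'.A s.A), s'.f = s.f ∘ c.π ∧ OpenP (s'.f ⁻¹' W) ∧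
      OpenP (s'.f ⁻¹' W)ᶜ := by
  obtain ⟨B, c, h1, h2⟩ := hW s.A s.f s.hf ⟨s.d⟩ k
  obtain ⟨d⟩ := c.ne
  exact ⟨⟨B, s.f ∘ c.π, fun O hO => c.openP (s.hf O hO), d⟩, c, rfl, h1, h2⟩

theorem PP.iUnion {W : ℕ → Set Z} (hW : ∀ i, PP (W i)) : PP (⋃ i, W i) := by
  intro A f hf ⟨d⟩ k
  choose nx cv hnx h1 h2 using fun i s => stage_step (hW i) (k + i) s
  let st : ℕ → Stage Z := fun n => Nat.rec ⟨A, f, hf, d⟩ (fun i s => nx i s) n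
  let Cs : ∀ i, Cover (k + i) (st (i + 1)).A (st i).A := fun i => cv i (st i)
  let ds : ∀ i, Play (st i).A := fun i => (st i).d
  have hst : ∀ i, (st (i + 1)).f = (st i).f ∘ (Cs i).π := fun i => hnx i (st i)
  let ro : ∀ i, Play (LimA (A := fun i => (st i).A) Cs) → Play (st i).A :=
    fun i => rho (A := fun i => (st i).A) Cs ds i
  have ropi : ∀ i x, (Cs i).π (ro (i + 1) x) = ro i x :=
    fun i x => rho_pi (A := fun i => (st i).A) Cs ds i x
  have hrho : ∀ i x, (st i).f (ro i x) = f (ro 0 x) := by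
    intro i x
    induction i with
    | zero => rfl
    | succ i ih =>
      rw [hst i, Function.comp, ropi, ih]
  let L := limCover (A := fun i => (st i).A) Cs ds
  have hL : L.π = rho (A := fun i => (st i).A) Cs ds 0 := rfl
  have hop : OpenP (L.π ⁻¹' (f ⁻¹' ⋃ i, W i)) := by
    intro x hx
    obtain ⟨i, hi⟩ := Set.mem_iUnion.1 hx
    have hi' : ro (i + 1) x ∈ (st (i + 1)).f ⁻¹' (W i) := by
      have e := hrho (i + 1) x
      change (st (i + 1)).f (ro (i + 1) x) ∈ W i
      exact Set.mem_of_eq_of_mem e hi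
    obtain ⟨n, hn⟩ := h1 i (st i) _ hi'
    refine ⟨n, fun y hy => ?_⟩
    have := hn _ (rho_lip (A := fun i => (st i).A) Cs ds (i + 1) n x y hy)
    change (st (i + 1)).f (ro (i + 1) y) ∈ W i at this
    replace this := Set.mem_of_eq_of_mem (hrho (i + 1) y).symm this
    exact Set.mem_iUnion.2 ⟨i, this⟩
  obtain ⟨d'⟩ := L.ne
  obtain ⟨B, c, q1, q2⟩ := exists_cover_closed k (L.π ⁻¹' (f ⁻¹' ⋃ i, W i))ᶜ
    (by rwa [compl_compl]) d'
  refine ⟨B, c.comp L, ?_, q1⟩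
  rwa [Set.preimage_compl, compl_compl] at q2

theorem PP_open {W : Set Z} (hW : IsOpen W) : PP W := by
  intro A f hf ⟨d⟩ k
  obtain ⟨B, c, q1, q2⟩ := exists_cover_closed k (f ⁻¹' W)ᶜ
    (by rw [compl_compl]; exact hf W hW) d
  refine ⟨B, c, ?_, q1⟩
  rwa [Set.preimage_compl, compl_compl] at q2

theorem PP_borel {W : Set Z} (hW : @MeasurableSet Z (borel Z) W) : PP W := by
  borelize Z
  induction W, hW using MeasurableSet.induction_on_open with
  | isOpen U hU => exact PP_open hU
  | compl t _ h =>
    intro A f hf hne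
    exact (h A f hf hne).compl
  | iUnion f _ _ h => exact PP.iUnion h

end borel

theorem det_open {A : ℕ → Type} (d : Play A) {W : Set (Play A)} (hW : OpenP W) :
    (∃ σ : Strat A, ∀ x, Follows 0 σ x → x ∈ W) ∨
    (∃ σ : Strat A, ∀ x, Follows 1 σ x → x ∉ W) := by
  let R : ℕ → Play A → Prop := fun n x => ∀ y, Agree n x y → y ∈ W
  have hR : LocP R := fun n x y h hx z hz => hx z (h.trans hz)
  by_cases hw : Win 0 R 0 d
  · left
    obtain ⟨σ, hσ⟩ := hw
    refine ⟨σ, fun x hx => ?_⟩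
    obtain ⟨m, _, hm⟩ := hσ x (fun m hm => by omega) (fun m _ hm => hx m hm)
    exact hm x (Agree.refl _ _)
  · right
    let L : ℕ → Play A → Prop := fun n x => ¬ Win 0 R n x
    have hL : LocP L := fun n x y h hx hy => hx (win_loc _ _ _ _ _ h.symm hy)
    refine ⟨⟨corr L d, fun n x y h => corr_loc hL d n x y h⟩, fun x hx hxW => ?_⟩
    have key : ∀ n, L n x := by
      intro n
      induction n with
      | zero => exact hL _ _ _ (fun m hm => by omega) hw
      | succ n ih =>
        rcases Nat.mod_two_eq_zero_or_one n with h0 | h1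
        · intro h
          apply ih
          apply win_own h0 (a := x n)
          rwa [Function.update_eq_self]
        · have e : x n = corr L d n x := hx n h1
          have : ∃ a, L (n + 1) (Function.update x n a) := by
            by_contra hc
            push Not at hc
            exact ih (win_opp (by omega) fun a => not_not.1 (hc a))
          have h3 := pick_spec (d n) this
          change L (n + 1) (Function.update x n (corr L d n x)) at h3
          rwa [← e, Function.update_eq_self] at h3
    obtain ⟨n, hn⟩ := hW x hxW
    exact key n (win_of hR hn)

theorem det_borel {Z : Type} [TopologicalSpace Z] {W : Set Z} (hW : @MeasurableSet Z (borel Z) W)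
    {A : ℕ → Type} (f : Play A → Z) (hf : ∀ O, IsOpen O → OpenP (f ⁻¹' O)) (d : Play A) :
    (∃ σ : Strat A, ∀ x, Follows 0 σ x → f x ∈ W) ∨
    (∃ σ : Strat A, ∀ x, Follows 1 σ x → f x ∉ W) := by
  obtain ⟨B, c, h1, h2⟩ := PP_borel hW A f hf ⟨d⟩ 0
  obtain ⟨d'⟩ := c.ne
  rcases det_open d' h1 with ⟨σ, hσ⟩ | ⟨σ, hσ⟩
  · left
    refine ⟨c.φ 0 σ, fun x hx => ?_⟩
    obtain ⟨y, hy, rfl⟩ := c.lift 0 (by omega) σ x hx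
    exact hσ y hy
  · right
    refine ⟨c.φ 1 σ, fun x hx => ?_⟩
    obtain ⟨y, hy, rfl⟩ := c.lift 1 (by omega) σ x hx
    exact hσ y hy

theorem continuous_of_local {M N : Type} [TopologicalSpace M] [DiscreteTopology M]
    [TopologicalSpace N] [DiscreteTopology N] (f : (ℕ → M) → (ℕ → N)) (b : ℕ → ℕ)
    (h : ∀ i x y, (∀ j < b i, x j = y j) → f x i = f y i) : Continuous f := by
  refine continuous_pi fun i => ?_
  rw [continuous_iff_continuousAt]
  intro x
  have : ∀ᶠ y in nhds x, ∀ j ∈ Set.Iio (b i), y j = x j := by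
    rw [Filter.eventually_all_finite (Set.finite_Iio _)]
    intro j _
    have ho : IsOpen ((fun y : ℕ → M => y j) ⁻¹' ({x j} : Set M)) :=
      (isOpen_discrete ({x j} : Set M)).preimage (continuous_apply j)
    exact ho.mem_nhds rfl
  refine ContinuousAt.congr (continuousAt_const (y := f x i)) ?_
  filter_upwards [this] with y hy
  exact h i x y (fun j hj => (hy j hj).symm)

theorem wadge {M1 M2 : Type} [TopologicalSpace M1] [DiscreteTopology M1] [Inhabited M1]
    [TopologicalSpace M2] [DiscreteTopology M2] [Inhabited M2] {A : Set (ℕ → M1)} {B : Set (ℕ → M2)}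
    (hA : @MeasurableSet _ (borel _) A) (hB : @MeasurableSet _ (borel _) B) :
    (∃ f : (ℕ → M1) → (ℕ → M2), Continuous f ∧ f ⁻¹' B = A) ∨
    (∃ g : (ℕ → M2) → (ℕ → M1), Continuous g ∧ g ⁻¹' A = Bᶜ) := by
  let Z := (ℕ → M1) × (ℕ → M2)
  let AA : ℕ → Type := fun _ => M1 × M2
  let P : Play AA → (ℕ → M1) := fun x i => (x (2 * i)).1
  let Q : Play AA → (ℕ → M2) := fun x i => (x (2 * i + 1)).2
  let f : Play AA → Z := fun x => (P x, Q x)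
  have hcont : ∀ O, IsOpen O → OpenP (f ⁻¹' O) := by
    intro O hO x hx
    have hfc : Continuous (fun x : ℕ → M1 × M2 => ((fun i => (x (2 * i)).1 : ℕ → M1),
        (fun i => (x (2 * i + 1)).2 : ℕ → M2))) := by fun_prop
    have ho := hO.preimage hfc
    rw [isOpen_pi_iff] at ho
    obtain ⟨I, u, hu, hI⟩ := ho x hx
    refine ⟨I.sup id + 1, fun y hy => hI ?_⟩
    intro i hi
    have : i ≤ I.sup id := Finset.le_sup (f := id) hi
    rw [← hy i (by omega)]
    exact (hu i hi).2
  let W : Set Z := (Prod.fst ⁻¹' A ∩ (Prod.snd ⁻¹' B)ᶜ) ∪ ((Prod.fst ⁻¹' A)ᶜ ∩ Prod.snd ⁻¹' B)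
  have hW : @MeasurableSet Z (borel Z) W := by
    have h1 : @MeasurableSet Z (borel Z) (Prod.fst ⁻¹' A) :=
      (continuous_fst (X := ℕ → M1) (Y := ℕ → M2)).borel_measurable hA
    have h2 : @MeasurableSet Z (borel Z) (Prod.snd ⁻¹' B) :=
      (continuous_snd (X := ℕ → M1) (Y := ℕ → M2)).borel_measurable hB
    exact @MeasurableSet.union Z (borel Z) _ _ (@MeasurableSet.inter Z (borel Z) _ _ h1
      (@MeasurableSet.compl Z _ (borel Z) h2)) (@MeasurableSet.inter Z (borel Z) _ _
      (@MeasurableSet.compl Z _ (borel Z) h1) h2)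
  rcases det_borel hW f hcont (fun _ => default) with ⟨σ, hσ⟩ | ⟨σ, hσ⟩
  · right
    let em : (ℕ → M2) → Play AA := fun w n => (default, w (n / 2))
    have hQ : ∀ w, Q (run 0 σ (em w)) = w := by
      intro w
      funext i
      change (run 0 σ (em w) (2 * i + 1)).2 = w i
      rw [run_opp 0 σ _ (by omega)]
      change w ((2 * i + 1) / 2) = w i
      congr 1
      omega
    refine ⟨fun w => P (run 0 σ (em w)), ?_, ?_⟩
    · apply continuous_of_local _ (fun i => 2 * i + 1)
      intro i x y h
      have : Agree (2 * i + 1) (run 0 σ (em x)) (run 0 σ (em y)) := by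
        apply run_agree 0 (fun _ _ _ => rfl)
        intro n hn _
        change (default, x (n / 2)) = (default, y (n / 2))
        rw [h _ (by omega)]
      change (run 0 σ (em x) (2 * i)).1 = (run 0 σ (em y) (2 * i)).1
      rw [this (2 * i) (by omega)]
    · ext w
      have := hσ _ (run_follows 0 σ (em w))
      simp only [W, f, Set.mem_union, Set.mem_inter_iff, Set.mem_preimage, Set.mem_compl_iff,
        hQ] at this
      simp only [Set.mem_preimage, Set.mem_compl_iff]
      tauto
  · left
    let em : (ℕ → M1) → Play AA := fun w n => (w (n / 2), default)
    have hP : ∀ w, P (run 1 σ (em w)) = w := by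
      intro w
      funext i
      change (run 1 σ (em w) (2 * i)).1 = w i
      rw [run_opp 1 σ _ (by omega)]
      change w ((2 * i) / 2) = w i
      congr 1
      omega
    refine ⟨fun w => Q (run 1 σ (em w)), ?_, ?_⟩
    · apply continuous_of_local _ (fun i => 2 * i + 2)
      intro i x y h
      have : Agree (2 * i + 2) (run 1 σ (em x)) (run 1 σ (em y)) := by
        apply run_agree 1 (fun _ _ _ => rfl)
        intro n hn _
        change (x (n / 2), default) = (y (n / 2), default)
        rw [h _ (by omega)]
      change (run 1 σ (em x) (2 * i + 1)).2 = (run 1 σ (em y) (2 * i + 1)).2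
      rw [this (2 * i + 1) (by omega)]
    · ext w
      have := hσ _ (run_follows 1 σ (em w))
      simp only [W, f, Set.mem_union, Set.mem_inter_iff, Set.mem_preimage, Set.mem_compl_iff,
        hP] at this
      simp only [Set.mem_preimage]
      tauto

end BD

namespace HH
open Set

abbrev KK := ℕ → Bool

/-- closed nowhere dense in `K` -/
def Nwd (F K : Set KK) : Prop := IsClosed F ∧ F ⊆ K ∧
  ∀ W, IsOpen W → (W ∩ K).Nonempty → (W ∩ (K \ F)).Nonempty

theorem Nwd.union {F G K : Set KK} (h : Nwd F K) (h' : Nwd G K) : Nwd (F ∪ G) K := by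
  refine ⟨h.1.union h'.1, union_subset h.2.1 h'.2.1, fun W hW hne => ?_⟩
  obtain ⟨x, hx, hxK, hxF⟩ := h.2.2 W hW hne
  obtain ⟨y, hy, hyK, hyG⟩ := h'.2.2 (W \ F) (hW.sdiff h.1) ⟨x, ⟨hx, hxF⟩, hxK⟩
  exact ⟨y, hy.1, hyK, fun hh => hh.elim hy.2 hyG⟩

theorem Nwd.mono {F G K : Set KK} (h : Nwd F K) (hG : IsClosed G) (hGF : G ⊆ F) : Nwd G K := by
  refine ⟨hG, hGF.trans h.2.1, fun W hW hne => ?_⟩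
  obtain ⟨x, hx, hxK, hxF⟩ := h.2.2 W hW hne
  exact ⟨x, hx, hxK, fun hh => hxF (hGF hh)⟩

theorem Nwd.empty (K : Set KK) : Nwd ∅ K :=
  ⟨isClosed_empty, empty_subset _, fun W _ h => by simpa using h⟩

def NoIso (K : Set KK) : Prop := ∀ W, IsOpen W → (W ∩ K).Nonempty →
  ∃ x ∈ W ∩ K, ∃ y ∈ W ∩ K, x ≠ y

structure Pres (K Y : Set KK) (L : ℕ → Set KK) (c : Prop) : Prop where
  closed : IsClosed K
  noiso : NoIso K
  mono : Monotone L
  nwd : ∀ n, Nwd (L n) K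
  sub : Y ⊆ K
  out : ∀ x ∈ K, (∀ n, x ∉ L n) → (x ∈ Y ↔ c)

def Emb (L : ℕ → Set KK) (Y K' Y' : Set KK) : Prop := ∀ n V, IsOpen V → (V ∩ K').Nonempty →
  ∃ j : KK → KK, ContinuousOn j (L n) ∧ InjOn j (L n) ∧ MapsTo j (L n) (V ∩ K') ∧
    Nwd (j '' L n) K' ∧ ∀ x ∈ L n, (x ∈ Y ↔ j x ∈ Y')

structure IsNode (K K' Y Y' : Set KK) (V V' : Set KK) (H : Set (KK × KK)) : Prop where
  cl : IsClopen V
  cl' : IsClopen V'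
  ne : (V ∩ K).Nonempty ↔ (V' ∩ K').Nonempty
  comp : IsCompact H
  sub : ∀ x y, (x, y) ∈ H → x ∈ V ∧ y ∈ V'
  inj : ∀ x y y', (x, y) ∈ H → (x, y') ∈ H → y = y'
  inj' : ∀ x x' y, (x, y) ∈ H → (x', y) ∈ H → x = x'
  nwd : Nwd (Prod.fst '' H) K
  nwd' : Nwd (Prod.snd '' H) K'
  pres : ∀ x y, (x, y) ∈ H → (x ∈ Y ↔ y ∈ Y')

variable {K K' Y Y' V V' D E : Set KK} {H : Set (KK × KK)}

theorem IsNode.swap (h : IsNode K K' Y Y' V V' H) : IsNode K' K Y' Y V' V (Prod.swap ⁻¹' H) where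
  cl := h.cl'
  cl' := h.cl
  ne := h.ne.symm
  comp := by
    rw [← image_swap_eq_preimage_swap]
    exact h.comp.image continuous_swap
  sub x y hxy := (h.sub y x hxy).symm
  inj x y y' h1 h2 := h.inj' _ _ _ h1 h2
  inj' x x' y h1 h2 := h.inj _ _ _ h1 h2
  nwd := by
    rw [← image_swap_eq_preimage_swap, image_image]
    exact h.nwd'
  nwd' := by
    rw [← image_swap_eq_preimage_swap, image_image]
    exact h.nwd
  pres x y hxy := (h.pres y x hxy).symm

theorem IsNode.restrict (h : IsNode K K' Y Y' V V' H) (hD : IsClopen D) (hE : IsClopen E)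
    (hne : (V ∩ D ∩ K).Nonempty ↔ (V' ∩ E ∩ K').Nonempty) :
    IsNode K K' Y Y' (V ∩ D) (V' ∩ E) (H ∩ D ×ˢ E) := by
  have hc : IsCompact (H ∩ D ×ˢ E) := h.comp.inter_right (hD.1.prod hE.1)
  refine ⟨h.cl.inter hD, h.cl'.inter hE, hne, hc, ?_, ?_, ?_, ?_, ?_, ?_⟩
  · rintro x y ⟨h1, h2⟩
    exact ⟨⟨(h.sub _ _ h1).1, h2.1⟩, ⟨(h.sub _ _ h1).2, h2.2⟩⟩
  · rintro x y y' h1 h2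
    exact h.inj _ _ _ h1.1 h2.1
  · rintro x y y' h1 h2
    exact h.inj' _ _ _ h1.1 h2.1
  · exact h.nwd.mono (hc.image continuous_fst).isClosed (image_mono inter_subset_left)
  · exact h.nwd'.mono (hc.image continuous_snd).isClosed (image_mono inter_subset_left)
  · rintro x y h1
    exact h.pres _ _ h1.1

/-- splitting along a clopen set on the left side -/
theorem IsNode.split (h : IsNode K K' Y Y' V V' H) (hK' : NoIso K') (hD : IsClopen D) :
    ∃ E, IsClopen E ∧ IsNode K K' Y Y' (V ∩ D) (V' ∩ E) (H ∩ D ×ˢ E) ∧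
      IsNode K K' Y Y' (V ∩ Dᶜ) (V' ∩ Eᶜ) (H ∩ Dᶜ ×ˢ Eᶜ) ∧ H ⊆ D ×ˢ E ∪ Dᶜ ×ˢ Eᶜ := by
  suffices ∃ E, IsClopen E ∧ ((V ∩ D ∩ K).Nonempty ↔ (V' ∩ E ∩ K').Nonempty) ∧
      ((V ∩ Dᶜ ∩ K).Nonempty ↔ (V' ∩ Eᶜ ∩ K').Nonempty) ∧ H ⊆ D ×ˢ E ∪ Dᶜ ×ˢ Eᶜ by
    obtain ⟨E, hE, h1, h2, h3⟩ := this
    exact ⟨E, hE, h.restrict hD hE h1, h.restrict hD.compl hE.compl h2, h3⟩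
  have hHK : ∀ x y, (x, y) ∈ H → x ∈ K ∧ y ∈ K' := fun x y hxy =>
    ⟨h.nwd.2.1 ⟨_, hxy, rfl⟩, h.nwd'.2.1 ⟨_, hxy, rfl⟩⟩
  by_cases h1 : (V ∩ D ∩ K).Nonempty
  swap
  · refine ⟨∅, isClopen_empty, ⟨fun hh => (h1 hh).elim, fun hh => by simp at hh⟩, ?_, ?_⟩
    · have : V ∩ Dᶜ ∩ K = V ∩ K := by
        ext x
        have : ¬ x ∈ V ∩ D ∩ K := fun hx => h1 ⟨x, hx⟩
        simp only [mem_inter_iff, mem_compl_iff] at this ⊢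
        tauto
      rw [this, h.ne]
      simp
    · rintro ⟨x, y⟩ hxy
      right
      refine ⟨fun hx => h1 ⟨x, ⟨(h.sub _ _ hxy).1, hx⟩, (hHK _ _ hxy).1⟩, fun hh => hh⟩
  by_cases h2 : (V ∩ Dᶜ ∩ K).Nonempty
  swap
  · refine ⟨univ, isClopen_univ, ?_, ⟨fun hh => (h2 hh).elim, fun hh => by simp at hh⟩, ?_⟩
    · have : V ∩ D ∩ K = V ∩ K := by
        ext x
        have : ¬ x ∈ V ∩ Dᶜ ∩ K := fun hx => h2 ⟨x, hx⟩
        simp only [mem_inter_iff, mem_compl_iff] at this ⊢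
        tauto
      rw [this, h.ne]
      simp
    · rintro ⟨x, y⟩ hxy
      left
      refine ⟨?_, trivial⟩
      by_contra hx
      exact h2 ⟨x, ⟨(h.sub _ _ hxy).1, hx⟩, (hHK _ _ hxy).1⟩
  have hV'ne : (V' ∩ K').Nonempty := h.ne.1 (h1.mono (by rintro x ⟨⟨a, _⟩, b⟩; exact ⟨a, b⟩))
  obtain ⟨y, hy, hyK, hyH⟩ := h.nwd'.2.2 V' h.cl'.2 hV'ne
  obtain ⟨a, ha, b, hb, hab⟩ := hK' (V' \ Prod.snd '' H) (h.cl'.2.sdiff h.nwd'.1)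
    ⟨y, ⟨hy, hyH⟩, hyK⟩
  have c1 : IsClosed (Prod.snd '' (H ∩ D ×ˢ univ) ∪ {a}) :=
    ((h.comp.inter_right (hD.1.prod isClosed_univ)).image continuous_snd).isClosed.union
      isClosed_singleton
  have c2 : IsClosed (Prod.snd '' (H ∩ Dᶜ ×ˢ univ) ∪ {b}) :=
    ((h.comp.inter_right (hD.compl.1.prod isClosed_univ)).image continuous_snd).isClosed.union
      isClosed_singleton
  obtain ⟨E, hE, hE1, hE2⟩ := exists_clopen_of_closed_subset_open c1 c2.isOpen_compl (by
    rintro y (⟨⟨x, y⟩, ⟨hxy, hx⟩, rfl⟩ | rfl)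
    · rintro (⟨⟨x', y'⟩, ⟨hxy', hx'⟩, hyy⟩ | hyb)
      · simp only at hyy
        subst hyy
        have := h.inj' _ _ _ hxy hxy'
        subst this
        exact hx'.1 hx.1
      · rw [mem_singleton_iff] at hyb
        apply hb.1.2
        exact ⟨_, hxy, hyb⟩
    · rintro (⟨⟨x', y'⟩, ⟨hxy', hx'⟩, hyy⟩ | hyb)
      · exact ha.1.2 ⟨_, hxy', hyy⟩
      · exact hab hyb)
  refine ⟨E, hE, iff_of_true h1 ⟨a, ⟨ha.1.1, hE1 (Or.inr rfl)⟩, ha.2⟩,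
    iff_of_true h2 ⟨b, ⟨hb.1.1, fun hh => hE2 hh (Or.inr rfl)⟩, hb.2⟩, ?_⟩
  rintro ⟨x, y⟩ hxy
  by_cases hx : x ∈ D
  · left
    exact ⟨hx, hE1 (Or.inl ⟨_, ⟨hxy, hx, trivial⟩, rfl⟩)⟩
  · right
    exact ⟨hx, fun hh => hE2 hh (Or.inl ⟨_, ⟨hxy, hx, trivial⟩, rfl⟩)⟩

theorem IsNode.split' (h : IsNode K K' Y Y' V V' H) (hK : NoIso K) (hE : IsClopen E) :
    ∃ D, IsClopen D ∧ IsNode K K' Y Y' (V ∩ D) (V' ∩ E) (H ∩ D ×ˢ E) ∧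
      IsNode K K' Y Y' (V ∩ Dᶜ) (V' ∩ Eᶜ) (H ∩ Dᶜ ×ˢ Eᶜ) ∧ H ⊆ D ×ˢ E ∪ Dᶜ ×ˢ Eᶜ := by
  obtain ⟨D, hD, h1, h2, h3⟩ := h.swap.split hK hE
  have e : ∀ D E : Set KK, Prod.swap ⁻¹' (Prod.swap ⁻¹' H ∩ E ×ˢ D) = H ∩ D ×ˢ E := by
    intro D E
    ext ⟨x, y⟩
    simp [and_comm]
  refine ⟨D, hD, ?_, ?_, ?_⟩
  · have := h1.swap; rwa [e] at this
  · have := h2.swap; rwa [e] at this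
  · rintro ⟨x, y⟩ hxy
    have := h3 (a := (y, x)) hxy
    simpa [and_comm] using this

theorem IsNode.fill {L L' : ℕ → Set KK} {c : Prop} (hP : Pres K Y L c) (hP' : Pres K' Y' L' c)
    (he : Emb L Y K' Y') (he' : Emb L' Y' K Y) (h : IsNode K K' Y Y' V V' ∅)
    (hne : (V ∩ K).Nonempty) (n : ℕ) : ∃ H, IsNode K K' Y Y' V V' H ∧
      (∀ x ∈ L n ∩ V, ∃ y, (x, y) ∈ H) ∧ (∀ y ∈ L' n ∩ V', ∃ x, (x, y) ∈ H) := by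
  have hne' := h.ne.1 hne
  obtain ⟨j, j1, j2, j3, j4, j5⟩ := he n (V' \ L' n) (h.cl'.2.sdiff (hP'.nwd n).1) (by
    obtain ⟨y, a, b, d⟩ := (hP'.nwd n).2.2 V' h.cl'.2 hne'
    exact ⟨y, ⟨a, d⟩, b⟩)
  obtain ⟨i, i1, i2, i3, i4, i5⟩ := he' n (V \ L n) (h.cl.2.sdiff (hP.nwd n).1) (by
    obtain ⟨y, a, b, d⟩ := (hP.nwd n).2.2 V h.cl.2 hne
    exact ⟨y, ⟨a, d⟩, b⟩)
  have cL : IsCompact (L n ∩ V) := ((hP.nwd n).1.inter h.cl.1).isCompact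
  have cL' : IsCompact (L' n ∩ V') := ((hP'.nwd n).1.inter h.cl'.1).isCompact
  let H1 : Set (KK × KK) := (fun x => (x, j x)) '' (L n ∩ V)
  let H2 : Set (KK × KK) := (fun y => (i y, y)) '' (L' n ∩ V')
  have hH1 : IsCompact H1 :=
    cL.image_of_continuousOn (continuousOn_id.prodMk (j1.mono inter_subset_left))
  have hH2 : IsCompact H2 :=
    cL'.image_of_continuousOn ((i1.mono inter_subset_left).prodMk continuousOn_id)
  have m1 : ∀ x y, (x, y) ∈ H1 → x ∈ L n ∧ x ∈ V ∧ j x = y ∧ y ∈ V' ∧ y ∉ L' n := by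
    rintro x y ⟨x', hx', hh⟩
    simp only [Prod.mk.injEq] at hh
    obtain ⟨rfl, rfl⟩ := hh
    exact ⟨hx'.1, hx'.2, rfl, (j3 hx'.1).1.1, (j3 hx'.1).1.2⟩
  have m2 : ∀ x y, (x, y) ∈ H2 → y ∈ L' n ∧ y ∈ V' ∧ i y = x ∧ x ∈ V ∧ x ∉ L n := by
    rintro x y ⟨x', hx', hh⟩
    simp only [Prod.mk.injEq] at hh
    obtain ⟨rfl, rfl⟩ := hh
    exact ⟨hx'.1, hx'.2, rfl, (i3 hx'.1).1.1, (i3 hx'.1).1.2⟩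
  refine ⟨H1 ∪ H2, ⟨h.cl, h.cl', h.ne, hH1.union hH2, ?_, ?_, ?_, ?_, ?_, ?_⟩, ?_, ?_⟩
  · rintro x y (hh | hh)
    · exact ⟨(m1 _ _ hh).2.1, (m1 _ _ hh).2.2.2.1⟩
    · exact ⟨(m2 _ _ hh).2.2.2.1, (m2 _ _ hh).2.1⟩
  · rintro x y y' (hh | hh) (hk | hk)
    · rw [← (m1 _ _ hh).2.2.1, ← (m1 _ _ hk).2.2.1]
    · exact ((m2 _ _ hk).2.2.2.2 (m1 _ _ hh).1).elim
    · exact ((m2 _ _ hh).2.2.2.2 (m1 _ _ hk).1).elim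
    · exact i2 (m2 _ _ hh).1 (m2 _ _ hk).1 ((m2 _ _ hh).2.2.1.trans (m2 _ _ hk).2.2.1.symm)
  · rintro x x' y (hh | hh) (hk | hk)
    · exact j2 (m1 _ _ hh).1 (m1 _ _ hk).1 ((m1 _ _ hh).2.2.1.trans (m1 _ _ hk).2.2.1.symm)
    · exact ((m1 _ _ hh).2.2.2.2 (m2 _ _ hk).1).elim
    · exact ((m1 _ _ hk).2.2.2.2 (m2 _ _ hh).1).elim
    · rw [← (m2 _ _ hh).2.2.1, ← (m2 _ _ hk).2.2.1]
  · apply ((hP.nwd n).union i4).mono ((hH1.union hH2).image continuous_fst).isClosed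
    rintro x ⟨⟨x, y⟩, hh | hh, rfl⟩
    · exact Or.inl (m1 _ _ hh).1
    · exact Or.inr ⟨y, (m2 _ _ hh).1, (m2 _ _ hh).2.2.1⟩
  · apply ((hP'.nwd n).union j4).mono ((hH1.union hH2).image continuous_snd).isClosed
    rintro x ⟨⟨x, y⟩, hh | hh, rfl⟩
    · exact Or.inr ⟨x, (m1 _ _ hh).1, (m1 _ _ hh).2.2.1⟩
    · exact Or.inl (m2 _ _ hh).1
  · rintro x y (hh | hh)
    · rw [j5 x (m1 _ _ hh).1, (m1 _ _ hh).2.2.1]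
    · rw [i5 y (m2 _ _ hh).1, (m2 _ _ hh).2.2.1]
  · intro x hx
    exact ⟨j x, Or.inl ⟨x, hx, rfl⟩⟩
  · intro y hy
    exact ⟨i y, Or.inr ⟨y, hy, rfl⟩⟩

end HH

namespace HH
open Set

section paths
variable {N : Type} (f : ℕ → N → Bool → N) (r : N) (V : N → Set KK)

def Nd (z : KK) : ℕ → N
  | 0 => r
  | n + 1 => f n (Nd z n) (z n)

open Classical in
noncomputable def nx (x : KK) : ℕ → N
  | 0 => r
  | n + 1 => f n (nx x n) (decide (x ∈ V (f n (nx x n) true)))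

open Classical in
noncomputable def br (x : KK) : KK := fun n => decide (x ∈ V (f n (nx f r V x n) true))

theorem Nd_br (x : KK) (n : ℕ) : Nd f r (br f r V x) n = nx f r V x n := by
  induction n with
  | zero => rfl
  | succ n ih => simp only [Nd, nx, ih]; rfl

theorem Nd_congr {z z' : KK} {n : ℕ} (h : ∀ i < n, z i = z' i) : Nd f r z n = Nd f r z' n := by
  induction n with
  | zero => rfl
  | succ n ih =>
    simp only [Nd]
    rw [ih (fun i hi => h i (by omega)), h n (by omega)]

variable {f r V}

theorem mem_Nd_iff (hr : V r = univ)
    (hsub : ∀ n N b, V (f n N b) ⊆ V N)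
    (hs : ∀ n N x, x ∈ V N → (x ∈ V (f n N true) ↔ x ∉ V (f n N false))) (x z : KK) (n : ℕ) :
    x ∈ V (Nd f r z n) ↔ ∀ i < n, z i = br f r V x i := by
  induction n with
  | zero => simp [Nd, hr]
  | succ n ih =>
    constructor
    · intro h
      have h0 := ih.1 (hsub _ _ _ h)
      intro i hi
      rcases Nat.lt_succ_iff_lt_or_eq.1 hi with h1 | rfl
      · exact h0 i h1
      · have e := Nd_congr f r h0
        rw [Nd_br] at e
        have h2 := hs i _ x (hsub _ _ _ h)
        simp only [Nd] at h
        simp only [br]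
        rw [← e]
        cases hz : z i with
        | true => rw [hz] at h; simp [h]
        | false => rw [hz] at h; simp [h2, h]
    · intro h
      have h0 : ∀ i < n, z i = br f r V x i := fun i hi => h i (by omega)
      have h1 := ih.2 h0
      have e := Nd_congr f r h0
      rw [Nd_br] at e
      have h2 := hs n _ x h1
      have h3 := h n (by omega)
      simp only [br] at h3
      rw [← e] at h3
      simp only [Nd]
      cases hz : z n with
      | true => rw [hz] at h3; simpa using h3.symm
      | false =>
        rw [hz] at h3
        by_contra hcon
        exact absurd (h2.2 hcon) (by simpa using h3)

theorem br_continuous (hr : V r = univ) (ho : ∀ N, IsOpen (V N))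
    (hsub : ∀ n N b, V (f n N b) ⊆ V N)
    (hs : ∀ n N x, x ∈ V N → (x ∈ V (f n N true) ↔ x ∉ V (f n N false))) :
    Continuous (br f r V) := by
  refine continuous_pi fun n => ?_
  rw [continuous_iff_continuousAt]
  intro x
  refine ContinuousAt.congr (f := fun _ => br f r V x n) continuousAt_const ?_
  have h1 := (mem_Nd_iff hr hsub hs x (br f r V x) (n + 1)).2 (fun _ _ => rfl)
  filter_upwards [(ho _).mem_nhds h1] with y hy
  exact (mem_Nd_iff hr hsub hs y _ _).1 hy n (by omega)

theorem br_range (hr : V r = univ) (hc : ∀ N, IsClosed (V N))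
    (hsub : ∀ n N b, V (f n N b) ⊆ V N)
    (hs : ∀ n N x, x ∈ V N → (x ∈ V (f n N true) ↔ x ∉ V (f n N false))) {K : Set KK}
    (hK : IsClosed K) (z : KK) :
    (∃ x ∈ K, br f r V x = z) ↔ ∀ n, (V (Nd f r z n) ∩ K).Nonempty := by
  constructor
  · rintro ⟨x, hx, rfl⟩ n
    exact ⟨x, (mem_Nd_iff hr hsub hs x _ n).2 (fun _ _ => rfl), hx⟩
  · intro h
    obtain ⟨x, hx⟩ := IsCompact.nonempty_iInter_of_sequence_nonempty_isCompact_isClosed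
      (fun n => V (Nd f r z n) ∩ K) (fun n => inter_subset_inter_left _ (hsub _ _ _)) h
      ((hc _).inter hK).isCompact (fun n => (hc _).inter hK)
    rw [mem_iInter] at hx
    refine ⟨x, (hx 0).2, ?_⟩
    ext1 n
    exact ((mem_Nd_iff hr hsub hs x z (n + 1)).1 (hx (n + 1)).1 n (by omega)).symm

end paths

theorem bool_uniq {P : Bool → Prop} (h : P true ↔ ¬ P false) {b b' : Bool} (h1 : P b) (h2 : P b') :
    b = b' := by
  cases b <;> cases b' <;> tauto

variable {K K' Y Y' : Set KK}

structure Node (K K' Y Y' : Set KK) where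
  V : Set KK
  V' : Set KK
  H : Set (KK × KK)
  is : IsNode K K' Y Y' V V' H

theorem step {L L' : ℕ → Set KK} {c : Prop} (hP : Pres K Y L c) (hP' : Pres K' Y' L' c)
    (he : Emb L Y K' Y') (he' : Emb L' Y' K Y) (n : ℕ) (N : Node K K' Y Y') :
    ∃ M : Bool → Node K K' Y Y',
      (∀ b, (M b).V ⊆ N.V) ∧ (∀ b, (M b).V' ⊆ N.V') ∧
      (∀ x ∈ N.V, (x ∈ (M true).V ↔ x ∉ (M false).V)) ∧
      (∀ x ∈ N.V', (x ∈ (M true).V' ↔ x ∉ (M false).V')) ∧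
      (∀ p ∈ N.H, ∃ b, p ∈ (M b).H) ∧
      (N.H.Nonempty → ∀ b, (M b).H ⊆ N.H) ∧
      (¬ N.H.Nonempty → (∀ x ∈ L n ∩ N.V, ∃ y b, (x, y) ∈ (M b).H) ∧
        (∀ y ∈ L' n ∩ N.V', ∃ x b, (x, y) ∈ (M b).H)) ∧
      (n % 2 = 0 → ∀ b, ∀ x ∈ (M b).V, x (n / 2) = b) ∧
      (n % 2 = 1 → ∀ b, ∀ x ∈ (M b).V', x (n / 2) = b) := by
  obtain ⟨V, V', H, h⟩ := N
  dsimp only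
  obtain ⟨H1, h1, h2, h3, h4⟩ : ∃ H1, IsNode K K' Y Y' V V' H1 ∧ H ⊆ H1 ∧
      (H.Nonempty → H1 ⊆ H) ∧ (¬ H.Nonempty → (∀ x ∈ L n ∩ V, ∃ y, (x, y) ∈ H1) ∧
        (∀ y ∈ L' n ∩ V', ∃ x, (x, y) ∈ H1)) := by
    by_cases hH : H.Nonempty
    · exact ⟨H, h, subset_rfl, fun _ => subset_rfl, fun hh => (hh hH).elim⟩
    rw [not_nonempty_iff_eq_empty] at hH
    subst hH
    by_cases hV : (V ∩ K).Nonempty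
    · obtain ⟨H1, a, b, d⟩ := h.fill hP hP' he he' hV n
      exact ⟨H1, a, empty_subset _, fun hh => by simp at hh, fun _ => ⟨b, d⟩⟩
    · refine ⟨∅, h, subset_rfl, fun _ => subset_rfl, fun _ => ⟨?_, ?_⟩⟩
      · rintro x ⟨hx, hxV⟩
        exact (hV ⟨x, hxV, (hP.nwd n).2.1 hx⟩).elim
      · rintro x ⟨hx, hxV⟩
        exact (hV (h.ne.2 ⟨x, hxV, (hP'.nwd n).2.1 hx⟩)).elim
  have clo : ∀ m : ℕ, IsClopen {x : KK | x m = true} := fun m =>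
    (isClopen_discrete {true}).preimage (continuous_apply m)
  obtain ⟨D, E, hD, hE, hHH, k1, k2⟩ : ∃ D E, IsNode K K' Y Y' (V ∩ D) (V' ∩ E) (H1 ∩ D ×ˢ E) ∧
      IsNode K K' Y Y' (V ∩ Dᶜ) (V' ∩ Eᶜ) (H1 ∩ Dᶜ ×ˢ Eᶜ) ∧ H1 ⊆ D ×ˢ E ∪ Dᶜ ×ˢ Eᶜ ∧
      (n % 2 = 0 → D = {x : KK | x (n / 2) = true}) ∧
      (n % 2 = 1 → E = {x : KK | x (n / 2) = true}) := by
    rcases Nat.mod_two_eq_zero_or_one n with hn | hn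
    · obtain ⟨E, -, a, b, d⟩ := h1.split hP'.noiso (clo (n / 2))
      exact ⟨_, E, a, b, d, fun _ => rfl, fun hh => by omega⟩
    · obtain ⟨D, -, a, b, d⟩ := h1.split' hP.noiso (clo (n / 2))
      exact ⟨D, _, a, b, d, fun hh => by omega, fun _ => rfl⟩
  have key : ∀ p ∈ H1, ∃ b : Bool, p ∈ (b.rec (⟨_, _, _, hE⟩ : Node K K' Y Y') ⟨_, _, _, hD⟩ :
      Node K K' Y Y').H := by
    intro p hp
    rcases hHH hp with h5 | h5
    · exact ⟨true, hp, h5⟩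
    · exact ⟨false, hp, h5⟩
  refine ⟨fun b => b.rec ⟨_, _, _, hE⟩ ⟨_, _, _, hD⟩, ?_, ?_, ?_, ?_, ?_, ?_, ?_, ?_, ?_⟩
  · rintro (_ | _) <;> exact inter_subset_left
  · rintro (_ | _) <;> exact inter_subset_left
  · intro x hx; simp [hx]
  · intro x hx; simp [hx]
  · intro p hp
    exact key p (h2 hp)
  · rintro hne (_ | _) <;> exact inter_subset_left.trans (h3 hne)
  · intro hne
    refine ⟨fun x hx => ?_, fun y hy => ?_⟩
    · obtain ⟨y, hy⟩ := (h4 hne).1 x hx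
      exact ⟨y, key _ hy⟩
    · obtain ⟨x, hx⟩ := (h4 hne).2 y hy
      exact ⟨x, key _ hx⟩
  · rintro hn (_ | _) x hx
    · have := hx.2
      rw [k1 hn] at this
      simpa using this
    · have := hx.2
      rw [k1 hn] at this
      simpa using this
  · rintro hn (_ | _) x hx
    · have := hx.2
      rw [k2 hn] at this
      simpa using this
    · have := hx.2
      rw [k2 hn] at this
      simpa using this

theorem homeo_thm {L L' : ℕ → Set KK} {c : Prop} (hP : Pres K Y L c) (hP' : Pres K' Y' L' c)
    (hK : K.Nonempty) (hK' : K'.Nonempty)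
    (he : Emb L Y K' Y') (he' : Emb L' Y' K Y) : Nonempty (Y ≃ₜ Y') := by
  choose f sub sub' ex ex' Hs Hs' He ev od using step hP hP' he he'
  let r : Node K K' Y Y' := ⟨univ, univ, ∅, isClopen_univ, isClopen_univ, by simp [hK, hK'],
    isCompact_empty, by simp, by simp, by simp, by simpa using Nwd.empty K,
    by simpa using Nwd.empty K', by simp⟩
  set B := br f r Node.V with hB
  set B' := br f r Node.V' with hB'
  have m : ∀ x z n, x ∈ (Nd f r z n).V ↔ ∀ i < n, z i = B x i :=
    fun x z n => mem_Nd_iff (V := Node.V) rfl sub ex x z n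
  have m' : ∀ x z n, x ∈ (Nd f r z n).V' ↔ ∀ i < n, z i = B' x i :=
    fun x z n => mem_Nd_iff (V := Node.V') rfl sub' ex' x z n
  have cB : Continuous B := br_continuous (V := Node.V) rfl (fun N => N.is.cl.2) sub ex
  have cB' : Continuous B' := br_continuous (V := Node.V') rfl (fun N => N.is.cl'.2) sub' ex'
  have eB : ∀ x k, x k = B x (2 * k) := by
    intro x k
    have h1 := (m x (B x) (2 * k + 1)).2 (fun _ _ => rfl)
    have h2 := ev (2 * k) _ (by omega) _ _ h1
    rwa [show 2 * k / 2 = k by omega] at h2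
  have eB' : ∀ x k, x k = B' x (2 * k + 1) := by
    intro x k
    have h1 := (m' x (B' x) (2 * k + 1 + 1)).2 (fun _ _ => rfl)
    have h2 := od (2 * k + 1) _ (by omega) _ _ h1
    rwa [show (2 * k + 1) / 2 = k by omega] at h2
  have iB : Function.Injective B := fun x y h => by
    ext1 k; rw [eB x, eB y, h]
  have iB' : Function.Injective B' := fun x y h => by
    ext1 k; rw [eB' x, eB' y, h]
  have emB := (cB.isClosedEmbedding iB).isEmbedding
  have emB' := (cB'.isClosedEmbedding iB').isEmbedding
  have rng : ∀ z, (∃ x ∈ K, B x = z) ↔ ∃ y ∈ K', B' y = z := by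
    intro z
    rw [br_range (V := Node.V) rfl (fun N => N.is.cl.1) sub ex hP.closed,
      br_range (V := Node.V') rfl (fun N => N.is.cl'.1) sub' ex' hP'.closed]
    exact forall_congr' fun n => (Nd f r z n).is.ne
  have pers : ∀ z x y n0, (x, y) ∈ (Nd f r z n0).H → (B x = z ∨ B' y = z) →
      ∀ n ≥ n0, (x, y) ∈ (Nd f r z n).H := by
    intro z x y n0 h0 hz n hn
    induction n, hn using Nat.le_induction with
    | base => exact h0
    | succ n hn ih =>
      obtain ⟨b, hb⟩ := Hs n _ _ ih
      have : b = z n := by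
        rcases hz with hz | hz
        · have h1 := (f n (Nd f r z n) b).is.sub _ _ hb
          have h2 := (m x z (n + 1)).2 (by simp [hz])
          have h3 := ex n _ x ((Nd f r z n).is.sub _ _ ih).1
          exact bool_uniq (P := fun b => x ∈ (f n (Nd f r z n) b).V) h3 h1.1 h2
        · have h1 := (f n (Nd f r z n) b).is.sub _ _ hb
          have h2 := (m' y z (n + 1)).2 (by simp [hz])
          have h3 := ex' n _ y ((Nd f r z n).is.sub _ _ ih).2
          exact bool_uniq (P := fun b => y ∈ (f n (Nd f r z n) b).V') h3 h1.2 h2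
      rw [this] at hb
      exact hb
  have main : ∀ x ∈ K, ∀ y ∈ K', B x = B' y → (x ∈ Y ↔ y ∈ Y') := by
    intro x hx y hy hxy
    set z := B x with hz
    have hz' : B' y = z := hxy.symm
    have hxV : ∀ n, x ∈ (Nd f r z n).V := fun n => (m x z n).2 (fun _ _ => rfl)
    have hyV : ∀ n, y ∈ (Nd f r z n).V' := fun n => (m' y z n).2 (fun _ _ => by rw [hz'])
    by_cases hcase : ∃ n0, ∀ n ≥ n0, (Nd f r z n).H.Nonempty
    · obtain ⟨n0, hn0⟩ := hcase
      have anti : ∀ n ≥ n0, (Nd f r z n).H ⊆ (Nd f r z n0).H := by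
        intro n hn
        induction n, hn using Nat.le_induction with
        | base => exact subset_rfl
        | succ n hn ih => exact (Hs' n _ (hn0 n hn) _).trans ih
      have step' : ∀ n ≥ n0, (Nd f r z (n + 1)).H ⊆ (Nd f r z n).H :=
        fun n hn => Hs' n _ (hn0 n hn) _
      obtain ⟨p, hp⟩ := IsCompact.nonempty_iInter_of_sequence_nonempty_isCompact_isClosed
        (fun n => (Nd f r z (n0 + n)).H) (fun n => step' (n0 + n) (by omega))
        (fun n => hn0 _ (by omega))
        (Nd f r z (n0 + 0)).is.comp (fun n => (Nd f r z (n0 + n)).is.comp.isClosed)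
      rw [mem_iInter] at hp
      obtain ⟨x', y'⟩ := p
      have e1 : x' = x := iB (by
        ext1 k
        have h1 := ((Nd f r z _).is.sub _ _ (hp (k + 1))).1
        exact ((m x' z _).1 h1 k (by omega)).symm)
      have e2 : y' = y := iB' (by
        ext1 k
        have h1 := ((Nd f r z _).is.sub _ _ (hp (k + 1))).2
        rw [hz']
        exact ((m' y' z _).1 h1 k (by omega)).symm)
      subst e1 e2
      exact (Nd f r z _).is.pres _ _ (hp 0)
    · push Not at hcase
      have o1 : ∀ i, x ∉ L i := by
        intro i hi
        obtain ⟨n, hn, hne⟩ := hcase i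
        obtain ⟨w, b, hb⟩ := (He n _ (not_nonempty_iff_eq_empty.2 hne)).1 x
          ⟨hP.mono hn hi, hxV n⟩
        have h1 := ((f n (Nd f r z n) b).is.sub _ _ hb).1
        have h2 := hxV (n + 1)
        have h3 := ex n _ x (hxV n)
        have : b = z n := bool_uniq (P := fun b => x ∈ (f n (Nd f r z n) b).V) h3 h1 h2
        rw [this] at hb
        obtain ⟨n', hn', hne'⟩ := hcase (n + 1)
        have := pers z x w (n + 1) hb (Or.inl rfl) n' hn'
        rw [hne'] at this
        exact this
      have o2 : ∀ i, y ∉ L' i := by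
        intro i hi
        obtain ⟨n, hn, hne⟩ := hcase i
        obtain ⟨w, b, hb⟩ := (He n _ (not_nonempty_iff_eq_empty.2 hne)).2 y
          ⟨hP'.mono hn hi, hyV n⟩
        have h1 := ((f n (Nd f r z n) b).is.sub _ _ hb).2
        have h2 := hyV (n + 1)
        have h3 := ex' n _ y (hyV n)
        have : b = z n := bool_uniq (P := fun b => y ∈ (f n (Nd f r z n) b).V') h3 h1 h2
        rw [this] at hb
        obtain ⟨n', hn', hne'⟩ := hcase (n + 1)
        have := pers z w y (n + 1) hb (Or.inr hz') n' hn'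
        rw [hne'] at this
        exact this
      rw [hP.out x hx o1, hP'.out y hy o2]
  have im : B '' Y = B' '' Y' := by
    ext z
    constructor
    · rintro ⟨x, hx, rfl⟩
      obtain ⟨y, hy, hyx⟩ := (rng (B x)).1 ⟨x, hP.sub hx, rfl⟩
      exact ⟨y, (main x (hP.sub hx) y hy hyx.symm).1 hx, hyx⟩
    · rintro ⟨y, hy, rfl⟩
      obtain ⟨x, hx, hyx⟩ := (rng (B' y)).2 ⟨y, hP'.sub hy, rfl⟩
      exact ⟨x, (main x hx y (hP'.sub hy) hyx).2 hy, hyx⟩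
  exact ⟨(emB.homeomorphImage Y).trans ((Homeomorph.setCongr im).trans
    (emB'.homeomorphImage Y').symm)⟩

end HH

namespace HH
open Set

def HHom (Y : Type*) [TopologicalSpace Y] : Prop :=
  ∀ U : Set Y, IsClopen U → U.Nonempty → Nonempty (U ≃ₜ Y)

def LU (L : ℕ → Set KK) (c : Prop) (Y O : Set KK) (n : ℕ) : Set KK :=
  (L n ∩ closure (Y ∩ O)) ∪ {x | x ∈ closure (Y ∩ O) ∧ x ∉ O ∧ c}

variable {K Y O : Set KK} {L : ℕ → Set KK} {c : Prop}

theorem Pres.clsub (hP : Pres K Y L c) : closure (Y ∩ O) ⊆ K :=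
  closure_minimal (inter_subset_left.trans hP.sub) hP.closed

theorem clsub' (hd : K ⊆ closure Y) (hO : IsOpen O) : K ∩ O ⊆ closure (Y ∩ O) := by
  rintro x ⟨hx, hxO⟩
  rw [inter_comm]
  exact hO.inter_closure ⟨hxO, hd hx⟩

theorem meets_cl {W A : Set KK} (hW : IsOpen W) (h : (W ∩ closure A).Nonempty) :
    (W ∩ A).Nonempty := by
  obtain ⟨x, hx, hxA⟩ := h
  exact mem_closure_iff.1 hxA W hW hx

theorem Nwd.transfer {F : Set KK} (hP : Pres K Y L c) (hd : K ⊆ closure Y) (hO : IsOpen O)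
    (hF : Nwd F K) : Nwd (F ∩ closure (Y ∩ O)) (closure (Y ∩ O)) := by
  refine ⟨hF.1.inter isClosed_closure, inter_subset_right, fun W hW hne => ?_⟩
  obtain ⟨x, hx, hxY, hxO⟩ := meets_cl hW hne
  obtain ⟨y, ⟨hy, hyO⟩, hyK, hyF⟩ := hF.2.2 (W ∩ O) (hW.inter hO) ⟨x, ⟨hx, hxO⟩, hP.sub hxY⟩
  exact ⟨y, hy, clsub' hd hO ⟨hyK, hyO⟩, fun hh => hyF hh.1⟩

theorem Pres.restr (hP : Pres K Y L c) (hd : K ⊆ closure Y) (hO : IsOpen O) :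
    Pres (closure (Y ∩ O)) (Y ∩ O) (LU L c Y O) c where
  closed := isClosed_closure
  noiso W hW hne := by
    obtain ⟨x, hx, hxY, hxO⟩ := meets_cl hW hne
    obtain ⟨a, ha, b, hb, hab⟩ := hP.noiso (W ∩ O) (hW.inter hO) ⟨x, ⟨hx, hxO⟩, hP.sub hxY⟩
    exact ⟨a, ⟨ha.1.1, clsub' hd hO ⟨ha.2, ha.1.2⟩⟩, b,
      ⟨hb.1.1, clsub' hd hO ⟨hb.2, hb.1.2⟩⟩, hab⟩
  mono m n hmn := union_subset_union_left _ (inter_subset_inter_left _ (hP.mono hmn))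
  nwd n := by
    refine ((hP.nwd n).transfer hP hd hO).union ?_
    by_cases hc : c
    · have e : {x | x ∈ closure (Y ∩ O) ∧ x ∉ O ∧ c} = closure (Y ∩ O) \ O := by
        ext x; simp [hc]
      rw [e]
      refine ⟨isClosed_closure.sdiff hO, diff_subset, fun W hW hne => ?_⟩
      obtain ⟨x, hx, hxY⟩ := meets_cl hW hne
      exact ⟨x, hx, subset_closure hxY, fun hh => hh.2 hxY.2⟩
    · have e : {x | x ∈ closure (Y ∩ O) ∧ x ∉ O ∧ c} = ∅ := by
        ext x; simp [hc]
      rw [e]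
      exact Nwd.empty _
  sub := subset_closure
  out x hx hxL := by
    have h1 := hP.out x (hP.clsub hx) (fun n hn => hxL n (Or.inl ⟨hn, hx⟩))
    constructor
    · exact fun hh => h1.1 hh.1
    · intro hc
      refine ⟨h1.2 hc, ?_⟩
      by_contra hO
      exact hxL 0 (Or.inr ⟨hx, hO, hc⟩)

theorem LU_univ (hP : Pres K Y L c) (hd : K ⊆ closure Y) (n : ℕ) : LU L c Y univ n = L n := by
  ext x
  simp only [LU, inter_univ, mem_univ, not_true, false_and, and_false, setOf_false, union_empty]
  exact ⟨fun hh => hh.1, fun hh => ⟨hh, hd ((hP.nwd n).2.1 hh)⟩⟩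

theorem hhom_of_emb (hP : Pres K Y L c) (hd : K ⊆ closure Y)
    (he : ∀ (O O' : Set KK) (n : ℕ), IsOpen O → IsOpen O' → Y ∩ closure (Y ∩ O) ⊆ O →
      (Y ∩ O').Nonempty → ∃ j : KK → KK, ContinuousOn j (LU L c Y O n) ∧ InjOn j (LU L c Y O n) ∧
        MapsTo j (LU L c Y O n) (O' ∩ K) ∧ Nwd (j '' (LU L c Y O n)) K ∧
        ∀ x ∈ LU L c Y O n, (x ∈ Y ∩ O ↔ j x ∈ Y)) : HHom Y := by
  intro U hU hne
  obtain ⟨O, hO, rfl⟩ := isOpen_induced_iff.1 hU.2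
  have hrel : Y ∩ closure (Y ∩ O) ⊆ O := by
    rintro x ⟨hx, hxc⟩
    by_contra hxO
    have h2 : (⟨x, hx⟩ : Y) ∉ (Subtype.val ⁻¹' O : Set Y) := hxO
    have := hU.compl.2
    obtain ⟨O2, hO2, e⟩ := isOpen_induced_iff.1 this
    have h3 : (⟨x, hx⟩ : Y) ∈ (Subtype.val ⁻¹' O2 : Set Y) := by rw [e]; exact h2
    obtain ⟨w, hw, hwY, hwO⟩ := mem_closure_iff.1 hxc O2 hO2 h3
    have h4 : (⟨w, hwY⟩ : Y) ∈ (Subtype.val ⁻¹' O2 : Set Y) := hw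
    rw [e] at h4
    exact h4 hwO
  obtain ⟨⟨x0, hx0Y⟩, hx0⟩ := hne
  have h1 : Nonempty (↥(Y ∩ O) ≃ₜ Y) := by
    refine homeo_thm (hP.restr hd hO) hP ⟨x0, subset_closure ⟨hx0Y, hx0⟩⟩ ⟨x0, hP.sub hx0Y⟩ ?_ ?_
    · intro n V hV hne
      refine he O V n hO hV hrel ?_
      rw [inter_comm]
      exact meets_cl hV (hne.mono (inter_subset_inter_right _ hd))
    · intro n V hV hne
      obtain ⟨x1, hx1, hx1Y, hx1O⟩ := meets_cl hV hne
      obtain ⟨j, j1, j2, j3, j4, j5⟩ := he univ (V ∩ O) n isOpen_univ (hV.inter hO)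
        (subset_univ _) ⟨x1, hx1Y, hx1, hx1O⟩
      rw [LU_univ hP hd] at j1 j2 j3 j4 j5
      have e : j '' L n ∩ closure (Y ∩ O) = j '' L n := by
        refine inter_eq_left.2 ?_
        rintro _ ⟨x, hx, rfl⟩
        exact clsub' hd hO ⟨(j3 hx).2, (j3 hx).1.2⟩
      refine ⟨j, j1, j2, fun x hx => ⟨(j3 hx).1.1, clsub' hd hO ⟨(j3 hx).2, (j3 hx).1.2⟩⟩, ?_, ?_⟩
      · rw [← e]
        exact j4.transfer hP hd hO
      · intro x hx
        have := j5 x hx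
        rw [inter_univ] at this
        rw [this]
        exact ⟨fun hh => ⟨hh, (j3 hx).1.2⟩, fun hh => hh.1⟩
  obtain ⟨h1⟩ := h1
  refine ⟨Homeomorph.trans ?_ h1⟩
  exact
    { toFun := fun x => ⟨x.1.1, x.1.2, x.2⟩
      invFun := fun x => ⟨⟨x.1, x.2.1⟩, x.2.2⟩
      left_inv := fun x => rfl
      right_inv := fun x => rfl
      continuous_toFun := by fun_prop
      continuous_invFun := by fun_prop }

end HH

namespace HH
open Set

def GoodS {P : Type*} [TopologicalSpace P] (X : Set P) : Prop :=
  ∃ f : ℕ → Set P, Pairwise (Function.onFun Disjoint f) ∧ (∀ i, ∃ O, IsGδ O ∧ f i = X ∩ O) ∧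
    (∀ i, HHom (f i)) ∧ X = ⋃ i, f i

section gen
variable {P Q : Type*} [TopologicalSpace P] [TopologicalSpace Q]

theorem HHom.homeo (h : HHom P) (e : P ≃ₜ Q) : HHom Q := by
  intro U hU hne
  obtain ⟨g⟩ := h (e ⁻¹' U) (hU.preimage e.continuous) (hne.preimage e.surjective)
  exact ⟨((e.sets rfl).symm.trans g).trans e⟩

theorem HHom.of_subsingleton [Subsingleton P] : HHom P := by
  intro U hU hne
  have : U = univ := by
    ext x
    obtain ⟨y, hy⟩ := hne
    simp [Subsingleton.elim x y, hy]
  subst this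
  exact ⟨Homeomorph.Set.univ P⟩

theorem HHom.of_clopen (h : HHom P) {U : Set P} (hU : IsClopen U) : HHom U := by
  by_cases hne : U.Nonempty
  · obtain ⟨e⟩ := h U hU hne
    exact h.homeo e.symm
  · rw [not_nonempty_iff_eq_empty] at hne
    subst hne
    exact HHom.of_subsingleton

theorem good_of_countable {ι : Type*} [Countable ι] {X : Set P} (f : ι → Set P)
    (hd : Pairwise (Function.onFun Disjoint f)) (hG : ∀ i, ∃ O, IsGδ O ∧ f i = X ∩ O)
    (hh : ∀ i, HHom (f i)) (hX : X = ⋃ i, f i) : GoodS X := by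
  obtain ⟨e, he⟩ := Countable.exists_injective_nat ι
  have e1 : ∀ i, {x | ∃ i', e i' = e i ∧ x ∈ f i'} = f i := by
    intro i
    ext x
    constructor
    · rintro ⟨i', h1, h2⟩
      rwa [← he h1]
    · exact fun h => ⟨i, rfl, h⟩
  have e2 : ∀ n, (¬ ∃ i, e i = n) → {x | ∃ i', e i' = n ∧ x ∈ f i'} = ∅ := by
    intro n hn
    ext x
    simp only [mem_ofPred_eq, mem_empty_iff_false, iff_false]
    rintro ⟨i, h1, -⟩
    exact hn ⟨i, h1⟩
  refine ⟨fun n => {x | ∃ i, e i = n ∧ x ∈ f i}, ?_, ?_, ?_, ?_⟩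
  · intro m n hmn
    rw [Function.onFun, Set.disjoint_left]
    rintro x ⟨i, rfl, hi⟩ ⟨j, rfl, hj⟩
    have : i ≠ j := fun hij => hmn (by rw [hij])
    exact Set.disjoint_left.1 (hd this) hi hj
  · intro n
    by_cases hn : ∃ i, e i = n
    · obtain ⟨i, rfl⟩ := hn
      simp only [e1]
      exact hG i
    · simp only [e2 n hn]
      exact ⟨∅, IsGδ.empty, by simp⟩
  · intro n
    by_cases hn : ∃ i, e i = n
    · obtain ⟨i, rfl⟩ := hn
      have h := hh i
      rw [← e1] at h
      exact h
    · have h : HHom (∅ : Set P) := HHom.of_subsingleton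
      rw [← e2 n hn] at h
      exact h
  · ext x
    rw [hX]
    simp only [mem_iUnion, mem_ofPred_eq]
    constructor
    · rintro ⟨i, hi⟩
      exact ⟨_, i, rfl, hi⟩
    · rintro ⟨_, i, _, hi⟩
      exact ⟨i, hi⟩

theorem good_of_hhom {X : Set P} (h : HHom X) : GoodS X :=
  good_of_countable (ι := Unit) (fun _ => X) (fun i j hij => (hij rfl).elim)
    (fun _ => ⟨univ, IsGδ.univ, by simp⟩) (fun _ => h) (iUnion_const X).symm

/-- G1 -/
theorem good_iUnion {ι : Type*} [Countable ι] {X : Set P} (O : ι → Set P)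
    (hO : ∀ i, IsGδ (O i)) (hd : ∀ i j, i ≠ j → Disjoint (X ∩ O i) (X ∩ O j))
    (hX : X ⊆ ⋃ i, O i) (hg : ∀ i, GoodS (X ∩ O i)) : GoodS X := by
  choose f fd fG fh fX using hg
  refine good_of_countable (ι := ι × ℕ) (fun p => f p.1 p.2) ?_ ?_ ?_ ?_
  · rintro ⟨i, m⟩ ⟨j, n⟩ hne
    by_cases hij : i = j
    · subst hij
      exact fd i (fun h => hne (Prod.ext rfl h))
    · refine (hd i j hij).mono ?_ ?_
      · rw [fX i]
        exact subset_iUnion (f i) m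
      · rw [fX j]
        exact subset_iUnion (f j) n
  · rintro ⟨i, m⟩
    obtain ⟨O', hO', e⟩ := fG i m
    exact ⟨O i ∩ O', (hO i).inter hO', by simp only [e, inter_assoc]⟩
  · rintro ⟨i, m⟩
    exact fh i m
  · ext x
    simp only [mem_iUnion, Prod.exists]
    constructor
    · intro hx
      obtain ⟨i, hi⟩ := mem_iUnion.1 (hX hx)
      have : x ∈ X ∩ O i := ⟨hx, hi⟩
      rw [fX i] at this
      obtain ⟨m, hm⟩ := mem_iUnion.1 this
      exact ⟨i, m, hm⟩
    · rintro ⟨i, m, h⟩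
      have : x ∈ X ∩ O i := by
        rw [fX i]
        exact mem_iUnion.2 ⟨m, h⟩
      exact this.1

/-- G3 -/
theorem GoodS.inter_clopen {X V : Set P} (h : GoodS X) (hV : IsClopen V) : GoodS (X ∩ V) := by
  obtain ⟨f, fd, fG, fh, fX⟩ := h
  refine ⟨fun i => f i ∩ V, ?_, ?_, ?_, ?_⟩
  · intro i j hij
    exact (fd hij).mono inter_subset_left inter_subset_left
  · intro i
    obtain ⟨O, hO, e⟩ := fG i
    exact ⟨O, hO, by simp only [e, inter_right_comm]⟩
  · intro i
    have h1 : HHom ↥(Subtype.val ⁻¹' V : Set (f i)) :=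
      (fh i).of_clopen (hV.preimage continuous_subtype_val)
    refine h1.homeo ?_
    exact
      { toFun := fun x => ⟨x.1.1, x.1.2, x.2⟩
        invFun := fun x => ⟨⟨x.1, x.2.1⟩, x.2.2⟩
        left_inv := fun x => rfl
        right_inv := fun x => rfl
        continuous_toFun := by fun_prop
        continuous_invFun := by fun_prop }
  · rw [← iUnion_inter, ← fX]

theorem gdelta_extend {X : Set P} {S : Set X} (h : IsGδ S) : ∃ O : Set P, IsGδ O ∧
    S = Subtype.val ⁻¹' O := by
  obtain ⟨f, hf, rfl⟩ := isGδ_iff_eq_iInter_nat.1 h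
  choose g hg e using fun n => isOpen_induced_iff.1 (hf n)
  refine ⟨⋂ n, g n, IsGδ.iInter_of_isOpen hg, ?_⟩
  rw [preimage_iInter]
  simp only [e]

theorem GoodS.homeo {X : Set P} {Z : Set Q} (h : GoodS Z) (e : X ≃ₜ Z) : GoodS X := by
  obtain ⟨f, fd, fG, fh, fX⟩ := h
  have hsub : ∀ i, f i ⊆ Z := fun i => by
    rw [fX]
    exact subset_iUnion f i
  refine ⟨fun i => {x | ∃ hx : x ∈ X, (e ⟨x, hx⟩ : Q) ∈ f i}, ?_, ?_, ?_, ?_⟩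
  · intro i j hij
    rw [Function.onFun, Set.disjoint_left]
    rintro x ⟨hx, h1⟩ ⟨_, h2⟩
    exact Set.disjoint_left.1 (fd hij) h1 h2
  · intro i
    obtain ⟨O, hO, e1⟩ := fG i
    have h1 : IsGδ ((fun x : X => (e x : Q)) ⁻¹' O) :=
      hO.preimage (continuous_subtype_val.comp e.continuous)
    obtain ⟨O', hO', e2⟩ := gdelta_extend h1
    refine ⟨O', hO', ?_⟩
    ext x
    constructor
    · rintro ⟨hx, h3⟩
      refine ⟨hx, ?_⟩
      have : (⟨x, hx⟩ : X) ∈ (fun x : X => (e x : Q)) ⁻¹' O := by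
        rw [e1] at h3
        exact h3.2
      rw [e2] at this
      exact this
    · rintro ⟨hx, h3⟩
      refine ⟨hx, ?_⟩
      have : (⟨x, hx⟩ : X) ∈ (fun x : X => (e x : Q)) ⁻¹' O := by
        rw [e2]
        exact h3
      rw [e1]
      exact ⟨(e _).2, this⟩
  · intro i
    refine (fh i).homeo ?_
    exact
      { toFun := fun x => ⟨(e.symm ⟨x.1, hsub i x.2⟩ : X), Subtype.coe_prop _, by
          simp⟩
        invFun := fun x => ⟨(e ⟨x.1, x.2.1⟩ : Q), x.2.2⟩
        left_inv := fun x => by simp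
        right_inv := fun x => by simp
        continuous_toFun := by fun_prop
        continuous_invFun := by fun_prop }
  · ext x
    simp only [mem_iUnion, mem_ofPred_eq]
    constructor
    · intro hx
      have := (e ⟨x, hx⟩).2
      have h2 : (e ⟨x, hx⟩ : Q) ∈ ⋃ i, f i := fX ▸ this
      obtain ⟨i, hi⟩ := mem_iUnion.1 h2
      exact ⟨i, hx, hi⟩
    · rintro ⟨i, hx, -⟩
      exact hx

theorem good_empty : GoodS (∅ : Set P) := good_of_hhom HHom.of_subsingleton

theorem good_of_countable_set [T1Space P] {X : Set P} (hX : X.Countable) : GoodS X := by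
  have := hX.to_subtype
  refine good_of_countable (ι := X)
    (X := X) (fun x => {x.1}) ?_ ?_ (fun x => HHom.of_subsingleton) (by ext; simp)
  · rintro x y hxy
    simpa [Function.onFun] using fun h => hxy (Subtype.ext h)
  · intro x
    have := (hX.mono (sdiff_subset (t := {x.1}))).isGδ_compl
    refine ⟨_, this, ?_⟩
    ext y
    simp only [mem_singleton_iff, mem_inter_iff, mem_compl_iff, mem_sdiff]
    constructor
    · rintro rfl
      simp
    · tauto

end gen

/-- G1 for disjointed clopen sequence -/
theorem good_inter_open_cover {X : Set KK} (V : ℕ → Set KK) (hV : ∀ n, IsClopen (V n))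
    (hX : X ⊆ ⋃ n, V n) (hg : ∀ n, GoodS (X ∩ V n)) : GoodS X := by
  have hcl : ∀ n, IsClopen (disjointed V n) := by
    intro n
    rw [disjointed_eq_inter_compl]
    refine (hV n).inter ?_
    exact (finite_lt_nat n).isClopen_biInter (fun i _ => (hV i).compl)
  refine good_iUnion (disjointed V) (fun n => (hcl n).2.isGδ) ?_ ?_ ?_
  · intro i j hij
    exact (disjoint_disjointed V hij).mono inter_subset_right inter_subset_right
  · rwa [iUnion_disjointed]
  · intro n
    have := (hg n).inter_clopen (hcl n)
    rwa [inter_assoc, inter_eq_right.2 (disjointed_subset V n)] at this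

theorem clopen_basis : ∃ V : ℕ → Set KK, (∀ n, IsClopen (V n)) ∧
    ∀ W, IsOpen W → ∀ x ∈ W, ∃ n, x ∈ V n ∧ V n ⊆ W := by
  obtain ⟨e, he⟩ := exists_surjective_nat (Σ n : ℕ, (Fin n → Bool))
  refine ⟨fun n => {x | ∀ i : Fin (e n).1, x i = (e n).2 i}, ?_, ?_⟩
  · intro n
    have : {x : KK | ∀ i : Fin (e n).1, x i = (e n).2 i} =
        ⋂ i : Fin (e n).1, (fun x : KK => x i) ⁻¹' {(e n).2 i} := by
      ext x; simp
    simp only [this]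
    exact isClopen_iInter_of_finite fun i => (isClopen_discrete _).preimage (continuous_apply _)
  · intro W hW x hx
    obtain ⟨_, ⟨y, n, rfl⟩, h1, h2⟩ :=
      (PiNat.isTopologicalBasis_cylinders (fun _ : ℕ => Bool)).exists_subset_of_mem_open hx hW
    obtain ⟨m, hm⟩ := he ⟨n, fun i => y i⟩
    refine ⟨m, ?_, ?_⟩
    · rw [mem_ofPred_eq, hm]
      exact fun i => h1 i i.2
    · intro z hz
      rw [mem_ofPred_eq, hm] at hz
      exact h2 (fun i hi => hz ⟨i, hi⟩)

theorem open_clopen_cover {W : Set KK} (hW : IsOpen W) : ∃ V : ℕ → Set KK, (∀ n, IsClopen (V n)) ∧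
    (∀ n, V n ⊆ W) ∧ W = ⋃ n, V n := by
  obtain ⟨V, hV, hb⟩ := clopen_basis
  classical
  refine ⟨fun n => if V n ⊆ W then V n else ∅, ?_, ?_, ?_⟩
  · intro n
    dsimp only
    split_ifs
    · exact hV n
    · exact isClopen_empty
  · intro n
    dsimp only
    split_ifs with h
    · exact h
    · exact empty_subset _
  · ext x
    rw [mem_iUnion]
    constructor
    · intro hx
      obtain ⟨n, h1, h2⟩ := hb W hW x hx
      exact ⟨n, by rwa [if_pos h2]⟩
    · rintro ⟨n, hn⟩
      split_ifs at hn with h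
      · exact h hn
      · exact hn.elim

theorem GoodS.inter_open {X W : Set KK} (h : GoodS X) (hW : IsOpen W) : GoodS (X ∩ W) := by
  obtain ⟨V, hV, hVW, e⟩ := open_clopen_cover hW
  refine good_inter_open_cover V hV ?_ ?_
  · rw [← e]
    exact inter_subset_right
  · intro n
    rw [inter_assoc, inter_eq_right.2 (hVW n)]
    exact h.inter_clopen (hV n)

/-- G4 -/
theorem good_closed_cover {X : Set KK} (T : ℕ → Set KK) (hT : ∀ n, IsClosed (T n))
    (hg : ∀ n, GoodS (X ∩ T n)) (hr : GoodS (X \ ⋃ n, T n)) : GoodS X := by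
  have ho : ∀ n, IsOpen (⋂ i < n, (T i)ᶜ) := fun n =>
    (finite_lt_nat n).isOpen_biInter (fun i _ => (hT i).isOpen_compl)
  have hdj : ∀ n, disjointed T n = T n ∩ ⋂ i < n, (T i)ᶜ := fun n => disjointed_eq_inter_compl _ _
  refine good_iUnion (ι := Option ℕ)
    (fun o => o.elim ((⋃ n, T n)ᶜ) (fun n => disjointed T n)) ?_ ?_ ?_ ?_
  · rintro (_ | n)
    · simp only [Option.elim, compl_iUnion]
      exact IsGδ.iInter_of_isOpen fun n => (hT n).isOpen_compl
    · simp only [Option.elim, hdj]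
      exact (hT n).isGδ.inter (ho n).isGδ
  · have h0 : ∀ n, Disjoint (⋃ n, T n)ᶜ (disjointed T n) := fun n =>
      Set.disjoint_left.2 fun x hx h => hx (mem_iUnion.2 ⟨n, disjointed_subset _ _ h⟩)
    rintro (_ | n) (_ | m) hne
    · exact (hne rfl).elim
    · exact (h0 m).mono inter_subset_right inter_subset_right
    · exact (h0 n).symm.mono inter_subset_right inter_subset_right
    · exact (disjoint_disjointed T (fun h => hne (by rw [h]))).mono
        inter_subset_right inter_subset_right
  · intro x hx
    by_cases h : x ∈ ⋃ n, T n
    · rw [← iUnion_disjointed] at h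
      obtain ⟨n, hn⟩ := mem_iUnion.1 h
      exact mem_iUnion.2 ⟨some n, hn⟩
    · exact mem_iUnion.2 ⟨none, h⟩
  · rintro (_ | n)
    · exact hr
    · simp only [Option.elim, hdj]
      rw [← inter_assoc]
      exact (hg n).inter_open (ho n)

def NowhereGood (Y : Set KK) : Prop := ∀ V, IsClopen V → (Y ∩ V).Nonempty → ¬ GoodS (Y ∩ V)

theorem core {X : Set KK} (hX : ¬ GoodS X) : ∃ C, IsClosed C ∧ (X ∩ C).Nonempty ∧
    NowhereGood (X ∩ C) := by
  obtain ⟨V, hV, hb⟩ := clopen_basis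
  classical
  set V' : ℕ → Set KK := fun n => if GoodS (X ∩ V n) then V n else ∅ with hV'
  have cl : ∀ n, IsClopen (V' n) := by
    intro n
    simp only [hV']
    split_ifs
    · exact hV n
    · exact isClopen_empty
  have gd : ∀ n, GoodS (X ∩ V' n) := by
    intro n
    simp only [hV']
    split_ifs with h
    · exact h
    · simpa using good_empty
  set G := ⋃ n, V' n with hG
  have hGo : IsOpen G := isOpen_iUnion fun n => (cl n).2
  have gG : GoodS (X ∩ G) := by
    refine good_inter_open_cover V' cl inter_subset_right ?_
    intro n
    rw [inter_assoc, inter_eq_right.2 (subset_iUnion V' n)]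
    exact gd n
  have two : ∀ W, IsClopen W → GoodS (X ∩ Gᶜ ∩ W) → GoodS (X ∩ W) := by
    intro W hW h
    refine good_closed_cover (fun _ => Gᶜ) (fun _ => hGo.isClosed_compl) (fun _ => ?_) ?_
    · rwa [inter_right_comm]
    · have : (X ∩ W) \ (⋃ _ : ℕ, Gᶜ) = X ∩ G ∩ W := by
        ext x; simp; tauto
      rw [this]
      exact gG.inter_clopen hW
  refine ⟨Gᶜ, hGo.isClosed_compl, ?_, ?_⟩
  · by_contra hne
    rw [not_nonempty_iff_eq_empty] at hne
    apply hX
    have := two univ isClopen_univ (by simpa [hne] using good_empty)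
    simpa using this
  · rintro W hW ⟨x, ⟨hx, hxG⟩, hxW⟩ hgood
    obtain ⟨n, h1, h2⟩ := hb W hW.2 x hxW
    have h3 := (two W hW hgood).inter_clopen (hV n)
    rw [inter_assoc, inter_eq_right.2 h2] at h3
    apply hxG
    refine mem_iUnion.2 ⟨n, ?_⟩
    simp only [hV', if_pos h3]
    exact h1

theorem NowhereGood.inter {Y V : Set KK} (h : NowhereGood Y) (hV : IsClopen V) :
    NowhereGood (Y ∩ V) := by
  intro W hW hne
  rw [inter_assoc] at hne ⊢
  exact h _ (hV.inter hW) hne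

theorem NowhereGood.open {Y W : Set KK} (h : NowhereGood Y) (hW : IsOpen W)
    (hne : (Y ∩ W).Nonempty) : ¬ GoodS (Y ∩ W) := by
  intro hg
  obtain ⟨V, hV, hb⟩ := clopen_basis
  obtain ⟨x, hx, hxW⟩ := hne
  obtain ⟨n, h1, h2⟩ := hb W hW x hxW
  refine h (V n) (hV n) ⟨x, hx, h1⟩ ?_
  have := hg.inter_clopen (hV n)
  rwa [inter_assoc, inter_eq_right.2 h2] at this

theorem NowhereGood.noiso {Y : Set KK} (h : NowhereGood Y) : NoIso (closure Y) := by
  intro W hW hne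
  have hne := meets_cl hW hne
  rw [inter_comm] at hne
  have h1 := h.open hW hne
  by_contra hcon
  push Not at hcon
  apply h1
  apply good_of_countable_set
  apply Set.Subsingleton.countable
  intro x hx y hy
  exact hcon x ⟨hx.2, subset_closure hx.1⟩ y ⟨hy.2, subset_closure hy.1⟩

theorem good_closed {K : Set KK} (hK : IsClosed K) : GoodS K := by
  by_contra hbad
  obtain ⟨C, hC, ⟨x0, hx0⟩, hn⟩ := core hbad
  have hKC := hK.inter hC
  have hni := hn.noiso
  have h := hn univ isClopen_univ (by simpa using ⟨x0, hx0⟩)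
  rw [inter_univ] at h
  apply h
  apply good_of_hhom
  rw [hKC.closure_eq] at hni
  have hP : Pres (K ∩ C) (K ∩ C) (fun _ => ∅) True :=
    ⟨hKC, hni, fun _ _ _ => subset_rfl, fun _ => Nwd.empty _, subset_rfl, fun x hx _ => by
      simp only [hx]⟩
  refine hhom_of_emb hP subset_closure ?_
  intro O O' n hO hO' hrel hne
  have e : LU (fun _ => ∅) True (K ∩ C) O n = ∅ := by
    ext x
    simp only [LU, empty_inter, empty_union, mem_ofPred_eq, and_true, mem_empty_iff_false,
      iff_false, not_and, not_not]
    intro hx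
    refine hrel ⟨?_, hx⟩
    have := closure_mono (inter_subset_left (s := K ∩ C) (t := O)) hx
    rwa [hKC.closure_eq] at this
  rw [e]
  exact ⟨id, by simp, by simp, by simp [MapsTo], by simpa using Nwd.empty _, by simp⟩

/-- doubling map -/
def dbl (z : KK) : KK := fun n => if n % 2 = 0 then false else z (n / 2)

def odds (z : KK) : KK := fun n => z (2 * n + 1)

theorem odds_dbl (z : KK) : odds (dbl z) = z := by
  ext1 n
  simp only [odds, dbl]
  rw [if_neg (by omega), show (2 * n + 1) / 2 = n by omega]

theorem dbl_continuous : Continuous dbl := by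
  refine continuous_pi fun n => ?_
  simp only [dbl]
  split_ifs <;> fun_prop

theorem odds_continuous : Continuous odds := by
  refine continuous_pi fun n => ?_
  simp only [odds]
  fun_prop

theorem dbl_injective : Function.Injective dbl := fun x y h => by
  rw [← odds_dbl x, h, odds_dbl]

theorem nwd_dbl {K : Set KK} {j : KK → KK} (hj : Continuous j) (hi : Function.Injective j)
    (hr : ∀ z, j z ∈ K) : Nwd (range (j ∘ dbl)) K := by
  refine ⟨(isCompact_range (hj.comp dbl_continuous)).isClosed, ?_, ?_⟩
  · rintro _ ⟨z, rfl⟩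
    exact hr _
  · rintro W hW ⟨x, hx, hxK⟩
    by_cases hxr : x ∈ range (j ∘ dbl)
    · obtain ⟨z, rfl⟩ := hxr
      obtain ⟨_, ⟨y, n, rfl⟩, h1, h2⟩ :=
        (PiNat.isTopologicalBasis_cylinders (fun _ : ℕ => Bool)).exists_subset_of_mem_open
          (show dbl z ∈ j ⁻¹' W from hx) (hW.preimage hj)
      let w : KK := fun k => if k < n then dbl z k else true
      have hw : w ∈ PiNat.cylinder y n := by
        intro i hi
        simp only [w, if_pos hi]
        exact h1 i hi
      refine ⟨j w, h2 hw, hr _, ?_⟩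
      rintro ⟨u, hu⟩
      have h3 : dbl u = w := hi hu
      have h4 := congrFun h3 (2 * n)
      simp only [dbl, w] at h4
      rw [if_pos (by omega), if_neg (by omega)] at h4
      exact Bool.noConfusion h4
    · exact ⟨x, hx, hxK, hxr⟩

theorem KK_polish : PolishSpace KK := { }

theorem exists_cantor {X : Set KK} (hm : @MeasurableSet _ (borel KK) X) (hX : ¬ X.Countable) :
    ∃ j : KK → KK, Continuous j ∧ Function.Injective j ∧ ∀ z, j z ∈ X := by
  let _ : MeasurableSpace KK := borel KK
  have : BorelSpace KK := ⟨rfl⟩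
  have : PolishSpace KK := KK_polish
  obtain ⟨t', ht, hp, hcl, -⟩ := MeasurableSet.isClopenable hm
  obtain ⟨f, h1, h2, h3⟩ := @IsClosed.exists_nat_bool_injection_of_not_countable KK t' hp X hcl hX
  exact ⟨f, continuous_le_rng ht h2, h3, fun z => h1 ⟨z, rfl⟩⟩

end HH

namespace HH
open Set

theorem isGδ_borel {X : Set KK} (h : IsGδ X) : @MeasurableSet _ (borel KK) X := by
  let _ : MeasurableSpace KK := borel KK
  have : BorelSpace KK := ⟨rfl⟩
  exact h.measurableSet

theorem good_gdelta {X : Set KK} (hX : IsGδ X) : GoodS X := by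
  by_contra hbad
  obtain ⟨C, hC, hne0, hn⟩ := core hbad
  set Y := X ∩ C with hY
  have hYG : IsGδ Y := hX.inter hC.isGδ
  set K := closure Y with hK
  obtain ⟨V, hV, hb⟩ := clopen_basis
  obtain ⟨U, hU, hYU⟩ := isGδ_iff_eq_iInter_nat.1 hYG
  have hcan : ∀ m, ∃ j : KK → KK, (Y ∩ V m).Nonempty →
      Continuous j ∧ Function.Injective j ∧ ∀ z, j z ∈ Y ∩ V m := by
    intro m
    by_cases hm : (Y ∩ V m).Nonempty
    · obtain ⟨j, hj⟩ := exists_cantor (isGδ_borel (hYG.inter (hV m).2.isGδ))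
        (fun hc => hn _ (hV m) hm (good_of_countable_set hc))
      exact ⟨j, fun _ => hj⟩
    · exact ⟨id, fun hh => (hm hh).elim⟩
  choose j hj using hcan
  classical
  set D : ℕ → Set KK := fun m => if (Y ∩ V m).Nonempty then range (j m ∘ dbl) else ∅ with hD
  have D1 : ∀ m, D m ⊆ Y := by
    intro m
    simp only [hD]
    split_ifs with hm
    · rintro _ ⟨z, rfl⟩
      exact ((hj m hm).2.2 _).1
    · exact empty_subset _
  have D2 : ∀ m, Nwd (D m) K := by
    intro m
    simp only [hD]
    split_ifs with hm
    · exact nwd_dbl (hj m hm).1 (hj m hm).2.1 (fun z => subset_closure ((hj m hm).2.2 z).1)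
    · exact Nwd.empty _
  set F : ℕ → Set KK := fun m => K \ U m with hF
  have F1 : ∀ m, Nwd (F m) K := by
    intro m
    refine ⟨isClosed_closure.sdiff (hU m), sdiff_subset, fun W hW hne => ?_⟩
    obtain ⟨x, hx, hxY⟩ := meets_cl hW hne
    refine ⟨x, hx, subset_closure hxY, fun hh => hh.2 ?_⟩
    rw [hYU] at hxY
    exact mem_iInter.1 hxY m
  let L : ℕ → Set KK := fun n => Nat.rec (F 0 ∪ D 0) (fun k S => S ∪ (F (k + 1) ∪ D (k + 1))) n
  have L0 : L 0 = F 0 ∪ D 0 := rfl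
  have LS : ∀ n, L (n + 1) = L n ∪ (F (n + 1) ∪ D (n + 1)) := fun n => rfl
  have Lmono : Monotone L := monotone_nat_of_le_succ fun n => by
    rw [LS]
    exact subset_union_left
  have Lsub : ∀ n, F n ∪ D n ⊆ L n := by
    rintro (_ | n)
    · exact subset_rfl
    · rw [LS]
      exact subset_union_right
  have Lnwd : ∀ n, Nwd (L n) K := by
    intro n
    induction n with
    | zero => exact (F1 0).union (D2 0)
    | succ n ih => exact ih.union ((F1 _).union (D2 _))
  have Lmem : ∀ n x, x ∈ L n → ∃ m, x ∈ F m ∪ D m := by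
    intro n x hx
    induction n with
    | zero => exact ⟨0, hx⟩
    | succ n ih =>
      rw [LS] at hx
      rcases hx with hx | hx
      · exact ih hx
      · exact ⟨_, hx⟩
  set Y2 := Y \ ⋃ m, D m with hY2
  have LY2 : ∀ n x, x ∈ L n → x ∉ Y2 := by
    rintro n x hx ⟨h1, h2⟩
    obtain ⟨m, hm | hm⟩ := Lmem n x hx
    · rw [hYU] at h1
      exact hm.2 (mem_iInter.1 h1 m)
    · exact h2 (mem_iUnion.2 ⟨m, hm⟩)
  have hP : Pres K Y2 L True := by
    refine ⟨isClosed_closure, hn.noiso, Lmono, Lnwd, sdiff_subset.trans subset_closure, ?_⟩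
    intro x hx hxL
    simp only [iff_true]
    constructor
    · rw [hYU]
      refine mem_iInter.2 fun m => ?_
      by_contra hcon
      exact hxL m (Lsub m (Or.inl ⟨hx, hcon⟩))
    · rintro hxD
      obtain ⟨m, hm⟩ := mem_iUnion.1 hxD
      exact hxL m (Lsub m (Or.inr hm))
  have hd : K ⊆ closure Y2 := by
    refine closure_minimal ?_ isClosed_closure
    intro x hx
    rw [mem_closure_iff]
    intro W hW hxW
    by_contra hcon
    refine hn.open hW ⟨x, hx, hxW⟩ ?_
    refine good_closed_cover D (fun m => (D2 m).1) (fun m => ?_) ?_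
    · have : Y ∩ W ∩ D m = D m ∩ W := by
        ext y
        have := @D1 m y
        simp only [mem_inter_iff]
        tauto
      rw [this]
      exact (good_closed (D2 m).1).inter_open hW
    · have : (Y ∩ W) \ (⋃ n, D n) = ∅ := by
        ext y
        simp only [mem_empty_iff_false, iff_false]
        rintro ⟨⟨h1, h2⟩, h3⟩
        exact hcon ⟨y, h2, h1, h3⟩
      rw [this]
      exact good_empty
  have hh : HHom Y2 := by
    refine hhom_of_emb hP hd ?_
    rintro O O' n hO hO' hrel ⟨x, hxY, hxO⟩
    obtain ⟨m, hm1, hm2⟩ := hb O' hO' x hxO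
    have hm : (Y ∩ V m).Nonempty := ⟨x, hxY.1, hm1⟩
    have hDm : D m = range (j m ∘ dbl) := if_pos hm
    have hcl : IsClosed (LU L True Y2 O n) := ((hP.restr hd hO).nwd n).1
    have hcont : Continuous (j m ∘ dbl) := (hj m hm).1.comp dbl_continuous
    refine ⟨j m ∘ dbl, hcont.continuousOn, ((hj m hm).2.1.comp dbl_injective).injOn,
      fun z _ => ?_, ?_, ?_⟩
    · have := (hj m hm).2.2 (dbl z)
      exact ⟨hm2 this.2, subset_closure this.1⟩
    · have h2 := D2 m
      rw [hDm] at h2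
      exact h2.mono (hcl.isCompact.image hcont).isClosed (image_subset_range _ _)
    · intro z hz
      have h1 : z ∉ Y2 ∩ O := by
        rintro ⟨h1, h2⟩
        rcases hz with hz | hz
        · exact LY2 n z hz.1 h1
        · exact hz.2.1 h2
      have h2 : (j m ∘ dbl) z ∉ Y2 := by
        rintro ⟨-, h3⟩
        refine h3 (mem_iUnion.2 ⟨m, ?_⟩)
        rw [hDm]
        exact ⟨z, rfl⟩
      exact ⟨fun h => (h1 h).elim, fun h => (h2 h).elim⟩
  have : GoodS Y := by
    refine good_closed_cover D (fun m => (D2 m).1) (fun m => ?_) (good_of_hhom hh)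
    rw [inter_eq_right.2 (D1 m)]
    exact good_closed (D2 m).1
  have h3 := hn univ isClopen_univ (by simpa using hne0)
  rw [inter_univ] at h3
  exact h3 this

end HH

namespace HH
open Set

/-- a Borel set whose membership is flipped by each bit flip does not exist -/
theorem no_flip {S : Set KK} (hS : @MeasurableSet _ (borel KK) S)
    (hf : ∀ n z, Function.update z n (!z n) ∈ S ↔ z ∉ S) : False := by
  let _ : MeasurableSpace KK := borel KK
  have : BorelSpace KK := ⟨rfl⟩
  obtain ⟨U, hU, he⟩ := MeasurableSet.residualEq_isOpen hS
  have he1 : {z | z ∈ S ↔ z ∈ U} ∈ residual KK := by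
    have := he.mem_iff
    exact this
  have hfl : ∀ n, {z : KK | z ∈ S ↔ Function.update z n (!z n) ∉ U} ∈ residual KK := by
    intro n
    let φ : KK → KK := fun z => Function.update z n (!z n)
    have c : Continuous φ := by
      refine continuous_id.update n ?_
      exact (continuous_of_discreteTopology (f := Bool.not)).comp (continuous_apply n)
    have inv : ∀ z, φ (φ z) = z := by
      intro z
      simp [φ]
    let Φ : KK ≃ₜ KK := ⟨⟨φ, φ, inv, inv⟩, c, c⟩
    have h2 := Filter.mem_map.1 (Φ.residual_map_eq.symm ▸ he1 : _ ∈ (residual KK).map Φ)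
    filter_upwards [h2] with z hz
    have h3 := hf n z
    have h4 : Function.update z n (!z n) ∈ S ↔ Function.update z n (!z n) ∈ U := hz
    tauto
  by_cases hne : U.Nonempty
  · obtain ⟨x, hx⟩ := hne
    obtain ⟨_, ⟨y, n, rfl⟩, h1, h2⟩ :=
      (PiNat.isTopologicalBasis_cylinders (fun _ : ℕ => Bool)).exists_subset_of_mem_open hx hU
    have hd := dense_of_mem_residual (Filter.inter_mem he1 (hfl n))
    obtain ⟨z, hz1, hz2, hz3⟩ := hd.inter_open_nonempty _ (PiNat.isOpen_cylinder _ y n) ⟨x, h1⟩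
    have h4 : Function.update z n (!z n) ∈ U := by
      apply h2
      intro i hi
      rw [Function.update_of_ne (by omega)]
      exact hz1 i hi
    exact hz3.1 (hz2.2 (h2 hz1)) h4
  · have hd := dense_of_mem_residual (Filter.inter_mem he1 (hfl 0))
    obtain ⟨z, hz2, hz3⟩ := hd.nonempty
    rw [not_nonempty_iff_eq_empty] at hne
    simp only [hne, mem_ofPred_eq, mem_empty_iff_false, iff_false, not_false_eq_true,
      iff_true] at hz2 hz3
    exact hz2 hz3

section MM
open Filter Topology
variable {Y : ℕ → Type} [∀ n, MetricSpace (Y n)] [∀ n, CompleteSpace (Y n)]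
  [hne : ∀ n, Nonempty (Y n)]
  (a b : ∀ n, Y (n + 1) → Y n)

def cmap (z : KK) (n : ℕ) : Y (n + 1) → Y n := fun y => if z n then b n y else a n y

noncomputable def uu (z : KK) : ℕ → ∀ n, Y n
  | 0, n => Classical.choice (hne n)
  | k + 1, n => cmap a b z n (uu z k (n + 1))

variable {a b}

theorem mm (ha : ∀ n x y, dist (a n x) (a n y) ≤ dist x y)
    (hb : ∀ n x y, dist (b n x) (b n y) ≤ dist x y)
    (hd : ∀ n (x y : Y n), dist x y ≤ 1 * (1 / 2 : ℝ) ^ n)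
    (X : ∀ n, Set (Y n)) (hX : @MeasurableSet _ (borel (Y 0)) (X 0))
    (hXa : ∀ n x, x ∈ X (n + 1) ↔ a n x ∈ X n)
    (hXb : ∀ n x, x ∈ X (n + 1) ↔ b n x ∉ X n) : False := by
  have hc : ∀ z n x y, dist (cmap a b z n x) (cmap a b z n y) ≤ dist x y := by
    intro z n x y
    unfold cmap
    split_ifs
    · exact hb n x y
    · exact ha n x y
  have hcc : ∀ z n, Continuous (cmap a b z n) := by
    intro z n
    exact (LipschitzWith.of_dist_le_mul (K := 1) (by simpa using hc z n)).continuous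
  have hu : ∀ z k n, dist (uu a b z k n) (uu a b z (k + 1) n) ≤ 1 * (1 / 2 : ℝ) ^ (n + k) := by
    intro z k
    induction k with
    | zero => exact fun n => hd n _ _
    | succ k ih =>
      intro n
      refine (hc z n _ _).trans ((ih (n + 1)).trans (le_of_eq ?_))
      congr 2
      omega
  have hcau : ∀ z n, CauchySeq (fun k => uu a b z k n) := by
    intro z n
    refine cauchySeq_of_le_geometric (1 / 2) ((1 / 2) ^ n) (by norm_num) ?_
    intro k
    have := hu z k n
    rwa [one_mul, pow_add] at this
  choose x hx using fun z n => cauchySeq_tendsto_of_complete (hcau z n)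
  have xc : ∀ z n, x z n = cmap a b z n (x z (n + 1)) := by
    intro z n
    have h1 := (tendsto_add_atTop_iff_nat 1).2 (hx z n)
    have h2 := ((hcc z n).tendsto _).comp (hx z (n + 1))
    exact tendsto_nhds_unique h1 h2
  have uloc : ∀ z z' k n, (∀ i ≥ n, z i = z' i) → uu a b z k n = uu a b z' k n := by
    intro z z' k
    induction k with
    | zero => intros; rfl
    | succ k ih =>
      intro n h
      simp only [uu]
      rw [ih (n + 1) (fun i hi => h i (by omega))]
      unfold cmap
      rw [h n le_rfl]
  have xloc : ∀ z z' n, (∀ i ≥ n, z i = z' i) → x z n = x z' n := by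
    intro z z' n h
    have h1 := hx z n
    simp only [fun k => uloc z z' k n h] at h1
    exact tendsto_nhds_unique h1 (hx z' n)
  have xdist : ∀ z z' k n, (∀ i, n ≤ i → i < n + k → z i = z' i) →
      dist (x z n) (x z' n) ≤ 1 * (1 / 2 : ℝ) ^ (n + k) := by
    intro z z' k
    induction k with
    | zero => exact fun n _ => hd n _ _
    | succ k ih =>
      intro n h
      rw [xc z, xc z']
      have e : cmap a b z n = cmap a b z' n := by
        unfold cmap
        rw [h n le_rfl (by omega)]
      rw [e]
      refine (hc _ _ _ _).trans ((ih (n + 1) (fun i h1 h2 => h i (by omega) (by omega))).trans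
        (le_of_eq ?_))
      congr 2
      omega
  have xcont : Continuous (fun z => x z 0) := by
    rw [Metric.continuous_iff']
    intro z ε hε
    obtain ⟨k, hk⟩ := exists_pow_lt_of_lt_one hε (by norm_num : (1 / 2 : ℝ) < 1)
    filter_upwards [(PiNat.isOpen_cylinder (fun _ : ℕ => Bool) z k).mem_nhds
      (PiNat.self_mem_cylinder z k)] with z' hz'
    refine lt_of_le_of_lt (xdist z' z k 0 (fun i _ h => hz' i (by omega))) ?_
    simpa using hk
  refine no_flip (S := (fun z => x z 0) ⁻¹' X 0) ?_ ?_
  · let _ : MeasurableSpace KK := borel KK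
    have : BorelSpace KK := ⟨rfl⟩
    let _ : MeasurableSpace (Y 0) := borel (Y 0)
    have : BorelSpace (Y 0) := ⟨rfl⟩
    exact xcont.measurable hX
  · intro n z
    set z' := Function.update z n (!z n) with hz'
    have key : ∀ k m, m + k = n → (x z' m ∈ X m ↔ x z m ∉ X m) := by
      intro k
      induction k with
      | zero =>
        intro m hm
        have hmn : m = n := hm
        subst hmn
        have e : x z' (m + 1) = x z (m + 1) := by
          apply xloc
          intro i hi
          rw [hz', Function.update_of_ne (by omega)]
        rw [xc z', xc z, e]
        have h1 := hXa m (x z (m + 1))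
        have h2 := hXb m (x z (m + 1))
        have h3 : z' m = !z m := by simp [hz']
        unfold cmap
        rw [h3]
        cases z m <;> simp <;> tauto
      | succ k ih =>
        intro m hm
        have h0 := ih (m + 1) (by omega)
        have h3 : z' m = z m := by rw [hz', Function.update_of_ne (by omega)]
        rw [xc z', xc z]
        have h1 := hXa m (x z (m + 1))
        have h2 := hXb m (x z (m + 1))
        have h1' := hXa m (x z' (m + 1))
        have h2' := hXb m (x z' (m + 1))
        unfold cmap
        rw [h3]
        cases z m <;> simp <;> tauto
    exact key n 0 (by omega)

end MM
end HH

namespace HH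
open Set Topology

def BorelS {P : Type*} [TopologicalSpace P] (X : Set P) : Prop := @MeasurableSet P (borel P) X

/-- bad pairs -/
def Bad (P X : Set KK) : Prop := IsGδ P ∧ BorelS X ∧ ¬ GoodS (X ∩ P)

def Red {S : Type*} [TopologicalSpace S] (P X : Set S) (P' X' : Set KK) : Prop :=
  ∃ f : S → KK, ContinuousOn f P ∧ MapsTo f P P' ∧ ∀ x ∈ P, (x ∈ X ↔ f x ∈ X')

theorem polish_of_gdelta {P : Set KK} (hP : IsGδ P) : PolishSpace P := by
  obtain ⟨U, hU, e⟩ := isGδ_iff_eq_iInter_nat.1 hP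
  have : PolishSpace KK := KK_polish
  have hU' : ∀ n, PolishSpace (U n) := fun n => (hU n).polishSpace
  have hpi : PolishSpace (∀ n, U n) := { }
  let g : P → ∀ n, U n := fun x n => ⟨x.1, by
    have := e.subset x.2
    exact mem_iInter.1 this n⟩
  have gc : Continuous g := continuous_pi fun n => by
    exact continuous_subtype_val.subtype_mk _
  have h1 : Continuous (fun y : ∀ n, U n => (y 0 : KK)) :=
    continuous_subtype_val.comp (continuous_apply 0)
  have ge : IsEmbedding g := IsEmbedding.of_comp gc h1 IsEmbedding.subtypeVal
  have gr : range g = ⋂ n, {y : ∀ n, U n | (y n : KK) = y 0} := by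
    ext y
    rw [mem_iInter]
    constructor
    · rintro ⟨x, rfl⟩ n
      rfl
    · intro h
      refine ⟨⟨y 0, ?_⟩, ?_⟩
      · rw [e, mem_iInter]
        intro n
        have : (y n : KK) = y 0 := h n
        rw [← this]
        exact (y n).2
      · funext n
        exact Subtype.ext (h n).symm
  refine IsClosedEmbedding.polishSpace (f := g) ⟨ge, ?_⟩
  rw [gr]
  exact isClosed_iInter fun n =>
    isClosed_eq (continuous_subtype_val.comp (continuous_apply n)) h1

theorem core_point {X : Set KK} (hX : ¬ GoodS X) : ∃ x ∈ X, ∀ V, IsClopen V → x ∈ V →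
    ¬ GoodS (X ∩ V) := by
  by_contra hcon
  push Not at hcon
  apply hX
  obtain ⟨V, hV, hb⟩ := clopen_basis
  classical
  refine good_inter_open_cover (fun n => if GoodS (X ∩ V n) then V n else ∅) ?_ ?_ ?_
  · intro n
    split_ifs
    · exact hV n
    · exact isClopen_empty
  · intro x hx
    obtain ⟨W, hW, hxW, hg⟩ := hcon x hx
    obtain ⟨n, h1, h2⟩ := hb W hW.2 x hxW
    refine mem_iUnion.2 ⟨n, ?_⟩
    have h3 := hg.inter_clopen (hV n)
    rw [inter_assoc, inter_eq_right.2 h2] at h3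
    rwa [if_pos h3]
  · intro n
    split_ifs with h
    · exact h
    · simpa using good_empty

theorem gdelta_metric {P : Set KK} (hP : IsGδ P) : ∃ (Q : Type) (_ : MetricSpace Q)
    (_ : CompleteSpace Q) (i : Q → KK), IsEmbedding i ∧ range i = P := by
  have : PolishSpace P := polish_of_gdelta hP
  let u := TopologicalSpace.upgradeIsCompletelyMetrizable P
  exact ⟨P, u.toMetricSpace, u.toCompleteSpace, Subtype.val, IsEmbedding.subtypeVal,
    Subtype.range_val⟩

structure St where
  T : Type
  met : MetricSpace T
  com : CompleteSpace T
  emb : T → KK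
  isEmb : IsEmbedding emb
  X : Set KK
  bad : Bad (range emb) X

attribute [instance] St.met St.com

theorem St.next (hyp : ∀ P X, Bad P X → ∃ P' X', Bad P' X' ∧ Red P' X' P X ∧ Red P' X'ᶜ P X)
    (S : St) (n : ℕ) : ∃ (S' : St) (a b : S'.T → S.T),
      (∀ x y, dist (a x) (a y) ≤ dist x y) ∧ (∀ x y, dist (b x) (b y) ≤ dist x y) ∧
      (∀ x y : S'.T, dist x y ≤ 1 * (1 / 2 : ℝ) ^ n) ∧
      (∀ x, S'.emb x ∈ S'.X ↔ S.emb (a x) ∈ S.X) ∧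
      (∀ x, S'.emb x ∈ S'.X ↔ S.emb (b x) ∉ S.X) := by
  obtain ⟨P', X', ⟨hG, hB, hbad⟩, ⟨f, f1, f2, f3⟩, ⟨g, g1, g2, g3⟩⟩ := hyp _ _ S.bad
  obtain ⟨Q, _, _, ι, hι, hιr⟩ := gdelta_metric hG
  have hιP : ∀ q, ι q ∈ P' := fun q => hιr ▸ mem_range_self q
  let Φ := S.isEmb.toHomeomorph
  let α : Q → S.T := fun q => Φ.symm ⟨f (ι q), f2 (hιP q)⟩
  let β : Q → S.T := fun q => Φ.symm ⟨g (ι q), g2 (hιP q)⟩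
  have eα : ∀ q, S.emb (α q) = f (ι q) := fun q => by
    have := congrArg Subtype.val (Φ.apply_symm_apply ⟨f (ι q), f2 (hιP q)⟩)
    exact this
  have eβ : ∀ q, S.emb (β q) = g (ι q) := fun q => by
    have := congrArg Subtype.val (Φ.apply_symm_apply ⟨g (ι q), g2 (hιP q)⟩)
    exact this
  have cα : Continuous α := Φ.symm.continuous.comp
    (Continuous.subtype_mk (f1.comp_continuous hι.continuous hιP) _)
  have cβ : Continuous β := Φ.symm.continuous.comp
    (Continuous.subtype_mk (g1.comp_continuous hι.continuous hιP) _)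
  have cι : Continuous ι := hι.continuous
  let σ : Q → Q × S.T × S.T := fun q => (q, α q, β q)
  have cσ : Continuous σ := continuous_id.prodMk (cα.prodMk cβ)
  obtain ⟨x0, hx0, hx0V⟩ := core_point hbad
  obtain ⟨q0, hq0x⟩ : ∃ q0, ι q0 = x0 := by
    have := hιr.superset hx0.2
    exact this
  have hop : IsOpen (σ ⁻¹' Metric.ball (σ q0) ((1 / 2 : ℝ) ^ (n + 1))) :=
    Metric.isOpen_ball.preimage cσ
  obtain ⟨W, hW, eW⟩ := hι.isInducing.isOpen_iff.1 hop
  have hq0 : q0 ∈ (ι ⁻¹' W : Set Q) := by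
    rw [eW]
    exact Metric.mem_ball_self (by positivity)
  obtain ⟨V, hV, hb⟩ := clopen_basis
  obtain ⟨k, hk1, hk2⟩ := hb W hW x0 (hq0x ▸ hq0)
  let G : Set (Q × S.T × S.T) := {p | p.2.1 = α p.1 ∧ p.2.2 = β p.1 ∧ ι p.1 ∈ V k}
  have hGc : IsClosed G := by
    refine (isClosed_eq (by fun_prop) (by fun_prop)).inter
      ((isClosed_eq (by fun_prop) (by fun_prop)).inter ?_)
    exact (hV k).1.preimage (by fun_prop)
  have ccG : CompleteSpace G := hGc.completeSpace_coe
  have hσG : ∀ p ∈ G, p = σ p.1 := by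
    rintro ⟨q, s, t⟩ ⟨h1, h2, h3⟩
    simp only at h1 h2
    simp only [σ, h1, h2]
  have he : IsEmbedding (fun p : G => ι p.1.1) := by
    have h1 : IsEmbedding (fun p : G => p.1.1) := by
      refine IsEmbedding.of_comp (by fun_prop) cσ ?_
      have : σ ∘ (fun p : G => p.1.1) = Subtype.val := by
        funext p
        exact (hσG p.1 p.2).symm
      rw [this]
      exact IsEmbedding.subtypeVal
    exact hι.comp h1
  have hr : range (fun p : G => ι p.1.1) = P' ∩ V k := by
    ext x
    constructor
    · rintro ⟨p, rfl⟩
      exact ⟨hιP _, p.2.2.2⟩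
    · rintro ⟨h1, h2⟩
      obtain ⟨q, rfl⟩ : x ∈ range ι := hιr.superset h1
      exact ⟨⟨σ q, rfl, rfl, h2⟩, rfl⟩
  refine ⟨⟨G, inferInstance, ccG, fun p => ι p.1.1, he, X', ?_⟩, fun p => p.1.2.1,
    fun p => p.1.2.2, ?_, ?_, ?_, ?_, ?_⟩
  · rw [hr]
    refine ⟨hG.inter (hV k).2.isGδ, hB, ?_⟩
    rw [← inter_assoc]
    exact hx0V _ (hV k) hk1
  · intro x y
    exact (le_max_left _ _).trans (le_max_right _ _)
  · intro x y
    exact (le_max_right _ _).trans (le_max_right _ _)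
  · have hball : ∀ p : G, dist p.1 (σ q0) < (1 / 2 : ℝ) ^ (n + 1) := by
      intro p
      have h1 : p.1.1 ∈ (ι ⁻¹' W : Set Q) := hk2 p.2.2.2
      rw [eW] at h1
      have h2 : dist (σ p.1.1) (σ q0) < (1 / 2 : ℝ) ^ (n + 1) := h1
      rwa [← hσG p.1 p.2] at h2
    intro x y
    have h3 := dist_triangle_right x.1 y.1 (σ q0)
    have h1 := hball x
    have h2 := hball y
    have h4 : dist x y = dist x.1 y.1 := rfl
    rw [pow_succ] at h1 h2
    rw [h4]
    linarith
  · intro p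
    have h1 := p.2.1
    simp only [h1, eα]
    exact f3 _ (hιP _)
  · intro p
    have h1 := p.2.2.1
    have h2 := g3 _ (hιP p.1.1)
    simp only [h1, eβ]
    rw [← h2]
    simp

theorem exists_min {P X : Set KK} (h0 : Bad P X) :
    ∃ P X, Bad P X ∧ ∀ P' X', Bad P' X' → Red P' X' P X → Red P' X'ᶜ P X → False := by
  by_contra hcon
  push Not at hcon
  have hyp : ∀ P X, Bad P X → ∃ P' X', Bad P' X' ∧ Red P' X' P X ∧ Red P' X'ᶜ P X := by
    intro P X h
    obtain ⟨P', X', h1, h2, h3, -⟩ := hcon P X h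
    exact ⟨P', X', h1, h2, h3⟩
  choose nx a b ha hb hd hXa hXb using St.next hyp
  have : PolishSpace P := polish_of_gdelta h0.1
  let u := TopologicalSpace.upgradeIsCompletelyMetrizable P
  let S0 : St := ⟨P, u.toMetricSpace, u.toCompleteSpace, Subtype.val, IsEmbedding.subtypeVal, X,
    by rw [Subtype.range_val]; exact h0⟩
  let s : ℕ → St := fun n => Nat.rec S0 (fun k S => nx S k) n
  have hne : ∀ n, Nonempty (s (n + 1)).T := by
    intro n
    by_contra hno
    have h1 := (s (n + 1)).bad.2.2
    have h2 : range (s (n + 1)).emb = ∅ := by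
      rw [not_nonempty_iff] at hno
      exact range_eq_empty _
    rw [h2, inter_empty] at h1
    exact h1 good_empty
  refine mm (Y := fun n => (s (n + 1)).T) (a := fun n => a (s (n + 1)) (n + 1))
    (b := fun n => b (s (n + 1)) (n + 1)) (fun n => ha _ _) (fun n => hb _ _)
    (fun n => hd (s n) n) (fun n => (s (n + 1)).emb ⁻¹' (s (n + 1)).X) ?_ (fun n => hXa _ _)
    (fun n => hXb _ _)
  let _ : MeasurableSpace KK := borel KK
  have : BorelSpace KK := ⟨rfl⟩
  let _ : MeasurableSpace (s (0 + 1)).T := borel (s (0 + 1)).T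
  have : BorelSpace (s (0 + 1)).T := ⟨rfl⟩
  exact (s (0 + 1)).isEmb.continuous.measurable (s (0 + 1)).bad.2.1

end HH

namespace HH
open Set Topology

section below
variable {Q Q' : Type} [TopologicalSpace Q] [TopologicalSpace Q']

def RB (P0 X0 : Set KK) (E A : Set Q) : Prop :=
  ∃ (ι : Type) (_ : Countable ι) (D : ι → Set Q), (∀ i, IsGδ (D i)) ∧
    (∀ i j, i ≠ j → Disjoint (E ∩ D i) (E ∩ D j)) ∧ E ⊆ ⋃ i, D i ∧
    ∀ i, Red (E ∩ D i) A P0 X0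

theorem Red.mono {P0 X0 : Set KK} {E E' A : Set Q} (h : Red E A P0 X0) (hs : E' ⊆ E) :
    Red E' A P0 X0 := by
  obtain ⟨f, f1, f2, f3⟩ := h
  exact ⟨f, f1.mono hs, f2.mono_left hs, fun x hx => f3 x (hs hx)⟩

theorem Red.rb {P0 X0 : Set KK} {E A : Set Q} (h : Red E A P0 X0) : RB P0 X0 E A := by
  refine ⟨Unit, inferInstance, fun _ => univ, fun _ => IsGδ.univ, ?_, ?_, ?_⟩
  · intro i j hij
    exact (hij rfl).elim
  · intro x _
    exact mem_iUnion.2 ⟨(), trivial⟩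
  · intro _
    exact h.mono inter_subset_left

theorem rb_glue {P0 X0 : Set KK} {E A : Set Q} {ι : Type} [Countable ι] (D : ι → Set Q)
    (hD : ∀ i, IsGδ (D i)) (hd : ∀ i j, i ≠ j → Disjoint (E ∩ D i) (E ∩ D j))
    (hE : E ⊆ ⋃ i, D i) (h : ∀ i, RB P0 X0 (E ∩ D i) A) : RB P0 X0 E A := by
  choose κ hκ F F1 F2 F3 F4 using h
  refine ⟨Σ i, κ i, inferInstance, fun p => D p.1 ∩ F p.1 p.2, ?_, ?_, ?_, ?_⟩
  · intro p
    exact (hD _).inter (F1 _ _)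
  · rintro ⟨i, k⟩ ⟨j, l⟩ hne
    by_cases hij : i = j
    · subst hij
      have : k ≠ l := fun h => hne (by rw [h])
      have h1 := F2 i k l this
      simpa only [inter_assoc] using h1
    · exact (hd i j hij).mono (inter_subset_inter_right _ inter_subset_left)
        (inter_subset_inter_right _ inter_subset_left)
  · intro x hx
    obtain ⟨i, hi⟩ := mem_iUnion.1 (hE hx)
    obtain ⟨k, hk⟩ := mem_iUnion.1 (F3 i ⟨hx, hi⟩)
    exact mem_iUnion.2 ⟨⟨i, k⟩, hi, hk⟩
  · rintro ⟨i, k⟩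
    have := F4 i k
    rwa [inter_assoc] at this

theorem gdelta_preimage {f : Q → Q'} {E : Set Q} (hf : ContinuousOn f E) (hE : IsGδ E)
    {D : Set Q'} (hD : IsGδ D) : IsGδ (E ∩ f ⁻¹' D) := by
  obtain ⟨U, hU, rfl⟩ := isGδ_iff_eq_iInter_nat.1 hD
  choose V hV hVU using fun n => continuousOn_iff'.1 hf (U n) (hU n)
  have : E ∩ f ⁻¹' (⋂ n, U n) = E ∩ ⋂ n, V n := by
    ext x
    simp only [mem_inter_iff, mem_preimage, mem_iInter]
    refine and_congr_right fun hx => forall_congr' fun n => ?_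
    have := Set.ext_iff.1 (hVU n) x
    simp only [mem_inter_iff, mem_preimage] at this
    tauto
  rw [this]
  exact hE.inter (IsGδ.iInter_of_isOpen hV)

theorem RB.preimage {P0 X0 : Set KK} {E A : Set Q} {E' A' : Set Q'} (h : RB P0 X0 E' A')
    (hE : IsGδ E) {f : Q → Q'} (hf : ContinuousOn f E) (hm : MapsTo f E E')
    (hA : ∀ x ∈ E, (x ∈ A ↔ f x ∈ A')) : RB P0 X0 E A := by
  obtain ⟨ι, hι, D, D1, D2, D3, D4⟩ := h
  refine ⟨ι, hι, fun i => E ∩ f ⁻¹' D i, fun i => gdelta_preimage hf hE (D1 i), ?_, ?_, ?_⟩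
  · intro i j hij
    rw [Set.disjoint_left]
    rintro x ⟨hx, -, h1⟩ ⟨-, -, h2⟩
    exact Set.disjoint_left.1 (D2 i j hij) ⟨hm hx, h1⟩ ⟨hm hx, h2⟩
  · intro x hx
    obtain ⟨i, hi⟩ := mem_iUnion.1 (D3 (hm hx))
    exact mem_iUnion.2 ⟨i, hx, hi⟩
  · intro i
    obtain ⟨g, g1, g2, g3⟩ := D4 i
    have hmm : MapsTo f (E ∩ (E ∩ f ⁻¹' D i)) (E' ∩ D i) := by
      rintro x ⟨hx, -, h1⟩
      exact ⟨hm hx, h1⟩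
    refine ⟨g ∘ f, g1.comp (hf.mono inter_subset_left) hmm, g2.comp hmm, ?_⟩
    intro x hx
    rw [hA x hx.1, g3 _ (hmm hx)]
    rfl

/-- a Gδ set together with a canonical partition of the complement -/
theorem rb_gdelta_split {P0 X0 : Set KK} {E A : Set Q}
    (hc : ∀ C : Set Q, IsClosed C → IsGδ C)
    (hE : IsGδ E) (h1 : RB P0 X0 E A) (h2 : ∀ D : Set Q, D ⊆ Eᶜ → RB P0 X0 D A) :
    RB P0 X0 univ A := by
  obtain ⟨U, hU, e⟩ := isGδ_iff_eq_iInter_nat.1 hE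
  have ho : ∀ n, IsOpen (⋂ i < n, U i) := fun n =>
    (finite_lt_nat n).isOpen_biInter (fun i _ => hU i)
  have hcl : ∀ n, IsGδ ((U n)ᶜ) := fun n => hc _ (hU n).isClosed_compl
  · refine rb_glue (ι := Option ℕ)
      (fun o => match o with | none => E | some n => (U n)ᶜ ∩ ⋂ i < n, U i) ?_ ?_ ?_ ?_
    · rintro (_ | n)
      · exact hE
      · exact (hcl n).inter (ho n).isGδ
    · have key : ∀ m n : ℕ, m < n → ∀ x, x ∈ (U m)ᶜ → x ∈ (⋂ i < n, U i) → False := by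
        intro m n hmn x h h'
        simp only [mem_iInter] at h'
        exact h (h' m hmn)
      have key2 : ∀ n x, x ∈ E → x ∈ (U n)ᶜ → False := by
        intro n x h h'
        rw [e, mem_iInter] at h
        exact h' (h n)
      rintro (_ | m) (_ | n) hne <;> rw [Set.disjoint_left]
      · exact (hne rfl).elim
      · rintro x ⟨-, h⟩ ⟨-, h', -⟩
        exact key2 n x h h'
      · rintro x ⟨-, h', -⟩ ⟨-, h⟩
        exact key2 m x h h'
      · rintro x ⟨-, h, h'⟩ ⟨-, k, k'⟩
        rcases lt_trichotomy m n with hmn | hmn | hmn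
        · exact key m n hmn x h k'
        · exact hne (by rw [hmn])
        · exact key n m hmn x k h'
    · intro x _
      by_cases hx : x ∈ E
      · exact mem_iUnion.2 ⟨none, hx⟩
      · have hx' : ∃ n, x ∉ U n := by
          by_contra hcon
          push Not at hcon
          exact hx (by rw [e, mem_iInter]; exact hcon)
        classical
        refine mem_iUnion.2 ⟨some (Nat.find hx'), Nat.find_spec hx', ?_⟩
        simp only [mem_iInter]
        intro i hi
        by_contra hcon
        exact Nat.find_min hx' hi hcon
    · rintro (_ | n)
      · rwa [univ_inter]
      · refine h2 _ ?_
        rintro x ⟨-, h, -⟩ h'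
        rw [e, mem_iInter] at h'
        exact h (h' n)

end below

structure Mn (P0 X0 : Set KK) : Prop where
  bad : Bad P0 X0
  min : ∀ P' X', Bad P' X' → Red P' X' P0 X0 → Red P' X'ᶜ P0 X0 → False

theorem Mn.const {P0 X0 : Set KK} (h : Mn P0 X0) {Q : Type} [TopologicalSpace Q] {E A : Set Q}
    (hA : (∀ x ∈ E, x ∈ A) ∨ (∀ x ∈ E, x ∉ A)) : Red E A P0 X0 := by
  obtain ⟨hG, -, hb⟩ := h.bad
  rcases hA with hA | hA
  · have : (X0 ∩ P0).Nonempty := by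
      by_contra hcon
      rw [not_nonempty_iff_eq_empty] at hcon
      rw [hcon] at hb
      exact hb good_empty
    obtain ⟨p, h1, h2⟩ := this
    refine ⟨fun _ => p, continuousOn_const, fun _ _ => h2, fun x hx => ?_⟩
    simp only [h1, hA x hx]
  · have : ∃ p ∈ P0, p ∉ X0 := by
      by_contra hcon
      push Not at hcon
      have e : X0 ∩ P0 = P0 := inter_eq_right.2 hcon
      rw [e] at hb
      exact hb (good_gdelta hG)
    obtain ⟨p, h1, h2⟩ := this
    refine ⟨fun _ => p, continuousOn_const, fun _ _ => h1, fun x hx => ?_⟩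
    simp only [h2, hA x hx]

theorem key_lemma {P0 X0 : Set KK} (h : Mn P0 X0) {M : Type} [TopologicalSpace M]
    [DiscreteTopology M] [Inhabited M] {A : Set (ℕ → M)} (hA : BorelS A)
    (hAb : RB P0 X0 univ A) {X' : Set KK} (hX : BorelS X') (hXb : RB P0 X0 univ X')
    {T : Set KK} (hT : IsClosed T) (hbad : ¬ GoodS (X' ∩ T)) :
    ∃ f : (ℕ → M) → KK, Continuous f ∧ (∀ z, f z ∈ T) ∧ f ⁻¹' X' = A := by
  have hTn : T.Nonempty := by
    by_contra hcon
    rw [not_nonempty_iff_eq_empty] at hcon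
    rw [hcon, inter_empty] at hbad
    exact hbad good_empty
  obtain ⟨ρ, ρ1, ρ2, ρ3⟩ := PiNat.exists_retraction_of_isClosed hT hTn
  have hρT : ∀ z, ρ z ∈ T := fun z => ρ2 ▸ mem_range_self z
  have hB : BorelS (ρ ⁻¹' X') := by
    let _ : MeasurableSpace KK := borel KK
    have : BorelSpace KK := ⟨rfl⟩
    exact ρ3.measurable hX
  rcases BD.wadge hA hB with ⟨f, f1, f2⟩ | ⟨g, g1, g2⟩
  · exact ⟨ρ ∘ f, ρ3.comp f1, fun z => hρT _, f2⟩
  · exfalso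
    obtain ⟨ι, hι, D, D1, D2, D3, D4⟩ := hAb
    obtain ⟨κ, hκ, F, F1, F2, F3, F4⟩ := hXb
    simp only [univ_inter] at D2 D4 F2 F4
    have hRG : ∀ p : ι × κ, IsGδ (F p.2 ∩ (g ⁻¹' D p.1 ∩ T)) := fun p =>
      (F1 _).inter (((D1 _).preimage g1).inter hT.isGδ)
    apply hbad
    refine good_iUnion (ι := ι × κ) (fun p => F p.2 ∩ (g ⁻¹' D p.1 ∩ T)) hRG ?_ ?_ ?_
    · rintro ⟨i, k⟩ ⟨j, l⟩ hne
      rw [Set.disjoint_left]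
      rintro x ⟨-, h1, h2, -⟩ ⟨-, h3, h4, -⟩
      by_cases hij : i = j
      · subst hij
        have hkl : k ≠ l := fun h => hne (by rw [h])
        exact Set.disjoint_left.1 (F2 k l hkl) h1 h3
      · exact Set.disjoint_left.1 (D2 i j hij) h2 h4
    · rintro x ⟨-, hx⟩
      obtain ⟨k, hk⟩ := mem_iUnion.1 (F3 (mem_univ x))
      obtain ⟨i, hi⟩ := mem_iUnion.1 (D3 (mem_univ (g x)))
      exact mem_iUnion.2 ⟨(i, k), hk, hi, hx⟩
    · rintro ⟨i, k⟩
      by_contra hng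
      have e : X' ∩ T ∩ (F k ∩ (g ⁻¹' D i ∩ T)) = X' ∩ (F k ∩ (g ⁻¹' D i ∩ T)) := by
        ext x
        simp only [mem_inter_iff]
        tauto
      simp only [e] at hng
      refine h.min _ _ ⟨hRG (i, k), hX, hng⟩ ((F4 k).mono inter_subset_left) ?_
      obtain ⟨f, f1, f2, f3⟩ := D4 i
      have hm : MapsTo g (F k ∩ (g ⁻¹' D i ∩ T)) (D i) := fun x hx => hx.2.1
      refine ⟨f ∘ g, f1.comp g1.continuousOn hm, f2.comp hm, ?_⟩
      intro x hx
      have h1 := f3 _ (hm hx)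
      have h2 := Set.ext_iff.1 g2 x
      simp only [mem_preimage, mem_compl_iff, ρ1 x hx.2.2] at h2
      simp only [mem_compl_iff, Function.comp]
      rw [← h1, h2]

end HH

namespace HH
open Set Topology

abbrev MM := ℕ × Bool

def EmitAll : Set (ℕ → MM) := {z | ∀ k, ∃ n, (z n).1 = k + 1}

def Idle : Set (ℕ → MM) := {z | ∃ N, ∀ n ≥ N, z n = (0, true)}

open Classical in
noncomputable def psi (z : ℕ → MM) : KK := fun k =>
  if h : ∃ n, (z n).1 = k + 1 then (z (Nat.find h)).2 else false

theorem emitAll_gdelta : IsGδ EmitAll := by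
  have : EmitAll = ⋂ k : ℕ, {z : ℕ → MM | ∃ n, (z n).1 = k + 1} := by
    ext z
    simp [EmitAll]
  rw [this]
  refine IsGδ.iInter_of_isOpen fun k => ?_
  have e : {z : ℕ → MM | ∃ n, (z n).1 = k + 1} = ⋃ n, (fun z : ℕ → MM => z n) ⁻¹' {a | a.1 = k + 1} := by
    ext z
    simp
  rw [e]
  exact isOpen_iUnion fun n => (isOpen_discrete _).preimage (continuous_apply n)

theorem psi_cont : ContinuousOn psi EmitAll := by
  classical
  refine continuousOn_pi.2 fun k => ?_
  intro z hz
  refine ContinuousAt.continuousWithinAt ?_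
  have hk := hz k
  have : ∀ᶠ y in nhds z, ∀ j ∈ Set.Iic (Nat.find hk), y j = z j := by
    rw [Filter.eventually_all_finite (finite_Iic _)]
    intro j _
    have h1 : IsOpen ((fun y : ℕ → MM => y j) ⁻¹' {z j}) :=
      (isOpen_discrete _).preimage (continuous_apply j)
    exact h1.mem_nhds rfl
  refine (Filter.Tendsto.congr' ?_ tendsto_const_nhds : Filter.Tendsto _ _ (nhds (psi z k)))
  filter_upwards [this] with y hy
  have hspec := Nat.find_spec hk
  have hyk : ∃ n, (y n).1 = k + 1 := ⟨Nat.find hk, by rw [hy _ (mem_Iic.2 le_rfl)]; exact hspec⟩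
  have e : Nat.find hyk = Nat.find hk := by
    apply le_antisymm
    · exact Nat.find_min' _ (by rw [hy _ (mem_Iic.2 le_rfl)]; exact hspec)
    · apply Nat.find_min'
      have h2 : Nat.find hyk ≤ Nat.find hk :=
        Nat.find_min' _ (by rw [hy _ (mem_Iic.2 le_rfl)]; exact hspec)
      rw [← hy _ h2]
      exact Nat.find_spec hyk
  simp only [psi]
  rw [dif_pos hyk, dif_pos hk, e, hy _ (mem_Iic.2 le_rfl)]

theorem psi_eq {z : ℕ → MM} {x : KK} (hz : z ∈ EmitAll)
    (h : ∀ n k, (z n).1 = k + 1 → (z n).2 = x k) : psi z = x := by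
  classical
  funext k
  have hk := hz k
  simp only [psi]
  rw [dif_pos hk]
  exact h _ _ (Nat.find_spec hk)

theorem idle_not_emitAll {z : ℕ → MM} (h : z ∈ Idle) (h' : z ∈ EmitAll) : False := by
  obtain ⟨N, hN⟩ := h
  obtain ⟨n, hn⟩ := h' (∑ i ∈ Finset.range N, (z i).1)
  by_cases hnN : n < N
  · have := Finset.single_le_sum (f := fun i => (z i).1) (fun i _ => Nat.zero_le _)
      (Finset.mem_range.2 hnN)
    omega
  · rw [hN n (by omega)] at hn
    simp at hn

theorem idle_countable : Idle.Countable := by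
  let F : List MM → (ℕ → MM) := fun w n => (w[n]?).getD (0, true)
  refine (countable_range F).mono ?_
  rintro z ⟨N, hN⟩
  refine ⟨(List.range N).map z, ?_⟩
  funext n
  by_cases hn : n < N
  · simp [F, hn]
  · simp only [F]
    rw [hN n (by omega), List.getElem?_eq_none (by simp; omega)]
    rfl

/-- the coded set -/
def coded (A : Set KK) : Set (ℕ → MM) := Idle ∪ (EmitAll ∩ psi ⁻¹' A)

theorem closed_gdelta_MM {C : Set (ℕ → MM)} (hC : IsClosed C) : IsGδ C := hC.isGδ

theorem coded_borel {A : Set KK} (hA : BorelS A) : BorelS (coded A) := by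
  let _ : MeasurableSpace KK := borel KK
  have : BorelSpace KK := ⟨rfl⟩
  let _ : MeasurableSpace (ℕ → MM) := borel (ℕ → MM)
  have : BorelSpace (ℕ → MM) := ⟨rfl⟩
  refine MeasurableSet.union idle_countable.measurableSet ?_
  have hG : MeasurableSet EmitAll := emitAll_gdelta.measurableSet
  have hc : Continuous (fun z : EmitAll => psi z) :=
    psi_cont.comp_continuous continuous_subtype_val (fun z => z.2)
  have h1 : MeasurableSet ((fun z : EmitAll => psi z) ⁻¹' A) := hc.measurable hA
  have h2 := (MeasurableEmbedding.subtype_coe hG).measurableSet_image.2 h1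
  convert h2 using 1
  ext z
  constructor
  · rintro ⟨h1, h2⟩
    exact ⟨⟨z, h1⟩, h2, rfl⟩
  · rintro ⟨z, h, rfl⟩
    exact ⟨z.2, h⟩

theorem coded_rb {P0 X0 : Set KK} (h : Mn P0 X0) {A : Set KK} (hA : RB P0 X0 univ A) :
    RB P0 X0 univ (coded A) := by
  refine rb_gdelta_split (fun C => closed_gdelta_MM) emitAll_gdelta ?_ ?_
  · refine hA.preimage emitAll_gdelta psi_cont (fun _ _ => mem_univ _) ?_
    intro z hz
    simp only [coded, mem_union, mem_inter_iff, mem_preimage, hz, true_and, or_iff_right_iff_imp]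
    intro h
    exact (idle_not_emitAll h hz).elim
  · intro D hD
    have hcI : Countable (Idle : Set (ℕ → MM)) := idle_countable
    refine rb_glue (ι := Option (Idle : Set (ℕ → MM)))
      (fun o => match o with | none => Idleᶜ | some z => {z.1}) ?_ ?_ ?_ ?_
    · rintro (_ | z)
      · exact idle_countable.isGδ_compl
      · exact closed_gdelta_MM isClosed_singleton
    · rintro (_ | z) (_ | y) hne <;> rw [Set.disjoint_left]
      · exact (hne rfl).elim
      · rintro x ⟨-, hx⟩ ⟨-, hy⟩
        have e : x = y.1 := hy
        exact hx (e ▸ y.2)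
      · rintro x ⟨-, hy⟩ ⟨-, hx⟩
        have e : x = z.1 := hy
        exact hx (e ▸ z.2)
      · rintro x ⟨-, hx⟩ ⟨-, hy⟩
        have e : x = y.1 := hy
        have e' : x = z.1 := hx
        exact hne (congrArg some (Subtype.ext (e'.symm.trans e)))
    · intro x _
      by_cases hx : x ∈ Idle
      · exact mem_iUnion.2 ⟨some ⟨x, hx⟩, rfl⟩
      · exact mem_iUnion.2 ⟨none, hx⟩
    · rintro (_ | z)
      · refine (h.const (Or.inr ?_)).rb
        rintro x ⟨hx, hx'⟩ (h1 | h1)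
        · exact hx' h1
        · exact hD hx h1.1
      · refine (h.const (Or.inl ?_)).rb
        rintro x ⟨hx, hx'⟩
        have e : x = z.1 := hx'
        exact Or.inl (e ▸ z.2)

section words
variable (m : List MM → ℕ)

def wrd (x : KK) : ℕ → List MM
  | 0 => []
  | n + 1 => wrd x n ++ (List.replicate (m (wrd x n)) (0, x n) ++ [(n + 1, x n)])

theorem wrd_len (x : KK) (n : ℕ) : n ≤ (wrd m x n).length := by
  induction n with
  | zero => simp
  | succ n ih =>
    simp only [wrd, List.length_append, List.length_cons, List.length_nil]
    omega

theorem wrd_pre (x : KK) {n n' : ℕ} (h : n ≤ n') : wrd m x n <+: wrd m x n' := by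
  induction n', h using Nat.le_induction with
  | base => exact List.prefix_rfl
  | succ k _ ih => exact ih.trans (List.prefix_append _ _)

theorem wrd_loc (x y : KK) (n : ℕ) (h : ∀ j < n, x j = y j) : wrd m x n = wrd m y n := by
  induction n with
  | zero => rfl
  | succ n ih =>
    simp only [wrd]
    rw [ih (fun j hj => h j (by omega)), h n (by omega)]

theorem wrd_mem (x : KK) (n : ℕ) : ∀ a ∈ wrd m x n, ∀ k, a.1 = k + 1 → a.2 = x k := by
  induction n with
  | zero => simp [wrd]
  | succ n ih =>
    intro a ha k hk
    simp only [wrd, List.mem_append, List.mem_replicate, List.mem_singleton] at ha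
    rcases ha with ha | ⟨-, ha⟩ | ha
    · exact ih a ha k hk
    · rw [ha] at hk
      simp at hk
    · rw [ha] at hk ⊢
      simp only at hk ⊢
      have : n = k := by omega
      rw [this]

def eW (x : KK) : ℕ → MM := fun i => ((wrd m x (i + 1))[i]?).getD (0, true)

theorem eW_get (x : KK) (n i : ℕ) (a : MM) (h : (wrd m x n)[i]? = some a) : eW m x i = a := by
  have h1 : i < (wrd m x (i + 1)).length := by
    have := wrd_len m x (i + 1)
    omega
  have h2 : (wrd m x (i + 1))[i]? = some a := by
    rcases le_total n (i + 1) with hn | hn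
    · have hi : i < (wrd m x n).length := by
        by_contra hcon
        rw [List.getElem?_eq_none (by omega)] at h
        exact absurd h (by simp)
      obtain ⟨t, ht⟩ := wrd_pre m x hn
      rw [← ht, List.getElem?_append_left hi, h]
    · obtain ⟨t, ht⟩ := wrd_pre m x hn
      rw [← ht, List.getElem?_append_left h1] at h
      exact h
  simp only [eW, h2]
  rfl

theorem eW_mem (x : KK) (i : ℕ) : eW m x i ∈ wrd m x (i + 1) := by
  have h1 : i < (wrd m x (i + 1)).length := by
    have := wrd_len m x (i + 1)
    omega
  have : eW m x i = (wrd m x (i + 1))[i] := by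
    simp [eW, List.getElem?_eq_getElem h1]
  rw [this]
  exact List.getElem_mem h1

theorem eW_emit (x : KK) : eW m x ∈ EmitAll := by
  intro k
  have h : ((k + 1, x k) : MM) ∈ wrd m x (k + 1) := by
    simp [wrd]
  obtain ⟨i, hi⟩ := List.mem_iff_getElem?.1 h
  refine ⟨i, ?_⟩
  rw [eW_get m x _ _ _ hi]

theorem psi_eW (x : KK) : psi (eW m x) = x :=
  psi_eq (eW_emit m x) (fun n k h => wrd_mem m x _ _ (eW_mem m x n) k h)

theorem eW_cont : Continuous (eW m) := by
  refine BD.continuous_of_local _ (fun i => i + 1) ?_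
  intro i x y h
  simp only [eW]
  rw [wrd_loc m x y _ h]

end words

def Ext (u : List MM) (z : ℕ → MM) : Prop := ∀ i a, u[i]? = some a → z i = a

theorem sep {f : (ℕ → MM) → KK} (hf : Continuous f) {A X' : Set KK} (hfX : f ⁻¹' X' = coded A)
    (w : List MM) : ∃ m : ℕ, ∀ z z', Ext (w ++ List.replicate m (0, true)) z →
      Ext (w ++ List.replicate m (0, false)) z' → f z ≠ f z' := by
  let c : Bool → ℕ → MM := fun b n => (w[n]?).getD (0, b)
  have h1 : c true ∈ coded A := by
    refine Or.inl ⟨w.length, fun n hn => ?_⟩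
    simp only [c]
    rw [List.getElem?_eq_none hn]
    rfl
  have hw : ∀ n ≥ w.length, c false n = (0, false) := by
    intro n hn
    simp only [c]
    rw [List.getElem?_eq_none hn]
    rfl
  have h2 : c false ∉ coded A := by
    rintro (⟨N, hN⟩ | ⟨h, -⟩)
    · have := hN (max N w.length) (le_max_left _ _)
      rw [hw _ (le_max_right _ _)] at this
      simp at this
    · obtain ⟨n, hn⟩ := h (∑ i ∈ Finset.range w.length, (c false i).1)
      by_cases hnN : n < w.length
      · have := Finset.single_le_sum (f := fun i => (c false i).1) (fun i _ => Nat.zero_le _)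
          (Finset.mem_range.2 hnN)
        omega
      · rw [hw n (by omega)] at hn
        simp at hn
  have hne : f (c true) ≠ f (c false) := by
    intro e
    rw [← hfX] at h1 h2
    apply h2
    simp only [mem_preimage] at h1 ⊢
    rwa [← e]
  obtain ⟨i, hi⟩ := Function.ne_iff.1 hne
  have hloc : ∀ b, ∃ n, ∀ z, (∀ j < n, z j = c b j) → f z i = f (c b) i := by
    intro b
    have ho : IsOpen ((fun z => f z i) ⁻¹' {f (c b) i}) :=
      (isOpen_discrete _).preimage ((continuous_apply i).comp hf)
    obtain ⟨_, ⟨y, n, rfl⟩, h1, h2⟩ :=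
      (PiNat.isTopologicalBasis_cylinders (fun _ : ℕ => MM)).exists_subset_of_mem_open
        (show c b ∈ (fun z => f z i) ⁻¹' {f (c b) i} from rfl) ho
    refine ⟨n, fun z hz => ?_⟩
    have : z ∈ PiNat.cylinder y n := by
      intro j hj
      rw [hz j hj]
      exact h1 j hj
    exact h2 this
  obtain ⟨n1, hn1⟩ := hloc true
  obtain ⟨n2, hn2⟩ := hloc false
  have hext : ∀ b m z, Ext (w ++ List.replicate m (0, b)) z → ∀ j < m, z j = c b j := by
    intro b m z hz j hj
    apply hz
    by_cases hjw : j < w.length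
    · rw [List.getElem?_append_left hjw]
      simp [c, List.getElem?_eq_getElem hjw]
    · rw [List.getElem?_append_right (by omega), List.getElem?_replicate]
      rw [if_pos (by omega)]
      simp only [c]
      rw [List.getElem?_eq_none (by omega)]
      rfl
  refine ⟨max n1 n2, fun z z' hz hz' e => hi ?_⟩
  rw [← hn1 z (fun j hj => hext _ _ _ hz j (lt_of_lt_of_le hj (le_max_left _ _))),
    ← hn2 z' (fun j hj => hext _ _ _ hz' j (lt_of_lt_of_le hj (le_max_right _ _))), e]

theorem inj_lemma {P0 X0 : Set KK} (h : Mn P0 X0) {A : Set KK} (hA : BorelS A)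
    (hAb : RB P0 X0 univ A) {X' : Set KK} (hX : BorelS X') (hXb : RB P0 X0 univ X')
    {T : Set KK} (hT : IsClosed T) (hbad : ¬ GoodS (X' ∩ T)) :
    ∃ j : KK → KK, Continuous j ∧ Function.Injective j ∧ (∀ z, j z ∈ T) ∧ j ⁻¹' X' = A := by
  obtain ⟨f, f1, f2, f3⟩ := key_lemma h (coded_borel hA) (coded_rb h hAb) hX hXb hT hbad
  choose m hm using sep f1 f3
  refine ⟨f ∘ eW m, f1.comp (eW_cont m), ?_, fun z => f2 _, ?_⟩
  · intro x y hxy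
    by_contra hne
    classical
    have hex : ∃ n, x n ≠ y n := Function.ne_iff.1 hne
    set n := Nat.find hex with hn
    have hl : wrd m x n = wrd m y n := wrd_loc m x y n (fun j hj => by
      by_contra hcon
      exact Nat.find_min hex hj hcon)
    have hext : ∀ u : KK, Ext (wrd m u n ++ List.replicate (m (wrd m u n)) (0, u n)) (eW m u) := by
      intro u i a hia
      refine eW_get m u (n + 1) i a ?_
      simp only [wrd]
      rw [← List.append_assoc, List.getElem?_append_left, hia]
      by_contra hcon
      rw [List.getElem?_eq_none (by omega)] at hia
      exact absurd hia (by simp)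
    have hx := hext x
    have hy := hext y
    rw [← hl] at hy
    have hxyn : x n ≠ y n := Nat.find_spec hex
    have hh : f (eW m x) = f (eW m y) := hxy
    cases hxn : x n <;> cases hyn : y n <;> rw [hxn] at hx hxyn <;> rw [hyn] at hy hxyn
    · exact hxyn rfl
    · exact hm _ _ _ hy hx hh.symm
    · exact hm _ _ _ hx hy hh
    · exact hxyn rfl
  · rw [preimage_comp, f3]
    ext x
    simp only [coded, mem_preimage, mem_union, mem_inter_iff, psi_eW]
    constructor
    · rintro (h | h)
      · exact (idle_not_emitAll h (eW_emit m x)).elim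
      · exact h.2
    · exact fun h => Or.inr ⟨eW_emit m x, h⟩

end HH

namespace HH
open Set Topology

theorem rb_sub {P0 X0 E : Set KK} (h : Mn P0 X0) (hE : IsGδ E) (hs : E ⊆ P0) :
    RB P0 X0 univ (X0 ∩ E) := by
  refine rb_gdelta_split (fun C hC => hC.isGδ) hE ?_ ?_
  · refine Red.rb ⟨id, continuousOn_id, hs, ?_⟩
    intro x hx
    simp [hx]
  · intro D hD
    exact (h.const (Or.inr fun x hx hx' => hD hx hx'.2)).rb

/-- localisation of a Borel set: somewhere it is meager or comeager -/
theorem exists_pres {Y : Set KK} (hB : BorelS Y) (hn : NowhereGood Y) (hne : Y.Nonempty) :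
    ∃ (V : Set KK) (L : ℕ → Set KK) (c : Prop), IsClopen V ∧ (Y ∩ V).Nonempty ∧
      Pres (closure (Y ∩ V)) (Y ∩ V) L c := by
  set K := closure Y with hK
  have hKc : IsClosed K := isClosed_closure
  have : CompactSpace K := isCompact_iff_compactSpace.1 hKc.isCompact
  let _ : MeasurableSpace KK := borel KK
  have : BorelSpace KK := ⟨rfl⟩
  have hS : MeasurableSet (Subtype.val ⁻¹' Y : Set K) := measurable_subtype_coe hB
  obtain ⟨U, hU, he⟩ := MeasurableSet.residualEq_isOpen hS
  have he1 : {z : K | z ∈ (Subtype.val ⁻¹' Y : Set K) ↔ z ∈ U} ∈ residual K := by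
    have := he.mem_iff
    exact this
  obtain ⟨t, hts, htG, htd⟩ := mem_residual.1 he1
  obtain ⟨G, hG, rfl⟩ := isGδ_iff_eq_iInter_nat.1 htG
  choose W hW hWG using fun n => isOpen_induced_iff.1 (hG n)
  obtain ⟨U', hU', rfl⟩ := isOpen_induced_iff.1 hU
  obtain ⟨V, c, hV, hVne, hVc⟩ : ∃ (V : Set KK) (c : Prop), IsClopen V ∧ (Y ∩ V).Nonempty ∧
      ∀ x ∈ K ∩ V, (x ∈ U' ↔ c) := by
    by_cases hUn : (U' ∩ K).Nonempty
    · obtain ⟨x, hxU, hxY⟩ := meets_cl hU' hUn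
      obtain ⟨B, hB, hb⟩ := clopen_basis
      obtain ⟨n, h1, h2⟩ := hb U' hU' x hxU
      exact ⟨B n, True, hB n, ⟨x, hxY, h1⟩, fun y hy => by simp [h2 hy.2]⟩
    · refine ⟨univ, False, isClopen_univ, by simpa using hne, fun y hy => ?_⟩
      simp only [iff_false]
      exact fun h => hUn ⟨y, h, hy.1⟩
  have hcl : closure (Y ∩ V) = K ∩ V := by
    apply Subset.antisymm
    · exact closure_minimal (inter_subset_inter_left _ subset_closure) (hKc.inter hV.1)
    · rintro x ⟨hx, hxV⟩
      have := hV.2.inter_closure (t := Y) ⟨hxV, hx⟩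
      rwa [inter_comm] at this
  have hnw : ∀ i, Nwd ((K ∩ V) \ W i) (K ∩ V) := by
    intro i
    refine ⟨(hKc.inter hV.1).sdiff (hW i), sdiff_subset, ?_⟩
    rintro B hB ⟨x, hxB, hxK, hxV⟩
    have ho : IsOpen (Subtype.val ⁻¹' (B ∩ V) : Set K) := (hB.inter hV.2).preimage
      continuous_subtype_val
    obtain ⟨y, hy1, hy2⟩ := htd.inter_open_nonempty _ ho ⟨⟨x, hxK⟩, hxB, hxV⟩
    have hy3 : y ∈ (Subtype.val ⁻¹' W i : Set K) := by
      rw [hWG]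
      exact mem_iInter.1 hy2 i
    exact ⟨y, hy1.1, ⟨y.2, hy1.2⟩, fun h => h.2 hy3⟩
  let L : ℕ → Set KK := fun n => Nat.rec ((K ∩ V) \ W 0) (fun k S => S ∪ ((K ∩ V) \ W (k + 1))) n
  have LS : ∀ n, L (n + 1) = L n ∪ ((K ∩ V) \ W (n + 1)) := fun n => rfl
  refine ⟨V, L, c, hV, hVne, ?_⟩
  rw [hcl]
  refine ⟨hKc.inter hV.1, ?_, ?_, ?_, inter_subset_inter_left _ subset_closure, ?_⟩
  · rw [← hcl]
    exact (hn.inter hV).noiso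
  · exact monotone_nat_of_le_succ fun n => by
      rw [LS]
      exact subset_union_left
  · intro n
    induction n with
    | zero => exact hnw 0
    | succ n ih => exact ih.union (hnw _)
  · intro x hx hxL
    have hxW : ∀ n, x ∈ W n := by
      intro n
      by_contra hcon
      refine hxL n ?_
      rcases n with _ | n
      · exact ⟨hx, hcon⟩
      · exact Or.inr ⟨hx, hcon⟩
    have h1 : (⟨x, hx.1⟩ : K) ∈ ⋂ n, G n := by
      refine mem_iInter.2 fun n => ?_
      rw [← hWG]
      exact hxW n
    have h2 : x ∈ Y ↔ x ∈ U' := hts h1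
    rw [← hVc x hx, ← h2]
    simp [hx.2]

theorem mn_false {P0 X0 : Set KK} (h : Mn P0 X0) : False := by
  obtain ⟨hG, hB, hbad⟩ := h.bad
  obtain ⟨C, hC, hne, hn⟩ := core hbad
  have bor : ∀ E, IsGδ E → BorelS (X0 ∩ E) := by
    intro E hE
    have := isGδ_borel hE
    let _ : MeasurableSpace KK := borel KK
    exact MeasurableSet.inter hB this
  have hBY : BorelS (X0 ∩ P0 ∩ C) := by
    rw [inter_assoc]
    exact bor _ (hG.inter hC.isGδ)
  obtain ⟨V, L, c, hV, hVne, hP⟩ := exists_pres hBY hn hne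
  have hnY := hn.inter hV
  have eY : X0 ∩ P0 ∩ C ∩ V = X0 ∩ (P0 ∩ (C ∩ V)) := by simp only [inter_assoc]
  set Y := X0 ∩ P0 ∩ C ∩ V with hY
  have hEG : IsGδ (P0 ∩ (C ∩ V)) := hG.inter (hC.isGδ.inter hV.2.isGδ)
  have hYB : BorelS Y := by
    rw [eY]
    exact bor _ hEG
  have hYb : RB P0 X0 univ Y := by
    rw [eY]
    exact rb_sub h hEG inter_subset_left
  have hh : HHom Y := by
    refine hhom_of_emb hP subset_rfl ?_
    intro O O' n hO hO' hcl hne'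
    have hOB : BorelS (Y ∩ O) := by
      rw [eY, inter_assoc]
      exact bor _ (hEG.inter hO.isGδ)
    have hOb : RB P0 X0 univ (Y ∩ O) := by
      rw [eY, inter_assoc]
      exact rb_sub h (hEG.inter hO.isGδ) (inter_subset_left.trans inter_subset_left)
    obtain ⟨x, hxY, hxO⟩ := hne'
    obtain ⟨B, hBc, hb⟩ := clopen_basis
    obtain ⟨k, hk1, hk2⟩ := hb O' hO' x hxO
    have hng := hnY (B k) (hBc k) ⟨x, hxY, hk1⟩
    have hT : ∃ m, ¬ GoodS (Y ∩ (B k ∩ L m)) := by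
      by_contra hcon
      push Not at hcon
      apply hng
      refine good_closed_cover L (fun m => (hP.nwd m).1) (fun m => ?_) ?_
      · rw [inter_assoc]
        exact hcon m
      · by_cases hc : c
        · have e : (Y ∩ B k) \ (⋃ m, L m) = closure Y ∩ B k ∩ ⋂ m, (L m)ᶜ := by
            ext y
            simp only [mem_sdiff, mem_inter_iff, mem_iUnion, mem_iInter, mem_compl_iff, not_exists]
            constructor
            · rintro ⟨⟨h1, h2⟩, h3⟩
              exact ⟨⟨subset_closure h1, h2⟩, h3⟩
            · rintro ⟨⟨h1, h2⟩, h3⟩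
              exact ⟨⟨(hP.out y h1 h3).2 hc, h2⟩, h3⟩
          rw [e]
          refine good_gdelta ((isClosed_closure.isGδ.inter (hBc k).2.isGδ).inter ?_)
          exact IsGδ.iInter_of_isOpen fun m => (hP.nwd m).1.isOpen_compl
        · have e : (Y ∩ B k) \ (⋃ m, L m) = ∅ := by
            rw [eq_empty_iff_forall_notMem]
            rintro y ⟨⟨h1, h2⟩, h3⟩
            refine hc ((hP.out y (subset_closure h1) fun m hm => h3 ?_).1 h1)
            exact mem_iUnion.2 ⟨m, hm⟩
          rw [e]
          exact good_empty
    obtain ⟨m, hm⟩ := hT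
    obtain ⟨j, j1, j2, j3, j4⟩ := inj_lemma h hOB hOb hYB hYb ((hBc k).1.inter (hP.nwd m).1) hm
    have hLc : IsClosed (LU L c Y O n) := ((hP.restr subset_rfl hO).nwd n).1
    refine ⟨j, j1.continuousOn, j2.injOn, ?_, ?_, ?_⟩
    · intro z _
      exact ⟨hk2 (j3 z).1, (hP.nwd m).2.1 (j3 z).2⟩
    · refine (hP.nwd m).mono (hLc.isCompact.image j1).isClosed ?_
      rintro _ ⟨z, -, rfl⟩
      exact (j3 z).2
    · intro z _
      rw [← j4]
      rfl
  have := hnY univ isClopen_univ (by simpa using hVne)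
  rw [inter_univ] at this
  exact this (good_of_hhom hh)

theorem good_borel {X : Set KK} (hX : BorelS X) : GoodS X := by
  by_contra hbad
  obtain ⟨P, Y, h1, h2⟩ := exists_min (P := univ) (X := X) ⟨IsGδ.univ, hX, by rwa [inter_univ]⟩
  exact mn_false ⟨h1, h2⟩

end HH

namespace HH
open Set Topology

abbrev IrrT := {x : ℝ // Irrational x}

noncomputable def qs (n : ℕ) : ℚ := (Denumerable.eqv ℚ).symm n

theorem qs_surj (q : ℚ) : ∃ n, qs n = q := ⟨Denumerable.eqv ℚ q, by simp [qs]⟩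

open Classical in
noncomputable def cutE (x : IrrT) : KK := fun n => decide ((qs n : ℝ) < x.1)

theorem cutE_true (x : IrrT) (n : ℕ) : cutE x n = true ↔ (qs n : ℝ) < x.1 := by
  simp [cutE]

theorem cutE_false (x : IrrT) (n : ℕ) : cutE x n = false ↔ x.1 < (qs n : ℝ) := by
  have : (qs n : ℝ) ≠ x.1 := fun h => x.2 ⟨qs n, h⟩
  simp only [cutE, decide_eq_false_iff_not, not_lt]
  exact ⟨fun h => lt_of_le_of_ne h this.symm, le_of_lt⟩

theorem cutE_cont : Continuous cutE := by
  refine continuous_pi fun n => ?_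
  rw [continuous_discrete_rng]
  rintro (_ | _)
  · have : (fun x => cutE x n) ⁻¹' {false} = {x : IrrT | x.1 < (qs n : ℝ)} := by
      ext x
      exact cutE_false x n
    rw [this]
    exact isOpen_lt continuous_subtype_val continuous_const
  · have : (fun x => cutE x n) ⁻¹' {true} = {x : IrrT | (qs n : ℝ) < x.1} := by
      ext x
      exact cutE_true x n
    rw [this]
    exact isOpen_lt continuous_const continuous_subtype_val

theorem cutE_cyl (x : IrrT) (n : ℕ) : {z : KK | z n = cutE x n} ∈ nhds (cutE x) := by
  have h1 : IsOpen ((fun y : KK => y n) ⁻¹' {cutE x n}) :=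
    (isOpen_discrete _).preimage (continuous_apply n)
  exact h1.mem_nhds rfl

theorem cutE_emb : IsEmbedding cutE := by
  have hind : IsInducing cutE := by
    rw [isInducing_iff_nhds]
    intro x
    apply le_antisymm
    · exact cutE_cont.tendsto x |>.le_comap
    · intro s hs
      rw [nhds_subtype_eq_comap, Filter.mem_comap] at hs
      obtain ⟨t, ht, hts⟩ := hs
      obtain ⟨l, u, ⟨hl, hu⟩, hlu⟩ := mem_nhds_iff_exists_Ioo_subset.1 ht
      obtain ⟨a, ha1, ha2⟩ := exists_rat_btwn hl
      obtain ⟨b, hb1, hb2⟩ := exists_rat_btwn hu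
      obtain ⟨m, rfl⟩ := qs_surj a
      obtain ⟨n, rfl⟩ := qs_surj b
      refine Filter.mem_comap.2 ⟨_, Filter.inter_mem (cutE_cyl x m) (cutE_cyl x n), ?_⟩
      rintro y ⟨h1, h2⟩
      have h1 : cutE y m = cutE x m := h1
      have h2 : cutE y n = cutE x n := h2
      rw [(cutE_true x m).2 ha2, cutE_true] at h1
      rw [(cutE_false x n).2 hb1, cutE_false] at h2
      exact hts (hlu ⟨ha1.trans h1, h2.trans hb2⟩)
  exact hind.isEmbedding

theorem open_bit (n : ℕ) (b : Bool) : IsOpen {z : KK | z n = b} := by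
  have h1 : IsOpen ((fun y : KK => y n) ⁻¹' {b}) :=
    (isOpen_discrete _).preimage (continuous_apply n)
  exact h1

theorem cutE_range : IsGδ (range cutE) := by
  have e : range cutE =
      ((⋂ m : ℕ, ⋂ n : ℕ, {z : KK | qs n < qs m → z m = true → z n = true}) ∩
      ({z : KK | ∃ n, z n = true} ∩ {z : KK | ∃ n, z n = false})) ∩
      ((⋂ m : ℕ, {z : KK | z m = true → ∃ n, qs m < qs n ∧ z n = true}) ∩
      (⋂ m : ℕ, {z : KK | z m = false → ∃ n, qs n < qs m ∧ z n = false})) := by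
    ext z
    simp only [mem_inter_iff, mem_iInter, mem_ofPred_eq]
    constructor
    · rintro ⟨x, rfl⟩
      simp only [cutE_true, cutE_false]
      refine ⟨⟨?_, ?_, ?_⟩, ?_, ?_⟩
      · intro m n h h'
        exact lt_trans (by exact_mod_cast h) h'
      · obtain ⟨a, ha⟩ := exists_rat_lt x.1
        obtain ⟨n, rfl⟩ := qs_surj a
        exact ⟨n, ha⟩
      · obtain ⟨a, ha⟩ := exists_rat_gt x.1
        obtain ⟨n, rfl⟩ := qs_surj a
        exact ⟨n, ha⟩
      · intro m hm
        obtain ⟨a, ha1, ha2⟩ := exists_rat_btwn hm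
        obtain ⟨n, rfl⟩ := qs_surj a
        exact ⟨n, by exact_mod_cast ha1, ha2⟩
      · intro m hm
        obtain ⟨a, ha1, ha2⟩ := exists_rat_btwn hm
        obtain ⟨n, rfl⟩ := qs_surj a
        exact ⟨n, by exact_mod_cast ha2, ha1⟩
    · rintro ⟨⟨h1, ⟨n0, h2⟩, ⟨n1, h3⟩⟩, h4, h5⟩
      let B : Set ℝ := {r | ∃ n, z n = true ∧ r = qs n}
      have hlt : ∀ m n, z m = true → z n = false → qs m < qs n := by
        intro m n hm hn
        by_contra hcon
        rcases (not_lt.1 hcon).lt_or_eq with h | h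
        · rw [h1 m n h hm] at hn
          exact absurd hn (by simp)
        · have : m = n := ((Denumerable.eqv ℚ).symm.injective h).symm
          rw [this, hn] at hm
          exact absurd hm (by simp)
      have hne : B.Nonempty := ⟨_, n0, h2, rfl⟩
      have hbd : ∀ n, z n = false → ((qs n : ℝ)) ∈ upperBounds B := by
        rintro n hn _ ⟨m, hm, rfl⟩
        exact_mod_cast (hlt m n hm hn).le
      have hbdd : BddAbove B := ⟨_, hbd n1 h3⟩
      have hT : ∀ m, z m = true → (qs m : ℝ) < sSup B := by
        intro m hm
        obtain ⟨n, hmn, hn⟩ := h4 m hm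
        refine lt_of_lt_of_le (by exact_mod_cast hmn : (qs m : ℝ) < qs n) (le_csSup hbdd ⟨n, hn, rfl⟩)
      have hF : ∀ m, z m = false → sSup B < (qs m : ℝ) := by
        intro m hm
        obtain ⟨n, hmn, hn⟩ := h5 m hm
        exact lt_of_le_of_lt (csSup_le hne (hbd n hn)) (by exact_mod_cast hmn : (qs n : ℝ) < qs m)
      have hirr : Irrational (sSup B) := by
        rintro ⟨q, hq⟩
        obtain ⟨n, rfl⟩ := qs_surj q
        cases hz : z n
        · have := hF n hz
          rw [hq] at this
          exact lt_irrefl _ this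
        · have := hT n hz
          rw [hq] at this
          exact lt_irrefl _ this
      refine ⟨⟨sSup B, hirr⟩, ?_⟩
      funext n
      cases hz : z n
      · exact (cutE_false _ _).2 (hF n hz)
      · exact (cutE_true _ _).2 (hT n hz)
  have imp : ∀ (m : ℕ) (b : Bool) (S : Set KK), IsOpen S → IsOpen {z : KK | z m = b → z ∈ S} := by
    intro m b S hS
    have : {z : KK | z m = b → z ∈ S} = {z : KK | z m = !b} ∪ S := by
      ext z
      simp only [mem_ofPred_eq, mem_union]
      cases z m <;> cases b <;> simp
    rw [this]
    exact (open_bit m _).union hS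
  have ex : ∀ (p : ℕ → Prop) (b : Bool), IsOpen {z : KK | ∃ n, p n ∧ z n = b} := by
    intro p b
    have : {z : KK | ∃ n, p n ∧ z n = b} = ⋃ n, ⋃ _ : p n, {z : KK | z n = b} := by
      ext z
      simp
    rw [this]
    exact isOpen_iUnion fun n => isOpen_iUnion fun _ => open_bit n b
  rw [e]
  refine ((IsGδ.iInter fun m => IsGδ.iInter fun n => ?_).inter ?_).inter ?_
  · apply IsOpen.isGδ
    by_cases h : qs n < qs m
    · simp only [h, true_imp_iff]
      exact imp m true _ (open_bit n true)
    · simp only [h, false_imp_iff]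
      exact isOpen_univ
  · have h1 := ex (fun _ => True) true
    have h2 := ex (fun _ => True) false
    simp only [true_and] at h1 h2
    exact h1.isGδ.inter h2.isGδ
  · exact (IsGδ.iInter_of_isOpen fun m => imp m true _ (ex _ _)).inter
      (IsGδ.iInter_of_isOpen fun m => imp m false _ (ex _ _))

theorem good_real {X : Set ℝ} (hX : MeasurableSet X) : GoodS X := by
  have hI : GoodS (Subtype.val '' (Subtype.val ⁻¹' X : Set IrrT)) := by
    let _ : MeasurableSpace KK := borel KK
    have : BorelSpace KK := ⟨rfl⟩
    have hme : MeasurableEmbedding cutE := cutE_emb.measurableEmbedding cutE_range.measurableSet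
    have hZ : BorelS (cutE '' (Subtype.val ⁻¹' X : Set IrrT)) :=
      hme.measurableSet_image.2 (measurable_subtype_coe hX)
    exact (good_borel hZ).homeo
      ((IsEmbedding.subtypeVal.homeomorphImage _).symm.trans (cutE_emb.homeomorphImage _))
  have e1 : Subtype.val '' (Subtype.val ⁻¹' X : Set IrrT) = X ∩ {x | Irrational x} := by
    ext x
    constructor
    · rintro ⟨y, hy, rfl⟩
      exact ⟨hy, y.2⟩
    · rintro ⟨h1, h2⟩
      exact ⟨⟨x, h2⟩, h1, rfl⟩
  rw [e1] at hI
  refine good_iUnion (ι := Option ℚ)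
    (fun o => match o with | none => {x | Irrational x} | some q => {(q : ℝ)}) ?_ ?_ ?_ ?_
  · rintro (_ | q)
    · exact (countable_range (fun q : ℚ => (q : ℝ))).isGδ_compl
    · exact isClosed_singleton.isGδ
  · rintro (_ | p) (_ | q) hne <;> rw [Set.disjoint_left]
    · exact (hne rfl).elim
    · rintro x ⟨-, hx⟩ ⟨-, hy⟩
      exact hx ⟨q, (show x = q from hy).symm⟩
    · rintro x ⟨-, hy⟩ ⟨-, hx⟩
      exact hx ⟨p, (show x = p from hy).symm⟩
    · rintro x ⟨-, hx⟩ ⟨-, hy⟩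
      have h1 : x = p := hx
      have h2 : x = q := hy
      rw [h1] at h2
      exact hne (congrArg some (by exact_mod_cast h2))
  · intro x _
    by_cases hx : Irrational x
    · exact mem_iUnion.2 ⟨none, hx⟩
    · unfold Irrational at hx
      push Not at hx
      obtain ⟨q, rfl⟩ := hx
      exact mem_iUnion.2 ⟨some q, rfl⟩
  · rintro (_ | q)
    · exact hI
    · exact good_of_countable_set ((countable_singleton (q : ℝ)).mono inter_subset_right)

end HH

theorem borel_real_partition_hHomogeneous_gdelta :
    (∀ X : Set ℝ, MeasurableSet X →
      ∃ f : ℕ → Set ℝ,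
        (∀ i, f i ⊆ X) ∧
        Pairwise (Function.onFun Disjoint f) ∧
        (∀ i, IsGδ (Subtype.val ⁻¹' f i : Set ↥X)) ∧
        (∀ i, HHomogeneous ↥(f i)) ∧
        X = ⋃ i, f i) ∧
    (Set.range ((↑) : ℚ → ℝ) ∪ {x : ℝ | Irrational x} = Set.univ ∧
      Disjoint (Set.range ((↑) : ℚ → ℝ)) {x : ℝ | Irrational x}) ∧
    (∃ S : Set (ℕ → Bool), IsGδ S ∧
      Nonempty ({x : ℝ // Irrational x} ≃ₜ ↥S)) := by
  refine ⟨?_, ⟨?_, ?_⟩, ?_⟩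
  · intro X hX
    obtain ⟨f, f1, f2, f3, f4⟩ := HH.good_real hX
    refine ⟨f, fun i => ?_, f1, fun i => ?_, fun i => f3 i, f4⟩
    · obtain ⟨O, -, e⟩ := f2 i
      rw [e]
      exact Set.inter_subset_left
    · obtain ⟨O, hO, e⟩ := f2 i
      have e' : (Subtype.val ⁻¹' f i : Set ↥X) = Subtype.val ⁻¹' O := by
        rw [e]
        ext x
        simp
      rw [e']
      exact hO.preimage continuous_subtype_val
  · exact Set.union_compl_self _
  · exact disjoint_compl_right
  · exact ⟨_, HH.cutE_range, ⟨HH.cutE_emb.toHomeomorph⟩⟩
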